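/- arXiv:2106.11194 — 3 statements merged into one kernel-verified Lean document; each statement's English description precedes it below -/
import Mathlib

section
/- (Theorem 3.2.) Consider the one-pair Nicholson equation x'(t) = β(t)(p x(t−τ(t)) e^{−a x(t−σ(t))} − δ x(t)) with p > δ > 0, a > 0, and set ζ_M := limsup_{t→∞} ∫_{t−σ(t)}^{t} β(s) ds. Assume one of: (i) log(p/δ) ≤ 2δζ_M/(e^{δζ_M} − δζ_M − 1) and δζ_M(2 + log(p/δ)) < 1; or (ii) log(p/δ) > 2δζ_M/(e^{δζ_M} − δζ_M − 1) and (e^{δζ_M} − 1)·log(p/δ) ≤ 1. Then the positive equilibrium K = (1/a) log(p/δ) is globally asymptotically stable: K is locally exponentially stable and every solution with admissible initial data converges to K as t → ∞. -/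
/-- A solution of the one-pair Nicholson equation
`x'(t) = β(t)(p x(t−τ(t)) e^{−a x(t−σ(t))} − δ x(t))`, `t ≥ t₀`,
defined on `[t₀ − τbar, ∞)`, with admissible initial data. -/
def NicholsonSolution1 (p a δ t₀ τbar : ℝ) (β τ σ : ℝ → ℝ) (x : ℝ → ℝ) : Prop :=
  ContinuousOn x (Set.Ici (t₀ - τbar)) ∧
  (∀ t ∈ Set.Ici t₀, HasDerivWithinAt x
      (β t * (p * x (t - τ t) * Real.exp (-a * x (t - σ t)) - δ * x t))
      (Set.Ici t₀) t) ∧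
  (∀ s, t₀ - τbar ≤ s → s < t₀ → 0 ≤ x s) ∧
  0 < x t₀

/-- `K` is locally exponentially stable for the one-pair Nicholson equation. -/
def LocallyExpStable1 (p a δ t₀ τbar : ℝ) (β τ σ : ℝ → ℝ) (K : ℝ) : Prop :=
  ∃ ε > 0, ∃ M ≥ (1 : ℝ), ∃ lam > 0, ∀ x : ℝ → ℝ,
    NicholsonSolution1 p a δ t₀ τbar β τ σ x →
    sSup ((fun s => |x s - K|) '' Set.Icc (t₀ - τbar) t₀) ≤ ε →
    ∀ t ∈ Set.Ici t₀, |x t - K| ≤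
      M * Real.exp (-lam * (t - t₀)) *
        sSup ((fun s => |x s - K|) '' Set.Icc (t₀ - τbar) t₀)

/-!
In the time scale `s = δ ∫ β` the function `y = a x` solves `y' s = y (g s) e^(L - y (h s)) - y s`
with `L = log (p / δ)`, and the lag `s - h s` is eventually at most about `ζ = δ ζM`. Both
alternatives of the hypothesis imply `(e^ζ - 1) L ≤ 1`, which is what the argument needs.

Attractivity: `y` stays between positive bounds; let `i ≤ S` be its lower and upper limits. At times
where `y` is almost `S` and almost nondecreasing, `y (h s)` is at most about `L`, while solving the
equation backwards from `s` to `h s` bounds it from below in terms of `S` and `i`. This and the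
mirror image at `i` give `S - S (e^(L - i) - 1) (e^ζ - 1) ≤ L ≤ i (1 + (e^ζ - 1) (1 - e^(L - S)))`,
and then `i = S = L` because `1 / z - 1 / (e^z - 1) < 1 / 2` for `z > 0`.

Exponential stability: suppose that `|y - L|` first meets a slowly decaying exponential barrier at
time `t`. Scaled by its value there, the deviation nearly satisfies `u' s ≤ 1 - L u (h s) - u s`
with `u t = 1` and `-1 ≤ u` before. Solving backwards again makes `u (h t)` positive, hence `u' t`
strictly negative, whereas at the meeting point the deviation decays no faster than the barrier.
-/

open Filter Real Set Topology

theorem exists_first_zero {f : ℝ → ℝ} {a b : ℝ} (hab : a ≤ b) (hf : ContinuousOn f (Icc a b))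
    (ha : 0 < f a) (hb : f b ≤ 0) : ∃ t ∈ Ioc a b, f t = 0 ∧ ∀ s ∈ Ico a t, 0 < f s := by
  have hcompact : IsCompact (Icc a b ∩ f ⁻¹' Iic 0) :=
    isCompact_Icc.of_isClosed_subset (hf.preimage_isClosed_of_isClosed isClosed_Icc isClosed_Iic)
      inter_subset_left
  obtain ⟨t, ⟨htab, hft⟩, hleast⟩ := hcompact.exists_isLeast ⟨b, right_mem_Icc.2 hab, hb⟩
  have hpos : ∀ s ∈ Ico a t, 0 < f s := fun s hs => by
    by_contra! hs0
    exact hs.2.not_ge (hleast ⟨⟨hs.1, hs.2.le.trans htab.2⟩, hs0⟩)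
  obtain ⟨s, hs, hs0⟩ :=
    intermediate_value_Icc' htab.1 (hf.mono (Icc_subset_Icc_right htab.2)) ⟨hft, ha.le⟩
  obtain rfl : s = t := hs.2.eq_of_not_lt fun hlt => (hpos s ⟨hs.1, hlt⟩).ne' hs0
  exact ⟨s, ⟨htab.1.lt_of_ne fun h => ha.ne' (h ▸ hs0), htab.2⟩, hs0, hpos⟩

theorem hasDerivAt_nonneg_of_isMaxOn_Icc {f : ℝ → ℝ} {d a t : ℝ} (hat : a < t)
    (hf : HasDerivAt f d t) (hmax : IsMaxOn f (Icc a t) t) : 0 ≤ d := by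
  refine ge_of_tendsto (hasDerivAt_iff_tendsto_slope_left_right.1 hf).1 ?_
  filter_upwards [Ioo_mem_nhdsLT hat] with s hs
  rw [slope_def_field]
  exact div_nonneg_of_nonpos (sub_nonpos.2 (hmax ⟨hs.1.le, hs.2.le⟩)) (sub_nonpos.2 hs.2.le)

theorem le_of_deriv_le_const_sub {f f' : ℝ → ℝ} {F k r t ρ : ℝ} (hrt : r ≤ t) (hρ : t - r ≤ ρ)
    (hcont : ContinuousOn f (Icc r t)) (hderiv : ∀ s ∈ Ioo r t, HasDerivAt f (f' s) s)
    (hle : ∀ s ∈ Ioo r t, f' s ≤ F - f s) (hkt : k ≤ f t) (hkF : k ≤ F) :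
    F - (F - k) * exp ρ ≤ f r := by
  have hanti : AntitoneOn (fun s => (f s - F) * exp (s - r)) (Icc r t) := by
    refine antitoneOn_of_hasDerivWithinAt_nonpos (convex_Icc r t)
      (f' := fun s => f' s * exp (s - r) + (f s - F) * (exp (s - r) * 1))
      ((hcont.sub continuousOn_const).mul (by fun_prop)) (fun s hs => ?_) (fun s hs => ?_)
    all_goals rw [interior_Icc] at hs
    · exact (((hderiv s hs).sub_const F).mul
        ((hasDerivAt_id s).sub_const r).exp).hasDerivWithinAt
    · rw [mul_one, ← add_mul]
      exact mul_nonpos_of_nonpos_of_nonneg (by linarith [hle s hs]) (exp_pos _).le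
  have hends : (f t - F) * exp (t - r) ≤ f r - F := by
    simpa using hanti (left_mem_Icc.2 hrt) (right_mem_Icc.2 hrt) hrt
  have hk : (k - F) * exp (t - r) ≤ (f t - F) * exp (t - r) := by gcongr
  have hexp : (F - k) * exp (t - r) ≤ (F - k) * exp ρ :=
    mul_le_mul_of_nonneg_left (exp_le_exp.2 hρ) (by linarith)
  linarith

theorem le_mul_exp_of_neg_self_le_deriv {f f' : ℝ → ℝ} {r t : ℝ} (hrt : r ≤ t)
    (hcont : ContinuousOn f (Icc r t)) (hderiv : ∀ s ∈ Ioo r t, HasDerivAt f (f' s) s)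
    (hle : ∀ s ∈ Ioo r t, -f s ≤ f' s) (ht : 0 ≤ f t) : f r ≤ f t * exp (t - r) := by
  have h := le_of_deriv_le_const_sub (F := 0) hrt le_rfl hcont.neg (fun s hs => (hderiv s hs).neg)
    (fun s hs => by simpa using neg_le.1 (hle s hs)) le_rfl (by simpa using ht)
  simpa using h

theorem frequently_lt_and_neg_le_deriv {f f' : ℝ → ℝ} {c ε : ℝ} (hε : 0 < ε)
    (hderiv : ∀ᶠ s in atTop, HasDerivAt f (f' s) s) (hc : ∃ᶠ t in atTop, c < f t) :
    ∃ᶠ t in atTop, c < f t ∧ -ε ≤ f' t := by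
  refine frequently_atTop.2 fun a => ?_
  obtain ⟨N, hN⟩ := eventually_atTop.1 (hderiv.and (eventually_ge_atTop a))
  obtain ⟨b, hb, hcb⟩ := frequently_atTop.1 hc (N + 1 + |f N - c| / ε)
  have hNb : N < b := by linarith [div_nonneg (abs_nonneg (f N - c)) hε.le]
  -- The maximum of `f s + ε s` is not attained at `N`, since `ε (b - N)` beats `f N - c`.
  obtain ⟨t, ht, hmax⟩ := isCompact_Icc.exists_isMaxOn (nonempty_Icc.2 hNb.le)
    (f := fun s => f s + ε * s)
    (ContinuousOn.add (fun s hs => (hN s hs.1).1.continuousAt.continuousWithinAt) (by fun_prop))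
  have hbt : f b + ε * b ≤ f t + ε * t := hmax (right_mem_Icc.2 hNb.le)
  have hNt : N < t := by
    refine ht.1.lt_of_ne fun h => ?_
    have hgap : f N - c < ε * (b - N) := by
      rw [← div_lt_iff₀' hε]
      linarith [div_le_div_of_nonneg_right (le_abs_self (f N - c)) hε.le]
    rw [← h] at hbt
    linarith
  have hmax' : IsMaxOn (fun s => f s + ε * s) (Icc N t) t :=
    hmax.on_subset (Icc_subset_Icc_right ht.2)
  have hd := hasDerivAt_nonneg_of_isMaxOn_Icc hNt
    ((hN t ht.1).1.add ((hasDerivAt_id t).const_mul ε)) hmax'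
  exact ⟨t, (hN t ht.1).2, by nlinarith [ht.2], by linarith⟩

theorem frequently_le_comp_of_deriv_le_const_sub {f f' h : ℝ → ℝ} {F θ c ε : ℝ} (hε : 0 < ε)
    (hderiv : ∀ᶠ s in atTop, HasDerivAt f (f' s) s) (hle : ∀ᶠ s in atTop, f' s ≤ F - f s)
    (hh : Tendsto h atTop atTop) (hhs : ∀ᶠ s in atTop, h s ≤ s)
    (hθ : ∀ᶠ s in atTop, s - h s ≤ θ) (hc : ∃ᶠ t in atTop, c < f t) :
    ∃ᶠ t in atTop, c < f t ∧ -ε ≤ f' t ∧ F + ε - (F + ε - c) * exp θ ≤ f (h t) := by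
  refine ((frequently_lt_and_neg_le_deriv hε hderiv hc).and_eventually
    ((hh.eventually_forall_ge_atTop (hderiv.and hle)).and (hle.and (hhs.and hθ)))).mono ?_
  rintro t ⟨⟨hct, hdt⟩, hpast, hlet, hht, hθt⟩
  refine ⟨hct, hdt, le_of_deriv_le_const_sub hht hθt
    (fun s hs => (hpast s hs.1).1.continuousAt.continuousWithinAt)
    (fun s hs => (hpast s hs.1.le).1) (fun s hs => ?_) hct.le (by linarith)⟩
  linarith [(hpast s hs.1.le).2]

theorem exists_first_crossing {f f' W W' : ℝ → ℝ} {a b : ℝ} (hab : a ≤ b)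
    (hf : ContinuousOn f (Icc a b)) (hW : ContinuousOn W (Icc a b))
    (hf' : ∀ s ∈ Ioc a b, HasDerivAt f (f' s) s) (hW' : ∀ s ∈ Ioc a b, HasDerivAt W (W' s) s)
    (ha : |f a| < W a) (hb : W b ≤ |f b|) :
    ∃ t ∈ Ioc a b, (∀ s ∈ Icc a t, |f s| ≤ W s) ∧
      ∃ σ : ℝ, |σ| = 1 ∧ σ * f t = W t ∧ W' t ≤ σ * f' t := by
  obtain ⟨t, ht, hzero, hpos⟩ := exists_first_zero hab (hW.sub hf.abs)
    (sub_pos.2 ha) (sub_nonpos.2 hb)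
  have hbelow : ∀ s ∈ Icc a t, |f s| ≤ W s := fun s hs => by
    rcases hs.2.eq_or_lt with rfl | hst
    · exact (sub_eq_zero.1 hzero).ge
    · exact (sub_pos.1 (hpos s ⟨hs.1, hst⟩)).le
  obtain ⟨σ, hσ, hσt⟩ : ∃ σ : ℝ, |σ| = 1 ∧ σ * f t = |f t| := by
    rcases abs_choice (f t) with h | h
    · exact ⟨1, by simp, by rw [h, one_mul]⟩
    · exact ⟨-1, by simp, by rw [h, neg_one_mul]⟩
  have htouch : σ * f t = W t := hσt.trans (sub_eq_zero.1 hzero).symm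
  have hmax : IsMaxOn (fun s => σ * f s - W s) (Icc a t) t := fun s hs => by
    have : σ * f s ≤ |f s| := (le_abs_self _).trans (by rw [abs_mul, hσ, one_mul])
    change σ * f s - W s ≤ σ * f t - W t
    linarith [hbelow s hs]
  have hd := hasDerivAt_nonneg_of_isMaxOn_Icc ht.1 (((hf' t ht).const_mul σ).sub (hW' t ht)) hmax
  exact ⟨t, ht, hbelow, σ, hσ, htouch, sub_nonneg.1 hd⟩

theorem abs_le_mul_exp_of_abs_deriv_lt {f f' : ℝ → ℝ} {r v Q Λ : ℝ} (hrv : r ≤ v) (hΛ : 0 ≤ Λ)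
    (hcont : ContinuousOn f (Ici v)) (hderiv : ∀ s, v < s → HasDerivAt f (f' s) s)
    (hQ : ∀ u ∈ Icc r v, |f u| ≤ Q)
    (hlt : ∀ s, v < s → ∀ m, 0 < m → (∀ u ∈ Icc r s, |f u| ≤ m) → |f' s| < Λ * m) :
    ∀ t, v ≤ t → |f t| ≤ Q * exp (Λ * (t - v)) := by
  intro t hvt
  rw [← div_le_iff₀ (exp_pos _)]
  refine le_of_forall_gt_imp_ge_of_dense fun q hq => ?_
  rw [div_le_iff₀ (exp_pos _)]
  by_contra! hgt
  have hq0 : 0 < q := ((abs_nonneg _).trans (hQ v (right_mem_Icc.2 hrv))).trans_lt hq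
  have hW (s : ℝ) : HasDerivAt (fun s => q * exp (Λ * (s - v)))
      (q * (exp (Λ * (s - v)) * (Λ * 1))) s :=
    ((((hasDerivAt_id s).sub_const v).const_mul Λ).exp).const_mul q
  obtain ⟨s, hs, hbelow, σ, hσ, -, hd⟩ := exists_first_crossing hvt
    (hcont.mono Icc_subset_Ici_self) (by fun_prop) (fun u hu => hderiv u hu.1) (fun u _ => hW u)
    (by simpa using (hQ v (right_mem_Icc.2 hrv)).trans_lt hq) hgt.le
  have hhist : ∀ u ∈ Icc r s, |f u| ≤ q * exp (Λ * (s - v)) := fun u hu => by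
    rcases le_total u v with huv | hvu
    · exact ((hQ u ⟨hu.1, huv⟩).trans hq.le).trans
        (le_mul_of_one_le_right hq0.le (one_le_exp (mul_nonneg hΛ (sub_nonneg.2 hs.1.le))))
    · refine (hbelow u ⟨hvu, hu.2⟩).trans ?_
      gcongr
      exact hu.2
  have hstrict := hlt s hs.1 _ (mul_pos hq0 (exp_pos _)) hhist
  have hσd : σ * f' s ≤ |f' s| := (le_abs_self _).trans (by rw [abs_mul, hσ, one_mul])
  linarith

theorem le_of_eventually_nhdsGT_le {f₁ f₂ : ℝ → ℝ} {a : ℝ} (h₁ : Continuous f₁)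
    (h₂ : Continuous f₂) (hle : ∀ᶠ ε in 𝓝[>] a, f₁ ε ≤ f₂ ε) : f₁ a ≤ f₂ a :=
  le_of_tendsto_of_tendsto ((h₁.tendsto a).mono_left nhdsWithin_le_nhds)
    ((h₂.tendsto a).mono_left nhdsWithin_le_nhds) hle

theorem exists_orderIso_hasDerivAt {b : ℝ → ℝ} {m : ℝ} (hm : 0 < m) (hb : Continuous b)
    (hmb : ∀ t, m ≤ b t) : ∃ e : ℝ ≃o ℝ, ∀ t, HasDerivAt e (b t) t := by
  let B : ℝ → ℝ := fun t => ∫ s in (0 : ℝ)..t, b s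
  have hB (t : ℝ) : HasDerivAt B (b t) t := (hb.integral_hasStrictDerivAt 0 t).hasDerivAt
  have hdiff : Differentiable ℝ B := fun t => (hB t).differentiableAt
  have hmono : StrictMono B :=
    strictMono_of_deriv_pos fun t => by rw [(hB t).deriv]; exact hm.trans_le (hmb t)
  have hgrow {u t : ℝ} (hut : u ≤ t) : m * (t - u) ≤ B t - B u :=
    mul_sub_le_image_sub_of_le_deriv hdiff (fun t => by rw [(hB t).deriv]; exact hmb t) hut
  have hB0 : B 0 = 0 := intervalIntegral.integral_same
  have htop : Tendsto B atTop atTop :=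
    tendsto_atTop_mono' _ ((eventually_ge_atTop 0).mono fun t ht => by
      simpa [hB0] using hgrow ht) (tendsto_id.const_mul_atTop hm)
  have hbot : Tendsto B atBot atBot :=
    tendsto_atBot_mono' _ ((eventually_le_atBot 0).mono fun t ht => by
      simpa [hB0] using hgrow ht) (tendsto_id.const_mul_atBot hm)
  exact ⟨hmono.orderIsoOfSurjective B (hdiff.continuous.surjective htop hbot), hB⟩

theorem exists_orderIso_hasDerivAt_Ici {b : ℝ → ℝ} {m M t₀ : ℝ} (hm : 0 < m)
    (hb : ContinuousOn b (Ici t₀)) (hmb : ∀ t ∈ Ici t₀, m ≤ b t) (hbM : ∀ t ∈ Ici t₀, b t ≤ M) :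
    ∃ e : ℝ ≃o ℝ, (∀ t ∈ Ici t₀, HasDerivAt e (b t) t) ∧
      (∀ u t, u ≤ t → m * (t - u) ≤ e t - e u) ∧ ∀ u t, u ≤ t → e t - e u ≤ M * (t - u) := by
  have hmem (t : ℝ) : max t t₀ ∈ Ici t₀ := le_max_right t t₀
  obtain ⟨e, he⟩ := exists_orderIso_hasDerivAt hm (b := fun t => b (max t t₀))
    (hb.comp_continuous (by fun_prop) hmem) (fun t => hmb _ (hmem t))
  have hdiff : Differentiable ℝ e := fun t => (he t).differentiableAt
  refine ⟨e, fun t ht => by simpa [max_eq_left (mem_Ici.1 ht)] using he t, fun u t hut => ?_,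
    fun u t hut => ?_⟩
  · exact mul_sub_le_image_sub_of_le_deriv hdiff
      (fun t => by rw [(he t).deriv]; exact hmb _ (hmem t)) hut
  · exact image_sub_le_mul_sub_of_deriv_le hdiff
      (fun t => by rw [(he t).deriv]; exact hbM _ (hmem t)) hut

theorem inv_sub_inv_exp_sub_one_lt_half {z : ℝ} (hz : 0 < z) :
    1 / z - 1 / (exp z - 1) < 1 / 2 := by
  have hexp : 0 < exp z - 1 := by linarith [add_one_lt_exp hz.ne']
  have hlog := lt_log_one_add_of_pos hexp
  rw [add_sub_cancel, log_exp, div_lt_iff₀ (by linarith)] at hlog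
  rw [div_sub_div _ _ hz.ne' hexp.ne', div_lt_div_iff₀ (by positivity) (by norm_num)]
  linarith

theorem sub_mul_one_sub_exp_neg_lt {L u w : ℝ} (hL : 0 < L) (hu : 0 < u) (hw : 0 < w)
    (huw : L * u ≤ (L + u) * (exp w - 1)) : (L - w) * (1 - exp (-u)) < L * w := by
  by_contra! hwu
  have hA : 0 < exp w - 1 := by linarith [add_one_lt_exp hw.ne']
  have hB : 0 < 1 - exp (-u) := sub_pos.2 (exp_lt_one_iff.2 (neg_lt_zero.2 hu))
  have hinvA : 1 / (exp w - 1) ≤ 1 / u + 1 / L := by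
    rw [div_add_div _ _ hu.ne' hL.ne', div_le_div_iff₀ hA (mul_pos hu hL)]
    linarith
  have hinvB : 1 / (1 - exp (-u)) ≤ 1 / w - 1 / L := by
    rw [div_sub_div _ _ hw.ne' hL.ne', div_le_div_iff₀ hB (mul_pos hw hL)]
    linarith
  have hBu : 1 / (1 - exp (-u)) = 1 + 1 / (exp u - 1) := by
    have : exp u - 1 ≠ 0 := by linarith [add_one_lt_exp hu.ne']
    rw [exp_neg]
    field_simp
    ring
  linarith [inv_sub_inv_exp_sub_one_lt_half hu, inv_sub_inv_exp_sub_one_lt_half hw]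

theorem eq_of_le_mul_exp_sub_one {L S i E : ℝ} (hL : 0 < L) (hi : 0 < i) (hiL : i ≤ L)
    (hLS : L ≤ S) (hLE : E * L ≤ 1) (hS : S - S * (exp (L - i) - 1) * E ≤ L)
    (hi' : L ≤ i * (1 + E * (1 - exp (L - S)))) : S = L ∧ i = L := by
  obtain ⟨u, rfl⟩ : ∃ u, S = L + u := ⟨S - L, by ring⟩
  obtain ⟨w, rfl⟩ : ∃ w, i = L - w := ⟨L - i, by ring⟩
  rw [sub_sub_cancel] at hS
  rw [sub_add_cancel_left] at hi'
  have hu : 0 ≤ u := by linarith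
  have hw : 0 ≤ w := by linarith
  have hA : 0 ≤ exp w - 1 := sub_nonneg.2 (one_le_exp hw)
  have hB : 0 ≤ 1 - exp (-u) := sub_nonneg.2 (exp_le_one_iff.2 (neg_nonpos.2 hu))
  have huA : L * u ≤ (L + u) * (exp w - 1) := by
    have := mul_le_mul_of_nonneg_left hLE (mul_nonneg (by linarith : 0 ≤ L + u) hA)
    nlinarith
  have hwB : L * w ≤ (L - w) * (1 - exp (-u)) := by
    have := mul_le_mul_of_nonneg_left hLE (mul_nonneg hi.le hB)
    nlinarith
  rcases hu.eq_or_lt with rfl | hu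
  · have : L * w ≤ 0 := by simpa using hwB
    constructor <;> nlinarith
  rcases hw.eq_or_lt with rfl | hw
  · have : L * u ≤ 0 := by simpa using huA
    constructor <;> nlinarith
  exact absurd hwB (sub_mul_one_sub_exp_neg_lt hL hu hw huA).not_ge

theorem abs_exp_sub_one_le_exp_mul_abs {u L : ℝ} (hL : 0 ≤ L) (hu : u ≤ L) :
    |exp u - 1| ≤ exp L * |u| := by
  rcases le_total 0 u with h | h
  · rw [abs_of_nonneg (sub_nonneg.2 (one_le_exp h)), abs_of_nonneg h]
    have h1 : 1 - exp (-u) ≤ u := by linarith [add_one_le_exp (-u)]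
    calc exp u - 1 = exp u * (1 - exp (-u)) := by rw [mul_sub, ← exp_add]; simp
      _ ≤ exp L * u := mul_le_mul (exp_le_exp.2 hu) h1
          (sub_nonneg.2 (exp_le_one_iff.2 (neg_nonpos.2 h))) (exp_pos L).le
  · rw [abs_of_nonpos (sub_nonpos.2 (exp_le_one_iff.2 h)), abs_of_nonpos h]
    nlinarith [add_one_le_exp u, one_le_exp hL]

theorem exp_sub_one_mul_le_one_of_or {z L : ℝ}
    (h : (L ≤ 2 * z / (exp z - z - 1) ∧ z * (2 + L) < 1) ∨
      (2 * z / (exp z - z - 1) < L ∧ (exp z - 1) * L ≤ 1)) : (exp z - 1) * L ≤ 1 := by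
  rcases h with ⟨hL, hz⟩ | ⟨-, h⟩
  · rcases eq_or_ne z 0 with rfl | h0
    · simp
    · rw [le_div_iff₀ (by linarith [add_one_lt_exp h0])] at hL
      linarith
  · exact h

/-- A retarded argument `g` for an equation on `(s₀, ∞)` whose history starts at `r₀`: `g` looks
back by at most `T`, and never beyond `r₀`. -/
structure IsRetardedArgument (T r₀ s₀ : ℝ) (g : ℝ → ℝ) : Prop where
  le_apply : ∀ s, s₀ < s → r₀ ≤ g s
  sub_le_apply : ∀ s, s₀ < s → s - T ≤ g s
  apply_le : ∀ s, s₀ < s → g s ≤ s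

namespace IsRetardedArgument

variable {T r₀ s₀ : ℝ} {g : ℝ → ℝ} (hg : IsRetardedArgument T r₀ s₀ g)
include hg

theorem start_le : r₀ ≤ s₀ :=
  le_of_forall_gt_imp_ge_of_dense fun s hs => (hg.le_apply s hs).trans (hg.apply_le s hs)

theorem lag_nonneg : 0 ≤ T := by
  have hs : s₀ < s₀ + 1 := lt_add_one s₀
  linarith [hg.sub_le_apply _ hs, hg.apply_le _ hs]

theorem tendsto_atTop : Tendsto g atTop atTop :=
  tendsto_atTop_mono' _ ((eventually_gt_atTop s₀).mono hg.sub_le_apply)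
    (tendsto_atTop_add_const_right _ (-T) tendsto_id)

end IsRetardedArgument

/-- A solution of `x' s = x (g s) * exp (L - x (h s)) - x s` on `(s₀, ∞)` with admissible history on
`[r₀, s₀]`. This is the Nicholson equation for `a x` in the time scale `δ ∫ β`, with
`L = log (p / δ)`. -/
structure IsNormalizedSolution (L r₀ s₀ : ℝ) (g h x : ℝ → ℝ) : Prop where
  continuousOn : ContinuousOn x (Ici r₀)
  hasDerivAt : ∀ s, s₀ < s → HasDerivAt x (x (g s) * exp (L - x (h s)) - x s) s
  nonneg : ∀ s ∈ Ico r₀ s₀, 0 ≤ x s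
  pos : 0 < x s₀

namespace IsNormalizedSolution

variable {L T r₀ s₀ : ℝ} {g h x : ℝ → ℝ} (hx : IsNormalizedSolution L r₀ s₀ g h x)
  (hg : IsRetardedArgument T r₀ s₀ g) (hh : IsRetardedArgument T r₀ s₀ h)

include hx hg in
theorem le_mul_exp_of_nonneg {r t : ℝ} (hr : s₀ ≤ r) (hrt : r ≤ t) (hnn : ∀ s ∈ Icc r₀ t, 0 ≤ x s) :
    x r ≤ x t * exp (t - r) := by
  have hr₀ : r₀ ≤ r := hg.start_le.trans hr
  refine le_mul_exp_of_neg_self_le_deriv hrt (hx.continuousOn.mono fun s hs => hr₀.trans hs.1)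
    (fun s hs => hx.hasDerivAt s (hr.trans_lt hs.1)) (fun s hs => ?_)
    (hnn t ⟨hr₀.trans hrt, le_rfl⟩)
  have hs₀ : s₀ < s := hr.trans_lt hs.1
  have : 0 ≤ x (g s) * exp (L - x (h s)) :=
    mul_nonneg (hnn _ ⟨hg.le_apply s hs₀, (hg.apply_le s hs₀).trans hs.2.le⟩) (exp_pos _).le
  linarith

include hx hg in
theorem pos_of_le {s : ℝ} (hs : s₀ ≤ s) : 0 < x s := by
  by_contra! hneg
  obtain ⟨t, ht, hzero, hbefore⟩ := exists_first_zero hs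
    (hx.continuousOn.mono fun u hu => hg.start_le.trans hu.1) hx.pos hneg
  have hdecay := hx.le_mul_exp_of_nonneg hg le_rfl ht.1.le fun u hu => by
    rcases lt_or_ge u s₀ with h₀ | h₀
    · exact hx.nonneg u ⟨hu.1, h₀⟩
    rcases hu.2.eq_or_lt with rfl | hut
    · exact hzero.ge
    · exact (hbefore u ⟨h₀, hut⟩).le
  rw [hzero, zero_mul] at hdecay
  exact hdecay.not_gt hx.pos

include hx hg in
theorem nonneg_of_le {s : ℝ} (hs : r₀ ≤ s) : 0 ≤ x s :=
  (lt_or_ge s s₀).elim (fun h₀ => hx.nonneg s ⟨hs, h₀⟩) fun h₀ => (hx.pos_of_le hg h₀).le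

include hx hg in
theorem le_mul_exp {r t : ℝ} (hr : s₀ ≤ r) (hrt : r ≤ t) : x r ≤ x t * exp (t - r) :=
  hx.le_mul_exp_of_nonneg hg hr hrt fun _ hs => hx.nonneg_of_le hg hs.1

include hx hg in
theorem delayed_le_of_isMaxOn {t : ℝ} (ht : s₀ < t) (hmax : IsMaxOn x (Icc r₀ t) t) :
    x (h t) ≤ L := by
  by_contra! hlt
  have hd := hasDerivAt_nonneg_of_isMaxOn_Icc (hg.start_le.trans_lt ht) (hx.hasDerivAt t ht) hmax
  have hgt : x (g t) ≤ x t := hmax ⟨hg.le_apply t ht, hg.apply_le t ht⟩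
  have hexp : exp (L - x (h t)) < 1 := exp_lt_one_iff.2 (sub_neg.2 hlt)
  nlinarith [hx.pos_of_le hg ht.le, exp_pos (L - x (h t))]

include hx hg in
theorem le_delayed_of_isMinOn {t : ℝ} (ht : s₀ + T < t) (hmin : IsMinOn x (Icc s₀ t) t) :
    L ≤ x (h t) := by
  by_contra! hlt
  have ht₀ : s₀ < t := by linarith [hg.lag_nonneg]
  have hd := hasDerivAt_nonneg_of_isMaxOn_Icc ht₀ (hx.hasDerivAt t ht₀).neg hmin.neg
  have hgt : x t ≤ x (g t) := hmin ⟨by linarith [hg.sub_le_apply t ht₀], hg.apply_le t ht₀⟩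
  have hexp : 1 < exp (L - x (h t)) := one_lt_exp_iff.2 (sub_pos.2 hlt)
  nlinarith [hx.pos_of_le hg ht₀.le]

include hx hg hh in
theorem le_mul_exp_of_history_le {v Q : ℝ} (hv : s₀ ≤ v)
    (hQ : ∀ u ∈ Icc (max r₀ (v - T)) v, x u ≤ Q) {t : ℝ} (ht : v ≤ t) :
    x t ≤ Q * exp ((exp L + 1) * (t - v)) := by
  have hr₀ : r₀ ≤ v := hg.start_le.trans hv
  have habs {u : ℝ} (hu : max r₀ (v - T) ≤ u) : |x u| = x u :=
    abs_of_nonneg (hx.nonneg_of_le hg ((le_max_left _ _).trans hu))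
  refine (le_abs_self _).trans (abs_le_mul_exp_of_abs_deriv_lt
    (max_le hr₀ (sub_le_self v hg.lag_nonneg)) (by positivity)
    (hx.continuousOn.mono (Ici_subset_Ici.2 hr₀)) (fun s hs => hx.hasDerivAt s (hv.trans_lt hs))
    (fun u hu => (habs hu.1).trans_le (hQ u hu)) (fun s hs m hm hms => ?_) t ht)
  have hs₀ : s₀ < s := hv.trans_lt hs
  have hgs : x (g s) ≤ m := (le_abs_self _).trans (hms _
    ⟨max_le (hg.le_apply s hs₀) (by linarith [hg.sub_le_apply s hs₀]), hg.apply_le s hs₀⟩)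
  have hs_le : x s ≤ m := (le_abs_self _).trans
    (hms s ⟨max_le (hr₀.trans hs.le) (by linarith [hg.lag_nonneg]), le_rfl⟩)
  have hbirth : x (g s) * exp (L - x (h s)) ≤ m * exp L :=
    mul_le_mul hgs (exp_le_exp.2 (sub_le_self _ (hx.nonneg_of_le hg (hh.le_apply s hs₀))))
      (exp_pos _).le hm.le
  have hbirth0 : 0 ≤ x (g s) * exp (L - x (h s)) :=
    mul_nonneg (hx.nonneg_of_le hg (hg.le_apply s hs₀)) (exp_pos _).le
  rw [abs_lt]
  constructor <;> nlinarith [exp_pos L, hx.pos_of_le hg hs₀.le, mul_pos hm (exp_pos L)]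

include hx hg hh in
theorem exists_forall_le (hL : 0 ≤ L) : ∃ A, ∀ s, r₀ ≤ s → x s ≤ A := by
  obtain ⟨I, hI⟩ := isCompact_Icc.bddAbove_image
    (hx.continuousOn.mono (Icc_subset_Ici_self : Icc r₀ s₀ ⊆ Ici r₀))
  replace hI : ∀ s, r₀ ≤ s → s ≤ s₀ → x s ≤ I := fun s h₁ h₂ => hI ⟨s, ⟨h₁, h₂⟩, rfl⟩
  have hI0 : 0 ≤ I := hx.pos.le.trans (hI s₀ hg.start_le le_rfl)
  have hT : 0 ≤ T := hg.lag_nonneg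
  have hLT : 0 ≤ L * exp T := by positivity
  refine ⟨(I + L * exp T) * exp ((exp L + 1) * T), fun s hs => ?_⟩
  obtain ⟨t, ht, hmax⟩ := isCompact_Icc.exists_isMaxOn (nonempty_Icc.2 hs)
    (hx.continuousOn.mono Icc_subset_Ici_self)
  refine (show x s ≤ x t from hmax (right_mem_Icc.2 hs)).trans ?_
  rcases le_or_gt t s₀ with hts | hts
  · calc x t ≤ I + L * exp T := by linarith [hI t ht.1 hts]
      _ ≤ _ := le_mul_of_one_le_right (by positivity) (one_le_exp (by positivity))
  have hht : x (h t) ≤ L :=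
    hx.delayed_le_of_isMaxOn hg hts (hmax.on_subset (Icc_subset_Icc_right ht.2))
  have hsub := hh.sub_le_apply t hts
  -- From `h t` on, `x` has at most the time `T` to grow; before, it cannot have been much larger.
  have hgrow := hx.le_mul_exp_of_history_le hg hh (le_max_left s₀ (h t)) (Q := I + L * exp T)
    (fun u hu => ?_) (max_le hts.le (hh.apply_le t hts))
  · refine hgrow.trans ?_
    gcongr
    linarith [le_max_right s₀ (h t)]
  · rcases le_or_gt u s₀ with hu₀ | hu₀
    · linarith [hI u ((le_max_left _ _).trans hu.1) hu₀]
    · have hut : u ≤ h t := (le_max_iff.1 hu.2).resolve_left hu₀.not_ge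
      have hmax_eq : max s₀ (h t) = h t := max_eq_right (hu₀.le.trans hut)
      have hlag : h t - u ≤ T := by linarith [(le_max_right _ _).trans hu.1]
      calc x u ≤ x (h t) * exp (h t - u) := hx.le_mul_exp hg hu₀.le hut
        _ ≤ L * exp T := by gcongr
        _ ≤ I + L * exp T := le_add_of_nonneg_left hI0

include hx hg hh in
theorem min_mul_exp_neg_le {s : ℝ} (hs : s₀ ≤ s) : min (x s₀) L * exp (-T) ≤ x s := by
  obtain ⟨t, ht, hmin⟩ := isCompact_Icc.exists_isMinOn (nonempty_Icc.2 hs)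
    (hx.continuousOn.mono fun u hu => hg.start_le.trans hu.1)
  refine le_trans ?_ (show x t ≤ x s from hmin (right_mem_Icc.2 hs))
  rw [exp_neg, ← div_eq_mul_inv, div_le_iff₀ (exp_pos T)]
  have hxt : 0 ≤ x t := (hx.pos_of_le hg ht.1).le
  rcases le_or_gt t (s₀ + T) with htT | htT
  · calc min (x s₀) L ≤ x s₀ := min_le_left _ _
      _ ≤ x t * exp (t - s₀) := hx.le_mul_exp hg le_rfl ht.1
      _ ≤ x t * exp T := by gcongr; linarith
  · have ht₀ : s₀ < t := by linarith [hg.lag_nonneg]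
    have hht := hh.sub_le_apply t ht₀
    calc min (x s₀) L ≤ L := min_le_right _ _
      _ ≤ x (h t) :=
        hx.le_delayed_of_isMinOn hg htT (hmin.on_subset (Icc_subset_Icc_right ht.2))
      _ ≤ x t * exp (t - h t) := hx.le_mul_exp hg (by linarith) (hh.apply_le t ht₀)
      _ ≤ x t * exp T := by gcongr; linarith

end IsNormalizedSolution

section Convergence

variable {L S i ζ : ℝ} {g h x : ℝ → ℝ}
  (hderiv : ∀ᶠ s in atTop, HasDerivAt x (x (g s) * exp (L - x (h s)) - x s) s)
  (hg : Tendsto g atTop atTop) (hh : Tendsto h atTop atTop) (hhs : ∀ᶠ s in atTop, h s ≤ s)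

include hderiv hg hh hhs

theorem exists_le_mul_exp_of_frequently_lt {m M c θ ε : ℝ} (hε : 0 < ε) (hM0 : 0 ≤ M)
    (hm : ∀ᶠ s in atTop, m ≤ x s) (hM : ∀ᶠ s in atTop, x s ≤ M)
    (hθ : ∀ᶠ s in atTop, s - h s ≤ θ) (hc : ∃ᶠ s in atTop, c < x s) :
    ∃ v, m ≤ v ∧ M * exp (L - m) + ε - (M * exp (L - m) + ε - c) * exp θ ≤ v ∧
      c - ε ≤ M * exp (L - v) := by
  have hle : ∀ᶠ s in atTop, x (g s) * exp (L - x (h s)) - x s ≤ M * exp (L - m) - x s := by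
    filter_upwards [hg.eventually hM, hh.eventually hm] with s hgs hhs
    gcongr
  obtain ⟨t, ⟨hct, hdt, hht⟩, hgt, hmt⟩ :=
    ((frequently_le_comp_of_deriv_le_const_sub hε hderiv hle hh hhs hθ hc).and_eventually
      ((hg.eventually hM).and (hh.eventually hm))).exists
  refine ⟨x (h t), hmt, hht, ?_⟩
  have := mul_le_mul_of_nonneg_right hgt (exp_pos (L - x (h t))).le
  linarith

theorem exists_mul_exp_le_of_frequently_lt {m M c θ ε : ℝ} (hε : 0 < ε) (hm0 : 0 ≤ m)
    (hm : ∀ᶠ s in atTop, m ≤ x s) (hM : ∀ᶠ s in atTop, x s ≤ M)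
    (hθ : ∀ᶠ s in atTop, s - h s ≤ θ) (hc : ∃ᶠ s in atTop, x s < c) :
    ∃ v, v ≤ M ∧ v ≤ m * exp (L - M) - ε - (m * exp (L - M) - ε - c) * exp θ ∧
      m * exp (L - v) ≤ c + ε := by
  have hle : ∀ᶠ s in atTop,
      -(x (g s) * exp (L - x (h s)) - x s) ≤ -(m * exp (L - M)) - -x s := by
    filter_upwards [hg.eventually hm, hh.eventually hM] with s hgs hhs
    have hgs0 : 0 ≤ x (g s) := hm0.trans hgs
    have : m * exp (L - M) ≤ x (g s) * exp (L - x (h s)) := by gcongr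
    linarith
  obtain ⟨t, ⟨hct, hdt, hht⟩, hgt, hMt⟩ :=
    ((frequently_le_comp_of_deriv_le_const_sub hε (hderiv.mono fun s hs => hs.neg) hle hh hhs hθ
      (hc.mono fun s hs => neg_lt_neg hs)).and_eventually
      ((hg.eventually hm).and (hh.eventually hM))).exists
  rw [Pi.neg_apply] at hct hht
  refine ⟨x (h t), hMt, by linarith, ?_⟩
  have := mul_le_mul_of_nonneg_right hgt (exp_pos (L - x (h t))).le
  linarith

variable (hi : ∀ ε > 0, ∀ᶠ s in atTop, i - ε ≤ x s) (hS : ∀ ε > 0, ∀ᶠ s in atTop, x s ≤ S + ε)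
  (hζ : ∀ ε > 0, ∀ᶠ s in atTop, s - h s ≤ ζ + ε)

include hi hS hζ

theorem limsup_feedback_le (hS0 : 0 < S) (hfreq : ∀ ε > 0, ∃ᶠ s in atTop, S - ε < x s) :
    i ≤ L ∧ S - S * (exp (L - i) - 1) * (exp ζ - 1) ≤ L := by
  let V : ℝ → ℝ := fun ε => max (i - ε) ((S + ε) * exp (L - (i - ε)) + ε -
    ((S + ε) * exp (L - (i - ε)) + ε - (S - ε)) * exp (ζ + ε))
  have hV : ∀ᶠ ε in 𝓝[>] 0, S - ε - ε ≤ (S + ε) * exp (L - V ε) := by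
    filter_upwards [self_mem_nhdsWithin] with ε (hε : 0 < ε)
    obtain ⟨v, hiv, hVv, hv⟩ := exists_le_mul_exp_of_frequently_lt hderiv hg hh hhs hε
      (by positivity) (hi ε hε) (hS ε hε) (hζ ε hε) (hfreq ε hε)
    refine hv.trans ?_
    gcongr
    exact max_le hiv hVv
  have hlim := le_of_eventually_nhdsGT_le (by fun_prop) (by fun_prop) hV
  have hVL : V 0 ≤ L := by
    simpa [hS0] using hlim
  simp only [V, sub_zero, add_zero] at hVL
  exact ⟨(le_max_left _ _).trans hVL, by linarith [(le_max_right _ _).trans hVL]⟩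

theorem le_liminf_feedback (hi0 : 0 < i) (hfreq : ∀ ε > 0, ∃ᶠ s in atTop, x s < i + ε) :
    L ≤ S ∧ L ≤ i * (1 + (exp ζ - 1) * (1 - exp (L - S))) := by
  let V : ℝ → ℝ := fun ε => min (S + ε) ((i - ε) * exp (L - (S + ε)) - ε -
    ((i - ε) * exp (L - (S + ε)) - ε - (i + ε)) * exp (ζ + ε))
  have hV : ∀ᶠ ε in 𝓝[>] 0, (i - ε) * exp (L - V ε) ≤ i + ε + ε := by
    filter_upwards [self_mem_nhdsWithin, Ioo_mem_nhdsGT hi0] with ε (hε : 0 < ε) hεi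
    obtain ⟨v, hvS, hvV, hv⟩ := exists_mul_exp_le_of_frequently_lt hderiv hg hh hhs hε
      (sub_nonneg.2 hεi.2.le) (hi ε hε) (hS ε hε) (hζ ε hε) (hfreq ε hε)
    refine le_trans ?_ hv
    have : 0 ≤ i - ε := sub_nonneg.2 hεi.2.le
    gcongr
    exact le_min hvS hvV
  have hlim := le_of_eventually_nhdsGT_le (by fun_prop) (by fun_prop) hV
  have hLV : L ≤ V 0 := by
    simpa [hi0] using hlim
  simp only [V, sub_zero, add_zero] at hLV
  exact ⟨hLV.trans (min_le_left _ _), by linarith [hLV.trans (min_le_right _ _)]⟩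

omit hi hS

theorem tendsto_of_eventually_mem_Icc {q A : ℝ} (hL : 0 < L) (hcond : (exp ζ - 1) * L ≤ 1)
    (hq : 0 < q) (hqx : ∀ᶠ s in atTop, q ≤ x s) (hxA : ∀ᶠ s in atTop, x s ≤ A) :
    Tendsto x atTop (𝓝 L) := by
  have hbdd : IsBoundedUnder (· ≤ ·) atTop x := isBoundedUnder_of_eventually_le hxA
  have hbdd' : IsBoundedUnder (· ≥ ·) atTop x := isBoundedUnder_of_eventually_ge hqx
  have hqi : q ≤ liminf x atTop := le_liminf_of_le hbdd.isCoboundedUnder_ge hqx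
  have hiS : liminf x atTop ≤ limsup x atTop := liminf_le_limsup hbdd hbdd'
  have hi (ε : ℝ) (hε : 0 < ε) : ∀ᶠ s in atTop, liminf x atTop - ε ≤ x s :=
    (eventually_lt_of_lt_liminf (sub_lt_self _ hε) hbdd').mono fun _ hs => hs.le
  have hS (ε : ℝ) (hε : 0 < ε) : ∀ᶠ s in atTop, x s ≤ limsup x atTop + ε :=
    (eventually_lt_of_limsup_lt (lt_add_of_pos_right _ hε) hbdd).mono fun _ hs => hs.le
  obtain ⟨hiL, hSL⟩ := limsup_feedback_le hderiv hg hh hhs hi hS hζ (by linarith)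
    fun ε hε => frequently_lt_of_lt_limsup hbdd'.isCoboundedUnder_le (sub_lt_self _ hε)
  obtain ⟨hLS, hLi⟩ := le_liminf_feedback hderiv hg hh hhs hi hS hζ (by linarith)
    fun ε hε => frequently_lt_of_liminf_lt hbdd.isCoboundedUnder_ge (lt_add_of_pos_right _ hε)
  obtain ⟨hSeq, hieq⟩ := eq_of_le_mul_exp_sub_one hL (by linarith) hiL hLS hcond hSL hLi
  exact tendsto_of_liminf_eq_limsup hieq hSeq hbdd hbdd'

end Convergence

theorem IsNormalizedSolution.tendsto {L T r₀ s₀ ζ : ℝ} {g h x : ℝ → ℝ}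
    (hx : IsNormalizedSolution L r₀ s₀ g h x) (hg : IsRetardedArgument T r₀ s₀ g)
    (hh : IsRetardedArgument T r₀ s₀ h) (hL : 0 < L) (hcond : (exp ζ - 1) * L ≤ 1)
    (hζ : ∀ ε > 0, ∀ᶠ s in atTop, s - h s ≤ ζ + ε) : Tendsto x atTop (𝓝 L) := by
  obtain ⟨A, hA⟩ := hx.exists_forall_le hg hh hL.le
  have hlate : ∀ᶠ s in atTop, s₀ < s := eventually_gt_atTop s₀
  exact tendsto_of_eventually_mem_Icc (hlate.mono hx.hasDerivAt) hg.tendsto_atTop hh.tendsto_atTop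
    (hlate.mono hh.apply_le) hζ hL hcond (mul_pos (lt_min hx.pos hL) (exp_pos _))
    (hlate.mono fun s hs => hx.min_mul_exp_neg_le hg hh hs.le)
    (hlate.mono fun s hs => hA s (hg.start_le.trans hs.le))

theorem exists_tolerance {L ζ : ℝ} (hL : 0 < L) (hcond : (exp ζ - 1) * L ≤ 1) :
    ∃ c ∈ Ioo (0 : ℝ) 1, ∃ η ∈ Ioo (0 : ℝ) 1, ∃ F G k : ℝ,
      F = 1 + η + L * (1 + η) ∧ G = 1 + η + L * (1 / 2) ∧ k = G - (G - 1) * exp c ∧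
      -(1 / 2) < F - (F - 1) * exp (ζ + η + c) ∧ 2 * η < L * k ∧
      2 * η < L * (F - (F - k) * exp (ζ + η - c)) := by
  have hpos_near {f : ℝ → ℝ} (hf : Continuous f) (h0 : 0 < f 0) : ∀ᶠ x in 𝓝[>] 0, 0 < f x :=
    ((hf.tendsto 0).mono_left nhdsWithin_le_nhds).eventually_const_lt h0
  have hc₁ := hpos_near (f := fun c => 1 + L - L * exp (ζ + c) + 1 / 2) (by fun_prop)
    (by simp only [add_zero]; linarith)
  have hc₂ := hpos_near (f := fun c => 1 - L / 2 * (exp c - 1)) (by fun_prop) (by simp)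
  obtain ⟨c, ⟨hc₁, hc₂⟩, hc⟩ := ((hc₁.and hc₂).and (Ioo_mem_nhdsGT one_pos)).exists
  let F : ℝ → ℝ := fun η => 1 + η + L * (1 + η)
  let G : ℝ → ℝ := fun η => 1 + η + L * (1 / 2)
  let k : ℝ → ℝ := fun η => G η - (G η - 1) * exp c
  have hη₁ := hpos_near (f := fun η => F η - (F η - 1) * exp (ζ + η + c) + 1 / 2) (by fun_prop)
    (by simp only [F, add_zero, mul_one]; linarith)
  have hη₂ := hpos_near (f := fun η => L * k η - 2 * η) (by fun_prop)
    (by simp only [k, G, add_zero, mul_zero, sub_zero]; exact mul_pos hL (by linarith))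
  have hη₃ := hpos_near (f := fun η => L * (F η - (F η - k η) * exp (ζ + η - c)) - 2 * η)
    (by fun_prop) <| by
      have hexp : exp c * exp (ζ - c) = exp ζ := by rw [← exp_add, add_sub_cancel]
      have hlt : exp (ζ - c) < exp ζ := exp_lt_exp.2 (sub_lt_self ζ hc.1)
      simp only [F, k, G, add_zero, mul_one, mul_zero, sub_zero]
      refine mul_pos hL ?_
      nlinarith
  obtain ⟨η, ⟨hη₁, hη₂, hη₃⟩, hη⟩ :=
    ((hη₁.and (hη₂.and hη₃)).and (Ioo_mem_nhdsGT one_pos)).exists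
  exact ⟨c, hc, η, hη, F η, G η, k η, rfl, rfl, rfl, by linarith, by linarith, by linarith⟩

theorem le_of_delayed_inequality {y y' h : ℝ → ℝ} {A L q k r u ρ : ℝ} (hL : 0 ≤ L) (hru : r ≤ u)
    (hρ : u - r ≤ ρ)
    (H : ∀ s ∈ Icc r u, HasDerivAt y (y' s) s ∧ y' s + y s ≤ A - L * y (h s) ∧ -q ≤ y (h s))
    (hku : k ≤ y u) (hk : k ≤ A + L * q) : A + L * q - (A + L * q - k) * exp ρ ≤ y r := by
  refine le_of_deriv_le_const_sub hru hρ (fun s hs => (H s hs).1.continuousAt.continuousWithinAt)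
    (fun s hs => (H s (Ioo_subset_Icc_self hs)).1) (fun s hs => ?_) hku hk
  obtain ⟨-, hd, hq⟩ := H s (Ioo_subset_Icc_self hs)
  linarith [mul_le_mul_of_nonneg_left hq hL]

/- When `(exp ζ - 1) * L = 1`, the bound `-1 ≤ y (h s)` alone leaves no room for `η`. But `y t = 1`
already forces `-1 / 2 ≤ y (h s)` for `s` close to `t`, and this makes up for the error terms. -/
theorem exists_deriv_lt_neg_of_delayed_inequality {L ζ : ℝ} (hL : 0 < L) (hζ : 0 ≤ ζ)
    (hcond : (exp ζ - 1) * L ≤ 1) :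
    ∃ η ∈ Ioo (0 : ℝ) 1, ∀ (y y' h : ℝ → ℝ) (t : ℝ),
      (∀ s ∈ Icc (t - (ζ + 2)) t, HasDerivAt y (y' s) s ∧ y' s + y s ≤ 1 + η - L * y (h s) ∧
        -(1 + η) ≤ y (h s) ∧ s - (ζ + η) ≤ h s ∧ h s ≤ s) →
      y t = 1 → y' t < -η := by
  obtain ⟨c, hc, η, hη, F, G, k, hF, hG, hk, hstart, hlate, hearly⟩ := exists_tolerance hL hcond
  refine ⟨η, hη, fun y y' h t H hyt => ?_⟩
  have hLη : 0 < L * η := mul_pos hL hη.1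
  have htimes : 0 < c ∧ c < 1 ∧ 0 < η ∧ η < 1 := ⟨hc.1, hc.2, hη⟩
  have hback {q r u ρ : ℝ} (hr : t - (ζ + 2) ≤ r) (hru : r ≤ u) (hut : u ≤ t) (hρ : u - r ≤ ρ)
      (hqu : q ≤ y u) (hqF : q ≤ F) : F - (F - q) * exp ρ ≤ y r := by
    rw [hF] at hqF ⊢
    refine le_of_delayed_inequality (y' := y') (h := h) hL.le hru hρ (fun s hs => ?_) hqu hqF
    obtain ⟨hy, hd, hdelayed, -⟩ := H s ⟨hr.trans hs.1, hs.2.trans hut⟩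
    exact ⟨hy, hd, hdelayed⟩
  have hhalf : ∀ r ∈ Icc (t - (ζ + η + c)) t, -(1 / 2) ≤ y r := fun r hr =>
    hstart.le.trans
      (hback (by linarith [hr.1]) hr.2 le_rfl (by linarith [hr.1]) hyt.ge (by linarith))
  have hk_le : ∀ r ∈ Icc (t - c) t, k ≤ y r := fun r hr => by
    rw [hk, hG]
    refine le_of_delayed_inequality (y' := y') (h := h) hL.le hr.2 (by linarith [hr.1])
      (fun s hs => ?_) hyt.ge (by linarith)
    obtain ⟨hy, hd, -, hlag, hhs⟩ := H s ⟨by linarith [hr.1, hs.1], hs.2⟩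
    exact ⟨hy, hd, hhalf _ ⟨by linarith [hr.1, hs.1], hhs.trans hs.2⟩⟩
  obtain ⟨-, hdt, -, hlag, hht⟩ := H t ⟨by linarith, le_rfl⟩
  suffices 2 * η < L * y (h t) by linarith
  rcases le_or_gt (t - c) (h t) with hct | hct
  · exact hlate.trans_le (mul_le_mul_of_nonneg_left (hk_le _ ⟨hct, hht⟩) hL.le)
  · have hkF : k ≤ F := by
      have : 0 ≤ (G - 1) * exp c := mul_nonneg (by linarith) (exp_pos c).le
      linarith
    exact hearly.trans_le (mul_le_mul_of_nonneg_left (hback (by linarith) hct.le (by linarith)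
      (by linarith) (hk_le _ ⟨le_rfl, by linarith⟩) hkF) hL.le)

theorem abs_mul_exp_neg_sub_linear_le {L a b m : ℝ} (hL : 0 ≤ L) (hm : m ≤ 1) (ha : |a| ≤ m)
    (hb : |b| ≤ m) : |(L + a) * exp (-b) - L - (a - L * b)| ≤ (L + 2) * m ^ 2 := by
  have hquad : |exp (-b) - 1 - -b| ≤ b ^ 2 :=
    (abs_exp_sub_one_sub_id_le (by rw [abs_neg]; exact hb.trans hm)).trans_eq (neg_sq b)
  have hlin : |exp (-b) - 1| ≤ 2 * |b| := by
    simpa only [abs_neg] using abs_exp_sub_one_le (x := -b) (by rw [abs_neg]; exact hb.trans hm)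
  calc |(L + a) * exp (-b) - L - (a - L * b)|
      = |L * (exp (-b) - 1 - -b) + a * (exp (-b) - 1)| := by ring_nf
    _ ≤ L * |exp (-b) - 1 - -b| + |a| * |exp (-b) - 1| := by
      refine (abs_add_le _ _).trans_eq ?_
      rw [abs_mul, abs_mul, abs_of_nonneg hL]
    _ ≤ L * |b| ^ 2 + |a| * (2 * |b|) := by rw [sq_abs]; gcongr
    _ ≤ L * m ^ 2 + m * (2 * m) := by
      have : 0 ≤ m := (abs_nonneg a).trans ha
      gcongr
    _ = (L + 2) * m ^ 2 := by ring

theorem mul_birth_sub_le {L a b m η σ : ℝ} (hL : 0 ≤ L) (hm : 0 < m) (hη1 : η ≤ 1)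
    (hmη : 8 * (L + 2) * m ≤ η) (hσ : |σ| = 1) (ha : |a| ≤ (1 + η / 2) * m)
    (hb : |b| ≤ (1 + η / 2) * m) :
    σ * ((L + a) * exp (-b) - L) ≤ (1 + η) * m - L * (σ * b) := by
  have hM : (1 + η / 2) * m ≤ 3 / 2 * m := by gcongr; linarith
  have hLm : 0 ≤ L * m := by positivity
  have hrem := abs_mul_exp_neg_sub_linear_le hL (by linarith) ha hb
  have hsq : (L + 2) * ((1 + η / 2) * m) ^ 2 ≤ η / 2 * m := by
    have hM0 : 0 ≤ (1 + η / 2) * m := (abs_nonneg a).trans ha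
    calc (L + 2) * ((1 + η / 2) * m) ^ 2 ≤ (L + 2) * (3 / 2 * m) ^ 2 := by gcongr
      _ = 9 / 32 * (8 * (L + 2) * m * m) := by ring
      _ ≤ 1 / 2 * (8 * (L + 2) * m * m) :=
        mul_le_mul_of_nonneg_right (by norm_num) (by positivity)
      _ ≤ 1 / 2 * (η * m) := by gcongr
      _ = η / 2 * m := by ring
  have hσ_le (z : ℝ) : σ * z ≤ |z| := (le_abs_self _).trans (by rw [abs_mul, hσ, one_mul])
  have h₁ := (hσ_le _).trans hrem
  have h₂ := (hσ_le a).trans ha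
  linarith

theorem exists_slow_exponential_decay {η R : ℝ} (hη : 0 < η) :
    ∃ lam ∈ Ioo 0 η, ∀ C ≥ 0, ∀ s t v : ℝ, t - R ≤ v →
      C * exp (-lam * (v - s)) ≤ (1 + η / 2) * (C * exp (-lam * (t - s))) := by
  have hslow : ∀ᶠ lam in 𝓝[>] (0 : ℝ), exp (lam * R) < 1 + η / 2 :=
    (((by fun_prop : Continuous fun lam : ℝ => exp (lam * R)).tendsto 0).mono_left
      nhdsWithin_le_nhds).eventually_lt_const (by simpa using hη)
  obtain ⟨lam, hslow, hlam⟩ := (hslow.and (Ioo_mem_nhdsGT hη)).exists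
  refine ⟨lam, hlam, fun C hC s t v hv => ?_⟩
  calc C * exp (-lam * (v - s)) = exp (lam * (t - v)) * (C * exp (-lam * (t - s))) := by
        rw [mul_left_comm, ← exp_add]; ring_nf
    _ ≤ exp (lam * R) * (C * exp (-lam * (t - s))) := by
        gcongr
        · exact hlam.1.le
        · linarith
    _ ≤ (1 + η / 2) * (C * exp (-lam * (t - s))) := by gcongr

/-- The equilibrium `L` of the normalised equation attracts every solution with history close to `L`
at a uniform exponential rate; `ι` bounds the distance of the history to `L`. -/
def IsNormalizedExpStable (L r₀ s₀ : ℝ) (g h : ℝ → ℝ) : Prop :=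
  ∃ ε > 0, ∃ M ≥ (1 : ℝ), ∃ lam > 0, ∀ x, IsNormalizedSolution L r₀ s₀ g h x →
    ∀ ι ≤ ε, (∀ s ∈ Icc r₀ s₀, |x s - L| ≤ ι) →
      ∀ s, s₀ ≤ s → |x s - L| ≤ M * exp (-lam * (s - s₀)) * ι

theorem IsRetardedArgument.nonneg_of_eventually_lag_le {T r₀ s₀ ζ : ℝ} {h : ℝ → ℝ}
    (hh : IsRetardedArgument T r₀ s₀ h) (hζ : ∀ ε > 0, ∀ᶠ s in atTop, s - h s ≤ ζ + ε) :
    0 ≤ ζ := by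
  refine le_of_forall_pos_le_add fun ε hε => ?_
  obtain ⟨s, hs, hs₀⟩ := ((hζ ε hε).and (eventually_gt_atTop s₀)).exists
  linarith [hh.apply_le s hs₀]

section LocalStability

variable {L T r₀ s₀ ζ : ℝ} {g h : ℝ → ℝ} (hg : IsRetardedArgument T r₀ s₀ g)
  (hh : IsRetardedArgument T r₀ s₀ h)

include hg hh

theorem IsNormalizedSolution.abs_sub_le_mul_exp {x : ℝ → ℝ}
    (hx : IsNormalizedSolution L r₀ s₀ g h x) (hL : 0 ≤ L) {ι : ℝ}
    (hι : ∀ u ∈ Icc r₀ s₀, |x u - L| ≤ ι) {s : ℝ} (hs : s₀ ≤ s) :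
    |x s - L| ≤ ι * exp ((exp L * (1 + L) + 2) * (s - s₀)) := by
  refine abs_le_mul_exp_of_abs_deriv_lt (f := fun s => x s - L) hg.start_le (by positivity)
    ((hx.continuousOn.mono (Ici_subset_Ici.2 hg.start_le)).sub continuousOn_const)
    (fun s hs => (hx.hasDerivAt s hs).sub_const L) hι (fun s hs m hm hms => ?_) s hs
  have hgs := hms (g s) ⟨hg.le_apply s hs, hg.apply_le s hs⟩
  have hhs := hms (h s) ⟨hh.le_apply s hs, hh.apply_le s hs⟩
  have hss := hms s ⟨hg.start_le.trans hs.le, le_rfl⟩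
  have hxh : L - x (h s) ≤ L := sub_le_self L (hx.nonneg_of_le hg (hh.le_apply s hs))
  have hexp : |exp (L - x (h s)) - 1| ≤ exp L * m :=
    (abs_exp_sub_one_le_exp_mul_abs hL hxh).trans (by rw [abs_sub_comm]; gcongr)
  calc |x (g s) * exp (L - x (h s)) - x s|
      = |(x (g s) - L) * exp (L - x (h s)) + L * (exp (L - x (h s)) - 1) - (x s - L)| := by
        ring_nf
    _ ≤ |x (g s) - L| * exp (L - x (h s)) + L * |exp (L - x (h s)) - 1| + |x s - L| := by
        refine (abs_sub _ _).trans (add_le_add_left ((abs_add_le _ _).trans_eq ?_) _)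
        rw [abs_mul, abs_mul, abs_exp, abs_of_nonneg hL]
    _ ≤ m * exp L + L * (exp L * m) + m := by gcongr
    _ < (exp L * (1 + L) + 2) * m := by linarith

theorem exists_mul_deriv_lt_neg (hL : 0 < L) (hζ : 0 ≤ ζ) (hcond : (exp ζ - 1) * L ≤ 1) :
    ∃ η ∈ Ioo (0 : ℝ) 1, ∀ x, IsNormalizedSolution L r₀ s₀ g h x → ∀ m σ t : ℝ, |σ| = 1 →
      0 < m → 8 * (L + 2) * m ≤ η → s₀ + (ζ + 2 + T) < t →
      (∀ s ∈ Icc (t - (ζ + 2)) t, s - h s ≤ ζ + η) →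
      (∀ u ∈ Icc (t - (ζ + 2 + T)) t, |x u - L| ≤ (1 + η / 2) * m) → σ * (x t - L) = m →
      σ * (x (g t) * exp (L - x (h t)) - x t) < -η * m := by
  obtain ⟨η, hη, H⟩ := exists_deriv_lt_neg_of_delayed_inequality hL hζ hcond
  refine ⟨η, hη, fun x hx m σ t hσ hm hmη ht hlag hclose htouch => ?_⟩
  have hlin := H (fun s => σ * (x s - L) / m)
    (fun s => σ * (x (g s) * exp (L - x (h s)) - x s) / m) h t (fun s hs => ?_)
    (by rw [htouch, div_self hm.ne'])
  · rwa [div_lt_iff₀ hm] at hlin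
  have hs₀ : s₀ < s := by linarith [hs.1, hg.lag_nonneg]
  have hhs := hh.apply_le s hs₀
  have ha := hclose (g s)
    ⟨by linarith [hs.1, hg.sub_le_apply s hs₀], (hg.apply_le s hs₀).trans hs.2⟩
  have hb := hclose (h s) ⟨by linarith [hs.1, hh.sub_le_apply s hs₀], hhs.trans hs.2⟩
  refine ⟨(((hx.hasDerivAt s hs₀).sub_const L).const_mul σ).div_const m, ?_, ?_,
    by linarith [hlag s hs], hhs⟩
  · have hbirth := mul_birth_sub_le hL.le hm hη.2.le hmη hσ ha hb
    rw [add_sub_cancel, neg_sub] at hbirth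
    rw [← add_div, mul_div_assoc', ← sub_nonneg, ← mul_nonneg_iff_of_pos_right hm]
    field_simp
    linarith
  · rw [le_div_iff₀ hm]
    have : -(σ * (x (h s) - L)) ≤ |x (h s) - L| :=
      (neg_le_abs _).trans (by rw [abs_mul, hσ, one_mul])
    nlinarith [mul_pos hη.1 hm]

theorem exists_exponential_barrier (hL : 0 < L) (hcond : (exp ζ - 1) * L ≤ 1)
    (hζ : ∀ ε > 0, ∀ᶠ s in atTop, s - h s ≤ ζ + ε) :
    ∃ κ > 0, ∃ lam > 0, ∃ s₁ ≥ s₀, ∀ x, IsNormalizedSolution L r₀ s₀ g h x → ∀ C ∈ Ioc 0 κ,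
      (∀ s ∈ Icc s₀ s₁, |x s - L| < C) →
      ∀ s, s₁ ≤ s → |x s - L| < C * exp (-lam * (s - s₁)) := by
  have hζ0 : 0 ≤ ζ := hh.nonneg_of_eventually_lag_le hζ
  have hT : 0 ≤ T := hg.lag_nonneg
  obtain ⟨η, hη, H⟩ := exists_mul_deriv_lt_neg hg hh hL hζ0 hcond
  obtain ⟨N, hN⟩ := eventually_atTop.1 (hζ η hη.1)
  obtain ⟨lam, hlam, hback⟩ := exists_slow_exponential_decay (R := ζ + 2 + T) hη.1
  refine ⟨η / (8 * (L + 2)), div_pos hη.1 (by positivity), lam, hlam.1,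
    max N s₀ + (ζ + 2 + T), by linarith [le_max_right N s₀], fun x hx C hC hstart s hs => ?_⟩
  set s₁ := max N s₀ + (ζ + 2 + T)
  have hNs₁ : N + (ζ + 2 + T) ≤ s₁ := by simp only [s₁, add_le_add_iff_right, le_max_left]
  have hs₀s₁ : s₀ + (ζ + 2 + T) ≤ s₁ := by simp only [s₁, add_le_add_iff_right, le_max_right]
  by_contra! hcross
  obtain ⟨t, ht, hbelow, σ, hσ, htouch, hd⟩ := exists_first_crossing (f := fun s => x s - L)
    (W := fun s => C * exp (-lam * (s - s₁)))
    (W' := fun s => C * (exp (-lam * (s - s₁)) * (-lam * 1))) hs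
    ((hx.continuousOn.mono fun u hu => by
      rw [mem_Ici]; linarith [hu.1, hg.start_le]).sub continuousOn_const)
    (by fun_prop) (fun u hu => (hx.hasDerivAt u (by linarith [hu.1])).sub_const L)
    (fun u _ => ((((hasDerivAt_id u).sub_const s₁).const_mul (-lam)).exp).const_mul C)
    (by simpa using hstart s₁ ⟨by linarith, le_rfl⟩) hcross
  have hm : 0 < C * exp (-lam * (t - s₁)) := mul_pos hC.1 (exp_pos _)
  have hm_le : C * exp (-lam * (t - s₁)) ≤ C :=
    mul_le_of_le_one_right hC.1.le (exp_le_one_iff.2 (by nlinarith [hlam.1, ht.1]))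
  have hmη : 8 * (L + 2) * (C * exp (-lam * (t - s₁))) ≤ η := by
    rw [← le_div_iff₀' (by positivity)]
    exact hm_le.trans hC.2
  have hstrict := H x hx _ σ t hσ hm hmη (by linarith [ht.1])
    (fun u hu => hN u (by linarith [hu.1, ht.1])) (fun u hu => ?_) htouch
  · nlinarith [hlam.2]
  · rcases le_or_gt s₁ u with hu₁ | hu₁
    · exact (hbelow u ⟨hu₁, hu.2⟩).trans (hback C hC.1.le s₁ t u hu.1)
    · have := hback C hC.1.le s₁ t s₁ (hu.1.trans hu₁.le)
      rw [sub_self, mul_zero, exp_zero, mul_one] at this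
      exact (hstart u ⟨by linarith [hu.1, ht.1], hu₁.le⟩).le.trans this

theorem isNormalizedExpStable (hL : 0 < L) (hcond : (exp ζ - 1) * L ≤ 1)
    (hζ : ∀ ε > 0, ∀ᶠ s in atTop, s - h s ≤ ζ + ε) : IsNormalizedExpStable L r₀ s₀ g h := by
  obtain ⟨κ, hκ, lam, hlam, s₁, hs₁, H⟩ := exists_exponential_barrier hg hh hL hcond hζ
  set Λ := exp L * (1 + L) + 2
  have hΛ : 0 ≤ Λ := by positivity
  set P := exp (Λ * (s₁ - s₀))
  have hP : 1 ≤ P := one_le_exp (mul_nonneg hΛ (sub_nonneg.2 hs₁))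
  have hE : 1 ≤ exp (lam * (s₁ - s₀)) := one_le_exp (mul_nonneg hlam.le (sub_nonneg.2 hs₁))
  refine ⟨κ / (2 * P), by positivity, 2 * P * exp (lam * (s₁ - s₀)), by nlinarith, lam, hlam,
    fun x hx ι hικ hι s hs => ?_⟩
  have hgrowth {u : ℝ} (hu : s₀ ≤ u) : |x u - L| ≤ ι * exp (Λ * (u - s₀)) :=
    hx.abs_sub_le_mul_exp hg hh hL.le hι hu
  have hι0 : 0 ≤ ι := (abs_nonneg _).trans (hι s₀ ⟨hg.start_le, le_rfl⟩)
  rcases hι0.eq_or_lt with rfl | hι0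
  · simpa using hgrowth hs
  have hbound : 2 * P * exp (lam * (s₁ - s₀)) * exp (-lam * (s - s₀)) * ι =
      2 * ι * P * exp (-lam * (s - s₁)) := by
    rw [mul_assoc (2 * P), ← exp_add]
    ring_nf
  have hearly : ∀ u ∈ Icc s₀ s₁, |x u - L| ≤ ι * P := fun u hu =>
    (hgrowth hu.1).trans (mul_le_mul_of_nonneg_left
      (exp_le_exp.2 (mul_le_mul_of_nonneg_left (sub_le_sub_right hu.2 s₀) hΛ)) hι0.le)
  have hιP : 0 < ι * P := by positivity
  rw [hbound]
  rcases le_total s₁ s with h₁ | h₁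
  · refine (H x hx (2 * ι * P) ⟨by positivity, ?_⟩ (fun u hu => ?_) s h₁).le
    · rw [le_div_iff₀ (by positivity)] at hικ
      linarith
    · linarith [hearly u hu]
  · have : 1 ≤ exp (-lam * (s - s₁)) := one_le_exp (by nlinarith)
    nlinarith [hearly s ⟨hs, h₁⟩]

end LocalStability

/-- The retarded argument `t ↦ t - τ t`, read in the time scale `e`. -/
def retardedTime (e : ℝ ≃o ℝ) (τ : ℝ → ℝ) (s : ℝ) : ℝ :=
  e (e.symm s - τ (e.symm s))

section TimeChange

variable {p a δ t₀ τbar C : ℝ} {β τ σ : ℝ → ℝ} {e : ℝ ≃o ℝ}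

theorem isRetardedArgument_retardedTime (hC : 0 ≤ C) (hlip : ∀ u t, u ≤ t → e t - e u ≤ C * (t - u))
    (hτ : ∀ t ∈ Ici t₀, τ t ∈ Icc 0 τbar) :
    IsRetardedArgument (C * τbar) (e (t₀ - τbar)) (e t₀) (retardedTime e τ) := by
  have hmem {s : ℝ} (hs : e t₀ < s) : t₀ < e.symm s := e.lt_symm_apply.2 hs
  refine ⟨fun s hs => e.monotone ?_, fun s hs => ?_, fun s hs => ?_⟩
  · linarith [hmem hs, (hτ _ (hmem hs).le).2]
  · have hdrop := hlip (e.symm s - τ (e.symm s)) (e.symm s) (sub_le_self _ (hτ _ (hmem hs).le).1)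
    rw [e.apply_symm_apply, sub_sub_cancel] at hdrop
    have := mul_le_mul_of_nonneg_left (hτ _ (hmem hs).le).2 hC
    rw [retardedTime]
    linarith
  · rw [retardedTime, ← e.le_symm_apply]
    exact sub_le_self _ (hτ _ (hmem hs).le).1

theorem NicholsonSolution1.isNormalizedSolution {x : ℝ → ℝ}
    (hx : NicholsonSolution1 p a δ t₀ τbar β τ σ x) (hp : 0 < p) (hδ : 0 < δ) (ha : 0 < a)
    (hβ : ∀ t ∈ Ici t₀, 0 < β t) (he : ∀ t ∈ Ici t₀, HasDerivAt e (δ * β t) t) :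
    IsNormalizedSolution (log (p / δ)) (e (t₀ - τbar)) (e t₀) (retardedTime e τ)
      (retardedTime e σ) fun s => a * x (e.symm s) := by
  obtain ⟨hcont, hderiv, hnonneg, hpos⟩ := hx
  refine ⟨continuousOn_const.mul (hcont.comp e.symm.continuous.continuousOn fun s hs =>
      e.le_symm_apply.2 hs), fun s hs => ?_, fun s hs => ?_, ?_⟩
  · have ht : t₀ < e.symm s := e.lt_symm_apply.2 hs
    have hβt := hβ _ ht.le
    have hsymm : HasDerivAt e.symm (δ * β (e.symm s))⁻¹ s :=
      (he _ ht.le).of_local_left_inverse e.symm.continuous.continuousAt (by positivity)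
        (.of_forall e.apply_symm_apply)
    have hx' := ((hderiv _ ht.le).hasDerivAt (Ici_mem_nhds ht)).comp s hsymm
    refine (hx'.const_mul a).congr_deriv ?_
    simp only [retardedTime, e.symm_apply_apply]
    rw [sub_eq_add_neg (log _), exp_add, exp_log (by positivity), ← neg_mul]
    field_simp
  · exact mul_nonneg ha.le (hnonneg _ (e.le_symm_apply.2 hs.1) (e.symm_apply_lt.2 hs.2))
  · simpa only [e.symm_apply_apply] using mul_pos ha hpos

theorem mul_integral_eq_sub (hβ : ContinuousOn β (Ici t₀))
    (he : ∀ t ∈ Ici t₀, HasDerivAt e (δ * β t) t) {u t : ℝ} (hu : t₀ ≤ u) (hut : u ≤ t) :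
    δ * ∫ s in u..t, β s = e t - e u := by
  have hsub : uIcc u t ⊆ Ici t₀ := by
    rw [uIcc_of_le hut]
    exact fun s hs => hu.trans hs.1
  rw [← intervalIntegral.integral_const_mul]
  exact intervalIntegral.integral_eq_sub_of_hasDerivAt (fun s hs => he s (hsub hs))
    ((hβ.mono hsub).const_mul δ).intervalIntegrable

theorem eventually_sub_retardedTime_le (hδ : 0 < δ) (hC : 0 ≤ C) (hβ : ContinuousOn β (Ici t₀))
    (he : ∀ t ∈ Ici t₀, HasDerivAt e (δ * β t) t)
    (hlip : ∀ u t, u ≤ t → e t - e u ≤ C * (t - u)) (hσ : ∀ t ∈ Ici t₀, σ t ∈ Icc 0 τbar)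
    {ε : ℝ} (hε : 0 < ε) :
    ∀ᶠ s in atTop,
      s - retardedTime e σ s ≤ δ * limsup (fun t => ∫ r in (t - σ t)..t, β r) atTop + ε := by
  have hτbar : 0 ≤ τbar := (hσ t₀ self_mem_Ici).1.trans (hσ t₀ self_mem_Ici).2
  have hint : ∀ᶠ t in atTop, t₀ ≤ t ∧ δ * ∫ r in (t - σ t)..t, β r = e t - e (t - σ t) := by
    filter_upwards [eventually_ge_atTop (t₀ + τbar)] with t ht
    have ht₀ : t₀ ≤ t := by linarith
    exact ⟨ht₀, mul_integral_eq_sub hβ he (by linarith [(hσ t ht₀).2]) (sub_le_self t (hσ t ht₀).1)⟩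
  have hbdd : IsBoundedUnder (· ≤ ·) atTop fun t => ∫ r in (t - σ t)..t, β r := by
    refine isBoundedUnder_of_eventually_le (a := C * τbar / δ) (hint.mono fun t ⟨ht, hint⟩ => ?_)
    rw [le_div_iff₀' hδ, hint]
    refine (hlip _ _ (sub_le_self t (hσ t ht).1)).trans ?_
    rw [sub_sub_cancel]
    exact mul_le_mul_of_nonneg_left (hσ t ht).2 hC
  have hlt := eventually_lt_of_limsup_lt (lt_add_of_pos_right _ (div_pos hε hδ)) hbdd
  filter_upwards [e.symm.tendsto_atTop.eventually (hint.and hlt)] with s ⟨⟨_, hint⟩, hlt⟩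
  rw [e.apply_symm_apply] at hint
  rw [retardedTime, ← hint]
  refine (mul_le_mul_of_nonneg_left hlt.le hδ.le).trans_eq ?_
  field_simp

theorem IsNormalizedExpStable.locallyExpStable1 {L c : ℝ} {g h : ℝ → ℝ}
    (H : IsNormalizedExpStable L (e (t₀ - τbar)) (e t₀) g h) (ha : 0 < a) (hc : 0 < c)
    (hexp : ∀ u t, u ≤ t → c * (t - u) ≤ e t - e u)
    (hsol : ∀ x, NicholsonSolution1 p a δ t₀ τbar β τ σ x →
      IsNormalizedSolution L (e (t₀ - τbar)) (e t₀) g h fun s => a * x (e.symm s)) :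
    LocallyExpStable1 p a δ t₀ τbar β τ σ (1 / a * L) := by
  obtain ⟨ε, hε, M, hM, lam, hlam, H⟩ := H
  refine ⟨ε / a, by positivity, M, hM, lam * c, by positivity, fun x hx hsup t ht => ?_⟩
  set K := 1 / a * L with hK
  set I := sSup ((fun s => |x s - K|) '' Icc (t₀ - τbar) t₀)
  have hI0 : 0 ≤ I := sSup_nonneg (forall_mem_image.2 fun s _ => abs_nonneg _)
  have hI {s : ℝ} (hs : s ∈ Icc (t₀ - τbar) t₀) : |x s - K| ≤ I :=
    le_csSup (isCompact_Icc.bddAbove_image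
      ((hx.1.mono Icc_subset_Ici_self).sub continuousOn_const).abs) (mem_image_of_mem _ hs)
  have hscale (z : ℝ) : |a * z - L| = a * |z - K| := by
    rw [← abs_of_pos ha, ← abs_mul, abs_of_pos ha, mul_sub, hK]
    field_simp
  have hbound := H _ (hsol x hx) (a * I) (by rwa [← le_div_iff₀' ha]) (fun s hs => by
    rw [hscale]
    exact mul_le_mul_of_nonneg_left
      (hI ⟨e.le_symm_apply.2 hs.1, e.symm_apply_le.2 hs.2⟩) ha.le) (e t) (e.monotone ht)
  rw [e.symm_apply_apply, hscale, mul_left_comm] at hbound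
  calc |x t - K| ≤ M * exp (-lam * (e t - e t₀)) * I := le_of_mul_le_mul_left hbound ha
    _ ≤ M * exp (-(lam * c) * (t - t₀)) * I := by
      have := mul_le_mul_of_nonneg_left (hexp t₀ t ht) hlam.le
      gcongr _ * ?_ * _
      exact exp_le_exp.2 (by linarith)

theorem tendsto_one_div_mul_of_tendsto_mul_symm {L : ℝ} {x : ℝ → ℝ} (ha : a ≠ 0)
    (hx : Tendsto (fun s => a * x (e.symm s)) atTop (𝓝 L)) :
    Tendsto x atTop (𝓝 (1 / a * L)) := by
  refine ((hx.comp e.tendsto_atTop).const_mul (1 / a)).congr fun t => ?_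
  rw [Function.comp_apply, e.symm_apply_apply]
  field_simp

end TimeChange

theorem nicholson_one_pair_global_asymptotic_stability_general
    {p a δ : ℝ} (hδ : 0 < δ) (hpδ : δ < p) (ha : 0 < a) {t₀ : ℝ} {β τ σ : ℝ → ℝ}
    (hβ : ContinuousOn β (Ici t₀)) {βmin βmax : ℝ} (hβmin : 0 < βmin)
    (hβmem : ∀ t ∈ Ici t₀, β t ∈ Icc βmin βmax) {τbar : ℝ}
    (hτ : ∀ t ∈ Ici t₀, τ t ∈ Icc 0 τbar) (hσ : ∀ t ∈ Ici t₀, σ t ∈ Icc 0 τbar)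
    {ζM : ℝ} (hζM : ζM = limsup (fun t => ∫ s in (t - σ t)..t, β s) atTop)
    (hcond : (exp (δ * ζM) - 1) * log (p / δ) ≤ 1) {K : ℝ} (hK : K = 1 / a * log (p / δ)) :
    LocallyExpStable1 p a δ t₀ τbar β τ σ K ∧
      ∀ x, NicholsonSolution1 p a δ t₀ τbar β τ σ x → Tendsto x atTop (𝓝 K) := by
  subst hζM hK
  have hβt₀ := hβmem t₀ self_mem_Ici
  have hβmax : 0 < βmax := hβmin.trans_le (hβt₀.1.trans hβt₀.2)
  obtain ⟨e, he, hexp, hlip⟩ := exists_orderIso_hasDerivAt_Ici (b := fun t => δ * β t)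
    (mul_pos hδ hβmin) (hβ.const_mul δ) (fun t ht => mul_le_mul_of_nonneg_left (hβmem t ht).1 hδ.le)
    (fun t ht => mul_le_mul_of_nonneg_left (hβmem t ht).2 hδ.le)
  have hC : 0 ≤ δ * βmax := by positivity
  have hL : 0 < log (p / δ) := log_pos ((one_lt_div hδ).2 hpδ)
  have hg := isRetardedArgument_retardedTime hC hlip hτ
  have hh := isRetardedArgument_retardedTime hC hlip hσ
  have hlag := fun ε (hε : 0 < ε) => eventually_sub_retardedTime_le hδ hC hβ he hlip hσ hε
  have hsol := fun x (hx : NicholsonSolution1 p a δ t₀ τbar β τ σ x) =>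
    hx.isNormalizedSolution (hδ.trans hpδ) hδ ha (fun t ht => hβmin.trans_le (hβmem t ht).1) he
  exact ⟨(isNormalizedExpStable hg hh hL hcond hlag).locallyExpStable1 ha (mul_pos hδ hβmin) hexp
    hsol, fun x hx => tendsto_one_div_mul_of_tendsto_mul_symm ha.ne'
      ((hsol x hx).tendsto hg hh hL hcond hlag)⟩

/- STATEMENT 9 (Theorem 3.2): for the one-pair Nicholson equation with p > δ > 0,
   with ζ_M := limsup_{t→∞} ∫_{t−σ(t)}^t β(s) ds, if either
   (i) log(p/δ) ≤ 2δζ_M/(e^{δζ_M} − δζ_M − 1) and δζ_M(2 + log(p/δ)) < 1, or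
   (ii) log(p/δ) > 2δζ_M/(e^{δζ_M} − δζ_M − 1) and (e^{δζ_M} − 1) log(p/δ) ≤ 1,
   then K = (1/a) log(p/δ) is globally asymptotically stable: K is locally
   exponentially stable and every solution with admissible data converges to K. -/
theorem nicholson_one_pair_global_asymptotic_stability
    (p a δ : ℝ) (hδ : 0 < δ) (hpδ : δ < p) (ha : 0 < a)
    (t₀ : ℝ) (β τ σ : ℝ → ℝ)
    (hβc : ContinuousOn β (Set.Ici t₀))
    (hτc : ContinuousOn τ (Set.Ici t₀)) (hσc : ContinuousOn σ (Set.Ici t₀))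
    (hτ0 : ∀ t ∈ Set.Ici t₀, 0 ≤ τ t) (hσ0 : ∀ t ∈ Set.Ici t₀, 0 ≤ σ t)
    (βminus : ℝ) (hβminus : IsGLB (β '' Set.Ici t₀) βminus) (hβmpos : 0 < βminus)
    (hβub : ∃ B, ∀ t ∈ Set.Ici t₀, β t ≤ B)
    (τbar : ℝ) (hτbar : IsLUB (τ '' Set.Ici t₀ ∪ σ '' Set.Ici t₀) τbar)
    (ζM : ℝ)
    (hζM : ζM = Filter.limsup (fun t => ∫ s in (t - σ t)..t, β s) Filter.atTop)
    (hcond :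
      (Real.log (p / δ) ≤ 2 * δ * ζM / (Real.exp (δ * ζM) - δ * ζM - 1) ∧
        δ * ζM * (2 + Real.log (p / δ)) < 1) ∨
      (2 * δ * ζM / (Real.exp (δ * ζM) - δ * ζM - 1) < Real.log (p / δ) ∧
        (Real.exp (δ * ζM) - 1) * Real.log (p / δ) ≤ 1))
    (K : ℝ) (hKdef : K = (1 / a) * Real.log (p / δ)) :
    LocallyExpStable1 p a δ t₀ τbar β τ σ K ∧
    ∀ x : ℝ → ℝ, NicholsonSolution1 p a δ t₀ τbar β τ σ x →
      Filter.Tendsto x Filter.atTop (nhds K) := by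
  obtain ⟨βmax, hβmax⟩ := hβub
  rw [mul_assoc (2 : ℝ)] at hcond
  exact nicholson_one_pair_global_asymptotic_stability_general hδ hpδ ha hβc hβmpos
    (fun t ht => ⟨hβminus.1 (mem_image_of_mem β ht), hβmax t ht⟩)
    (fun t ht => ⟨hτ0 t ht, hτbar.1 (Or.inl (mem_image_of_mem τ ht))⟩)
    (fun t ht => ⟨hσ0 t ht, hτbar.1 (Or.inr (mem_image_of_mem σ ht))⟩)
    hζM (exp_sub_one_mul_le_one_of_or hcond) hKdef
end

section
/- (Theorem 3.3, main result.) Consider the Nicholson equation with m pairs of delays. Assume p := Σ_{j=1}^m p_j > δ, let K > 0 satisfy Σ_j p_j e^{−a_j K} = δ, let a⁺ := max_j a_j, a⁻ := min_j a_j and ζ_M := max_{1≤j≤m} limsup_{t→∞} ∫_{t−σ_j(t)}^{t} β(s) ds. If (H1) a⁺/a⁻ < 3/2 and (H2) a⁺K(e^{δζ_M} − 1) ≤ 1, then K is globally attractive: every solution x with admissible initial data satisfies lim_{t→∞} x(t) = K. -/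
/-- A solution of the Nicholson equation
`x'(t) = β(t)(Σ_j p_j x(t−τ_j(t)) e^{−a_j x(t−σ_j(t))} − δ x(t))`, `t ≥ t₀`,
defined on `[t₀ − τbar, ∞)`, with admissible initial data. -/
def NicholsonSolution (m : ℕ) (p a : Fin m → ℝ) (δ t₀ τbar : ℝ)
    (β : ℝ → ℝ) (τ σ : Fin m → ℝ → ℝ) (x : ℝ → ℝ) : Prop :=
  ContinuousOn x (Set.Ici (t₀ - τbar)) ∧
  (∀ t ∈ Set.Ici t₀, HasDerivWithinAt x
      (β t * ((∑ j, p j * x (t - τ j t) * Real.exp (-(a j) * x (t - σ j t))) - δ * x t))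
      (Set.Ici t₀) t) ∧
  (∀ s, t₀ - τbar ≤ s → s < t₀ → 0 ≤ x s) ∧
  0 < x t₀

/-! Let `l` and `M` be the lower and upper limits of a solution `x`, and let
`F(y) = Σ_j p_j e^{-a_j y}`, so that `F(K) = δ`. When `x` is close to `M` and not decreasing much,
births almost balance deaths, so some crowding delay must read a value at most about `K`; hence `x`
climbs from `K` to `M` within a time on which `∫ β ≤ ζ_M`. Over that time the birth term is at most
about `M F(l)`, and variation of constants gives
`M - K ≤ M (F(l)/δ - 1)(e^{δ ζ_M} - 1)`. In the same way
`K - l ≤ l (1 - F(M)/δ)(e^{δ ζ_M} - 1)`.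

With `q = a⁺`, `u = q (M - K)` and `v = q (K - l)`, hypothesis (H2) turns these into
`1/(e^v - 1) ≤ 1/u + 1/(qK)` and `1/(1 - e^{-u}) + 1/(qK) ≤ 1/v`. On the other hand
`1/s - 1/2 < 1/(e^s - 1)` and `1/s + 1/2 < 1/(1 - e^{-s})` for `s > 0`. If `u, v > 0`, adding the
four inequalities gives `0 < 0`; if one of `u`, `v` vanishes, so does the other, and `l = K = M`.

The bounds `0 < l` and `M < ∞` come from a Harnack inequality on windows of one delay length,
applied at the times where `x` attains a running extremum. -/

open Set Filter Topology MeasureTheory Real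

section Calculus

lemma hasDerivAt_integral_of_continuousOn_Icc {g : ℝ → ℝ} {u v s : ℝ}
    (hg : ContinuousOn g (Icc u v)) (hs : s ∈ Ioo u v) :
    HasDerivAt (fun t => ∫ r in u..t, g r) (g s) s := by
  have hint : IntervalIntegrable g volume u s :=
    (hg.mono (Icc_subset_Icc_right hs.2.le)).intervalIntegrable_of_Icc hs.1.le
  exact intervalIntegral.integral_hasDerivAt_right hint
    ((hg.mono Ioo_subset_Icc_self).stronglyMeasurableAtFilter isOpen_Ioo s hs)
    (hg.continuousAt (Icc_mem_nhds hs.1 hs.2))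

lemma le_mul_exp_integral_of_deriv_le {f f' β : ℝ → ℝ} {k u v : ℝ} (huv : u ≤ v)
    (hf : ContinuousOn f (Icc u v)) (hβ : ContinuousOn β (Icc u v))
    (hd : ∀ s ∈ Ioo u v, HasDerivAt f (f' s) s)
    (hle : ∀ s ∈ Ioo u v, f' s ≤ k * β s * f s) :
    f v ≤ f u * exp (k * ∫ s in u..v, β s) := by
  set I : ℝ → ℝ := fun t => ∫ s in u..t, β s
  have hIcont : ContinuousOn I (Icc u v) := by
    simpa only [uIcc_of_le huv] using intervalIntegral.continuousOn_primitive_interval'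
      (hβ.intervalIntegrable_of_Icc huv) left_mem_uIcc
  have hanti : AntitoneOn (fun s => f s * exp (-(k * I s))) (Icc u v) := by
    refine antitoneOn_of_hasDerivWithinAt_nonpos (convex_Icc u v)
      (f' := fun s => (f' s - k * β s * f s) * exp (-(k * I s))) (by fun_prop) ?_ ?_
    · rw [interior_Icc]
      intro s hs
      have hI := ((hasDerivAt_integral_of_continuousOn_Icc hβ hs).const_mul k).fun_neg.exp
      exact (((hd s hs).mul hI).congr_deriv (by ring)).hasDerivWithinAt
    · rw [interior_Icc]
      intro s hs
      exact mul_nonpos_of_nonpos_of_nonneg (sub_nonpos.2 (hle s hs)) (exp_pos _).le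
  have hle_uv : f v * exp (-(k * I v)) ≤ f u := by
    simpa [I] using hanti (left_mem_Icc.2 huv) (right_mem_Icc.2 huv) huv
  rwa [exp_neg, ← div_eq_mul_inv, div_le_iff₀ (exp_pos _)] at hle_uv

lemma mul_exp_integral_le_of_le_deriv {f f' β : ℝ → ℝ} {k u v : ℝ} (huv : u ≤ v)
    (hf : ContinuousOn f (Icc u v)) (hβ : ContinuousOn β (Icc u v))
    (hd : ∀ s ∈ Ioo u v, HasDerivAt f (f' s) s)
    (hle : ∀ s ∈ Ioo u v, k * β s * f s ≤ f' s) :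
    f u * exp (k * ∫ s in u..v, β s) ≤ f v := by
  have := le_mul_exp_integral_of_deriv_le huv hf.neg hβ (fun s hs => (hd s hs).neg)
    (fun s hs => by simpa using hle s hs)
  simpa using this

lemma nonneg_of_hasDerivAt_of_isMaxOn_Icc {f : ℝ → ℝ} {d u t : ℝ} (hut : u < t)
    (hd : HasDerivAt f d t) (hmax : IsMaxOn f (Icc u t) t) : 0 ≤ d := by
  have hcone : u - t ∈ posTangentConeAt (Icc u t) t :=
    sub_mem_posTangentConeAt_of_segment_subset (by rw [segment_symm, segment_eq_Icc hut.le])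
  have hle := hmax.localize.hasFDerivWithinAt_nonpos hd.hasFDerivAt.hasFDerivWithinAt hcone
  rw [ContinuousLinearMap.toSpanSingleton_apply, smul_eq_mul] at hle
  exact nonneg_of_mul_nonpos_right hle (sub_neg.2 hut)

lemma exists_forall_le_max_of_isMaxOn_Icc {f : ℝ → ℝ} {a S H : ℝ} (haS : a ≤ S)
    (hf : ContinuousOn f (Ici a))
    (hH : ∀ t > S, IsMaxOn f (Icc a t) t → f t ≤ H) :
    ∃ r ∈ Icc a S, ∀ t ≥ a, f t ≤ max (f r) H := by
  obtain ⟨r, hr, hrmax⟩ := isCompact_Icc.exists_isMaxOn (nonempty_Icc.2 haS)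
    (hf.mono Icc_subset_Ici_self)
  refine ⟨r, hr, fun t ht => ?_⟩
  obtain ⟨s, hs, hsmax⟩ := isCompact_Icc.exists_isMaxOn (nonempty_Icc.2 ht)
    (hf.mono Icc_subset_Ici_self)
  refine (hsmax (right_mem_Icc.2 ht)).trans ?_
  rcases le_or_gt s S with hsS | hSs
  · exact le_max_of_le_left (hrmax ⟨hs.1, hsS⟩)
  · exact le_max_of_le_right (hH s hSs (hsmax.on_subset (Icc_subset_Icc_right hs.2)))

lemma tendsto_atBot_of_deriv_le_neg {f f' : ℝ → ℝ} {η : ℝ} (hη : 0 < η)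
    (hd : ∀ᶠ t in atTop, HasDerivAt f (f' t) t) (hle : ∀ᶠ t in atTop, f' t ≤ -η) :
    Tendsto f atTop atBot := by
  obtain ⟨T, hT⟩ := eventually_atTop.1 (hd.and hle)
  have hbound : ∀ t ≥ T, f t ≤ f T + -η * (t - T) := fun t ht => by
    have := (convex_Ici T).image_sub_le_mul_sub_of_deriv_le
      (fun s hs => (hT s hs).1.continuousAt.continuousWithinAt)
      (fun s hs => (hT s (interior_subset hs)).1.differentiableAt.differentiableWithinAt)
      (fun s hs => (hT s (interior_subset hs)).1.deriv.trans_le (hT s (interior_subset hs)).2)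
      T self_mem_Ici t ht ht
    linarith
  refine tendsto_atBot_mono' atTop ((eventually_ge_atTop T).mono hbound)
    (tendsto_atBot_add_const_left _ _ ?_)
  exact (tendsto_atTop_add_const_right _ (-T) tendsto_id).const_mul_atTop_of_neg (neg_lt_zero.2 hη)

lemma frequently_le_and_neg_lt_deriv {f f' : ℝ → ℝ} {c η : ℝ} (hη : 0 < η)
    (hd : ∀ᶠ t in atTop, HasDerivAt f (f' t) t) (hbdd : IsBoundedUnder (· ≥ ·) atTop f)
    (hc : ∃ᶠ t in atTop, c < f t) : ∃ᶠ t in atTop, c ≤ f t ∧ -η < f' t := by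
  by_contra hcon
  have hdec : ∀ᶠ t in atTop, c ≤ f t → f' t ≤ -η := by
    simpa only [not_frequently, not_and, not_lt] using hcon
  obtain ⟨T, hT⟩ := eventually_atTop.1 (hd.and hdec)
  -- Once below the level `c`, `f` could never cross it upwards again.
  have habove : ∀ t ≥ T, c < f t := by
    by_contra! hbelow
    obtain ⟨u, hu, hfu⟩ := hbelow
    obtain ⟨v, huv, hfv⟩ := frequently_atTop.1 hc u
    have hdu : ∀ s ≥ u, HasDerivAt f (f' s) s := fun s hs => (hT s (hu.trans hs)).1
    refine hfv.not_ge (image_le_of_deriv_right_lt_deriv_boundary (B := fun _ => c)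
      (fun s hs => (hdu s hs.1).continuousAt.continuousWithinAt)
      (fun s hs => (hdu s hs.1).hasDerivWithinAt) hfu (fun s => hasDerivAt_const s c)
      (fun s hs hfs => ?_) (right_mem_Icc.2 huv))
    exact ((hT s (hu.trans hs.1)).2 hfs.ge).trans_lt (neg_lt_zero.2 hη)
  have hle : ∀ᶠ t in atTop, f' t ≤ -η :=
    (eventually_ge_atTop T).mono fun t ht => (hT t ht).2 (habove t ht).le
  exact not_isBoundedUnder_of_tendsto_atBot (tendsto_atBot_of_deriv_le_neg hη hd hle) hbdd

lemma eventually_forall_sub_le {P : ℝ → Prop} (hP : ∀ᶠ t in atTop, P t) (R : ℝ) :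
    ∀ᶠ t in atTop, ∀ s, t - R ≤ s → P s :=
  (tendsto_atTop_add_const_right atTop (-R) tendsto_id).eventually (eventually_forall_ge_atTop.2 hP)

end Calculus

section LinearRelaxation

variable {x N β : ℝ → ℝ} {δ C E c κ u v : ℝ}

lemma sub_le_mul_of_relaxation_le (huv : u ≤ v) (hx : ContinuousOn x (Icc u v))
    (hβ : ContinuousOn β (Icc u v)) (hβ0 : ∀ s ∈ Ioo u v, 0 ≤ β s)
    (hd : ∀ s ∈ Ioo u v, HasDerivAt x (β s * (N s - δ * x s)) s)
    (hN : ∀ s ∈ Ioo u v, N s ≤ δ * C) (hu : x u ≤ κ) (hv : c ≤ x v) (hcC : c ≤ C)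
    (hE : exp (δ * ∫ s in u..v, β s) ≤ E) : c - κ ≤ (C - c) * (E - 1) := by
  set e := exp (δ * ∫ s in u..v, β s) with he
  have hdecay := le_mul_exp_integral_of_deriv_le (f := fun s => x s - C) (k := -δ) huv
    (hx.sub continuousOn_const) hβ
    (fun s hs => (hd s hs).sub_const C)
    (fun s hs => by linarith [mul_le_mul_of_nonneg_left (hN s hs) (hβ0 s hs)])
  rw [neg_mul, exp_neg, ← he, ← div_eq_mul_inv, le_div_iff₀ (exp_pos _)] at hdecay
  have hscaled : (c - C) * e ≤ (x v - C) * e :=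
    mul_le_mul_of_nonneg_right (by linarith) (exp_pos _).le
  calc c - κ ≤ (C - c) * (e - 1) := by linarith
    _ ≤ (C - c) * (E - 1) := by gcongr

lemma sub_le_mul_of_le_relaxation (huv : u ≤ v) (hx : ContinuousOn x (Icc u v))
    (hβ : ContinuousOn β (Icc u v)) (hβ0 : ∀ s ∈ Ioo u v, 0 ≤ β s)
    (hd : ∀ s ∈ Ioo u v, HasDerivAt x (β s * (N s - δ * x s)) s)
    (hN : ∀ s ∈ Ioo u v, δ * C ≤ N s) (hu : κ ≤ x u) (hv : x v ≤ c) (hCc : C ≤ c)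
    (hE : exp (δ * ∫ s in u..v, β s) ≤ E) : κ - c ≤ (c - C) * (E - 1) := by
  have hneg := sub_le_mul_of_relaxation_le (N := -N) (C := -C) huv hx.neg hβ hβ0
    (fun s hs => (hd s hs).neg.congr_deriv (by simp only [Pi.neg_apply]; ring))
    (fun s hs => by simpa using hN s hs) (neg_le_neg hu) (neg_le_neg hv) (neg_le_neg hCc) hE
  linarith

end LinearRelaxation

section ScalarInequalities

lemma neg_lt_of_neg_mul_lt_mul {ε b β r : ℝ} (hε : 0 ≤ ε) (hβ : 0 < β) (hb : b ≤ β)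
    (h : -(ε * b) < β * r) : -ε < r := by
  have hle : ε * b ≤ ε * β := mul_le_mul_of_nonneg_left hb hε
  exact lt_of_mul_lt_mul_left (by linarith) hβ.le

lemma exp_sub_one_mul_two_sub_lt {s : ℝ} (hs : 0 < s) : (exp s - 1) * (2 - s) < 2 * s := by
  have hmono : StrictMonoOn (fun s : ℝ => 2 * s - (exp s - 1) * (2 - s)) (Ici 0) := by
    refine strictMonoOn_of_hasDerivWithinAt_pos (convex_Ici 0)
      (f' := fun s => exp s * (s - 1 + exp (-s))) (by fun_prop) (fun r _ => ?_) (fun r hr => ?_)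
    · have hexp : exp r * exp (-r) = 1 := by rw [← exp_add, add_neg_cancel, exp_zero]
      have hd := ((hasDerivAt_id r).const_mul 2).sub
        (((hasDerivAt_exp r).sub_const 1).mul ((hasDerivAt_id r).const_sub 2))
      refine (hd.congr_deriv ?_).hasDerivWithinAt
      simp only [id_eq]
      linear_combination -hexp
    · rw [interior_Ici, mem_Ioi] at hr
      have := add_one_lt_exp (neg_ne_zero.2 hr.ne')
      exact mul_pos (exp_pos r) (by linarith)
  have := hmono self_mem_Ici hs.le hs
  simp only [mul_zero, exp_zero, sub_self, zero_mul] at this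
  linarith

lemma one_div_sub_half_lt_one_div_exp_sub_one {s : ℝ} (hs : 0 < s) :
    1 / s - 1 / 2 < 1 / (exp s - 1) := by
  have hexp : 0 < exp s - 1 := sub_pos.2 (one_lt_exp_iff.2 hs)
  rw [div_sub_div _ _ hs.ne' two_ne_zero, div_lt_div_iff₀ (by positivity) hexp]
  linarith [exp_sub_one_mul_two_sub_lt hs]

lemma one_div_add_half_lt_one_div_one_sub_exp_neg {s : ℝ} (hs : 0 < s) :
    1 / s + 1 / 2 < 1 / (1 - exp (-s)) := by
  have hexp : exp s - 1 ≠ 0 := (sub_pos.2 (one_lt_exp_iff.2 hs)).ne'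
  have hshift : 1 / (1 - exp (-s)) = 1 / (exp s - 1) + 1 := by
    rw [exp_neg]
    field_simp
    ring
  linarith [one_div_sub_half_lt_one_div_exp_sub_one hs]

lemma one_div_add_le_of_sub_le_mul {l K q w E : ℝ} (hl : 0 < l) (hlK : l < K) (hq : 0 < q)
    (hw : 0 < w) (hE : q * K * E ≤ 1) (hle : K - l ≤ l * w * E) :
    1 / w + 1 / (q * K) ≤ 1 / (q * (K - l)) := by
  have hK : 0 < K := hl.trans hlK
  have hgap : 0 < q * (K - l) := mul_pos hq (sub_pos.2 hlK)
  have hcross : q * (K - l) * K ≤ l * w := calc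
    q * (K - l) * K ≤ q * (l * w * E) * K := by gcongr
    _ = l * w * (q * K * E) := by ring
    _ ≤ l * w := mul_le_of_le_one_right (by positivity) hE
  rw [div_add_div _ _ hw.ne' (by positivity), div_le_div_iff₀ (by positivity) hgap]
  linarith [mul_le_mul_of_nonneg_left hcross hq.le]

lemma one_div_le_add_of_sub_le_mul {M K q r E : ℝ} (hK : 0 < K) (hKM : K < M) (hq : 0 < q)
    (hr : 0 < r) (hE : q * K * E ≤ 1) (hle : M - K ≤ M * r * E) :
    1 / r ≤ 1 / (q * (M - K)) + 1 / (q * K) := by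
  have hM : 0 < M := hK.trans hKM
  have hgap : 0 < q * (M - K) := mul_pos hq (sub_pos.2 hKM)
  have hcross : q * (M - K) * K ≤ M * r := calc
    q * (M - K) * K ≤ q * (M * r * E) * K := by gcongr
    _ = M * r * (q * K * E) := by ring
    _ ≤ M * r := mul_le_of_le_one_right (by positivity) hE
  rw [div_add_div _ _ hgap.ne' (by positivity), div_le_div_iff₀ hr (by positivity)]
  linarith [mul_le_mul_of_nonneg_left hcross hq.le]

lemma eq_and_eq_of_exp_contraction {M l K q E : ℝ} (hl : 0 < l) (hlK : l ≤ K) (hKM : K ≤ M)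
    (hq : 0 < q) (hE : q * K * E ≤ 1)
    (hlow : K - l ≤ l * (1 - exp (-(q * (M - K)))) * E)
    (hup : M - K ≤ M * (exp (q * (K - l)) - 1) * E) : l = K ∧ M = K := by
  rcases hKM.eq_or_lt with rfl | hKM
  · simp only [sub_self, mul_zero, neg_zero, exp_zero, zero_mul] at hlow
    exact ⟨by linarith, rfl⟩
  rcases hlK.eq_or_lt with rfl | hlK
  · simp only [sub_self, mul_zero, exp_zero, zero_mul] at hup
    exact ⟨rfl, by linarith⟩
  exfalso
  have hu : 0 < q * (M - K) := mul_pos hq (sub_pos.2 hKM)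
  have hv : 0 < q * (K - l) := mul_pos hq (sub_pos.2 hlK)
  have hlow' := one_div_add_le_of_sub_le_mul hl hlK hq
    (sub_pos.2 (exp_lt_one_iff.2 (neg_lt_zero.2 hu))) hE hlow
  have hup' := one_div_le_add_of_sub_le_mul (hl.trans hlK) hKM hq
    (sub_pos.2 (one_lt_exp_iff.2 hv)) hE hup
  linarith [one_div_add_half_lt_one_div_one_sub_exp_neg hu,
    one_div_sub_half_lt_one_div_exp_sub_one hv]

end ScalarInequalities

section BirthTerms

variable {ι : Type*} [Fintype ι] {p a : ι → ℝ}

/-- Births per unit of reproducing population when every crowding delay reads the value `y`.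
A positive equilibrium is a point where this rate equals the mortality `δ`. -/
noncomputable def perCapitaBirth (p a : ι → ℝ) (y : ℝ) : ℝ := ∑ j, p j * exp (-(a j) * y)

/-- The birth term of the Nicholson equation: the reproduction delays `τ j` and the crowding
delays `σ j` are separate. -/
noncomputable def delayedBirth (p a : ι → ℝ) (τ σ : ι → ℝ → ℝ) (x : ℝ → ℝ) (t : ℝ) : ℝ :=
  ∑ j, p j * x (t - τ j t) * exp (-(a j) * x (t - σ j t))

@[fun_prop]
lemma continuous_perCapitaBirth : Continuous (perCapitaBirth p a) := by
  unfold perCapitaBirth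
  fun_prop

lemma perCapitaBirth_nonneg (hp : ∀ j, 0 ≤ p j) (y : ℝ) : 0 ≤ perCapitaBirth p a y :=
  Finset.sum_nonneg fun j _ => mul_nonneg (hp j) (exp_pos _).le

lemma strictAnti_perCapitaBirth [Nonempty ι] (hp : ∀ j, 0 < p j) (ha : ∀ j, 0 < a j) :
    StrictAnti (perCapitaBirth p a) := fun _ _ hyz =>
  Finset.sum_lt_sum_of_nonempty Finset.univ_nonempty fun j _ =>
    mul_lt_mul_of_pos_left (exp_lt_exp.2 (mul_lt_mul_of_neg_left hyz (neg_lt_zero.2 (ha j)))) (hp j)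

lemma perCapitaBirth_le_exp_mul {q y z : ℝ} (hp : ∀ j, 0 ≤ p j) (hq : ∀ j, a j ≤ q)
    (hyz : y ≤ z) : perCapitaBirth p a y ≤ exp (q * (z - y)) * perCapitaBirth p a z := by
  unfold perCapitaBirth
  rw [Finset.mul_sum]
  refine Finset.sum_le_sum fun j _ => ?_
  rw [mul_left_comm, ← exp_add]
  refine mul_le_mul_of_nonneg_left (exp_le_exp.2 ?_) (hp j)
  linarith [mul_le_mul_of_nonneg_right (hq j) (sub_nonneg.2 hyz)]

variable {τ σ : ι → ℝ → ℝ} {x : ℝ → ℝ} {t y z : ℝ}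

lemma delayedBirth_nonneg (hp : ∀ j, 0 ≤ p j) (hx : ∀ j, 0 ≤ x (t - τ j t)) :
    0 ≤ delayedBirth p a τ σ x t :=
  Finset.sum_nonneg fun j _ => mul_nonneg (mul_nonneg (hp j) (hx j)) (exp_pos _).le

lemma delayedBirth_le (hp : ∀ j, 0 ≤ p j) (ha : ∀ j, 0 ≤ a j) (hy : 0 ≤ y)
    (hτ : ∀ j, x (t - τ j t) ≤ y) (hσ : ∀ j, z ≤ x (t - σ j t)) :
    delayedBirth p a τ σ x t ≤ y * perCapitaBirth p a z := by
  unfold perCapitaBirth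
  rw [Finset.mul_sum]
  refine Finset.sum_le_sum fun j _ => ?_
  rw [← mul_assoc, mul_comm y]
  exact mul_le_mul (mul_le_mul_of_nonneg_left (hτ j) (hp j))
    (exp_le_exp.2 (mul_le_mul_of_nonpos_left (hσ j) (neg_nonpos.2 (ha j)))) (exp_pos _).le
    (mul_nonneg (hp j) hy)

lemma le_delayedBirth (hp : ∀ j, 0 ≤ p j) (ha : ∀ j, 0 ≤ a j) (hy : 0 ≤ y)
    (hτ : ∀ j, y ≤ x (t - τ j t)) (hσ : ∀ j, x (t - σ j t) ≤ z) :
    y * perCapitaBirth p a z ≤ delayedBirth p a τ σ x t := by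
  unfold perCapitaBirth
  rw [Finset.mul_sum]
  refine Finset.sum_le_sum fun j _ => ?_
  rw [← mul_assoc, mul_comm y]
  exact mul_le_mul (mul_le_mul_of_nonneg_left (hτ j) (hp j))
    (exp_le_exp.2 (mul_le_mul_of_nonpos_left (hσ j) (neg_nonpos.2 (ha j)))) (exp_pos _).le
    (mul_nonneg (hp j) (hy.trans (hτ j)))

lemma exists_lt_of_mul_perCapitaBirth_lt (hp : ∀ j, 0 ≤ p j) (ha : ∀ j, 0 ≤ a j) (hy : 0 ≤ y)
    (hτ : ∀ j, x (t - τ j t) ≤ y) (hlt : y * perCapitaBirth p a z < delayedBirth p a τ σ x t) :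
    ∃ j, x (t - σ j t) < z := by
  contrapose! hlt
  exact delayedBirth_le hp ha hy hτ hlt

lemma exists_gt_of_lt_mul_perCapitaBirth (hp : ∀ j, 0 ≤ p j) (ha : ∀ j, 0 ≤ a j) (hy : 0 ≤ y)
    (hτ : ∀ j, y ≤ x (t - τ j t)) (hlt : delayedBirth p a τ σ x t < y * perCapitaBirth p a z) :
    ∃ j, z < x (t - σ j t) := by
  contrapose! hlt
  exact le_delayedBirth hp ha hy hτ hlt

end BirthTerms

/-- A solution of the Nicholson equation with admissible initial data, together with the standing
assumptions on the coefficients. The bounds on the data enter as parameters: the delays take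
values in `[0, T]` and the coefficient `β` in `[b, B]`. -/
structure NicholsonTrajectory {ι : Type*} [Fintype ι] (p a : ι → ℝ) (δ t₀ T b B : ℝ) (β : ℝ → ℝ)
    (τ σ : ι → ℝ → ℝ) (x : ℝ → ℝ) : Prop where
  p_pos : ∀ j, 0 < p j
  a_pos : ∀ j, 0 < a j
  δ_pos : 0 < δ
  b_pos : 0 < b
  T_nonneg : 0 ≤ T
  continuousOn_β : ContinuousOn β (Ici t₀)
  le_β : ∀ t ≥ t₀, b ≤ β t
  β_le : ∀ t ≥ t₀, β t ≤ B
  τ_mem : ∀ j, ∀ t ≥ t₀, τ j t ∈ Icc 0 T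
  σ_mem : ∀ j, ∀ t ≥ t₀, σ j t ∈ Icc 0 T
  continuousOn : ContinuousOn x (Ici (t₀ - T))
  hasDerivAt : ∀ t > t₀, HasDerivAt x (β t * (delayedBirth p a τ σ x t - δ * x t)) t
  nonneg_history : ∀ t ∈ Ico (t₀ - T) t₀, 0 ≤ x t
  pos_initial : 0 < x t₀

namespace NicholsonTrajectory

variable {ι : Type*} [Fintype ι] {p a : ι → ℝ} {δ t₀ T b B : ℝ} {β : ℝ → ℝ} {τ σ : ι → ℝ → ℝ}
  {x : ℝ → ℝ} {u v : ℝ}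

section Positivity

lemma p_nonneg (h : NicholsonTrajectory p a δ t₀ T b B β τ σ x) (j : ι) : 0 ≤ p j :=
  (h.p_pos j).le

lemma a_nonneg (h : NicholsonTrajectory p a δ t₀ T b B β τ σ x) (j : ι) : 0 ≤ a j :=
  (h.a_pos j).le

lemma β_pos (h : NicholsonTrajectory p a δ t₀ T b B β τ σ x) {t : ℝ} (ht : t₀ ≤ t) : 0 < β t :=
  h.b_pos.trans_le (h.le_β t ht)

lemma continuousOn_Icc (h : NicholsonTrajectory p a δ t₀ T b B β τ σ x) (hu : t₀ ≤ u) :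
    ContinuousOn x (Icc u v) :=
  h.continuousOn.mono fun _ hs => (sub_le_self _ h.T_nonneg).trans (hu.trans hs.1)

lemma continuousOn_β_Icc (h : NicholsonTrajectory p a δ t₀ T b B β τ σ x) (hu : t₀ ≤ u) :
    ContinuousOn β (Icc u v) :=
  h.continuousOn_β.mono fun _ hs => hu.trans hs.1

lemma integral_nonneg (h : NicholsonTrajectory p a δ t₀ T b B β τ σ x) (hu : t₀ ≤ u)
    (huv : u ≤ v) : 0 ≤ ∫ s in u..v, β s :=
  intervalIntegral.integral_nonneg huv fun _ hs => (h.β_pos (hu.trans hs.1)).le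

lemma integral_le (h : NicholsonTrajectory p a δ t₀ T b B β τ σ x) (hu : t₀ ≤ u) (huv : u ≤ v)
    (hvu : v ≤ u + T) : ∫ s in u..v, β s ≤ B * T := by
  have hB : 0 ≤ B := (h.β_pos le_rfl).le.trans (h.β_le t₀ le_rfl)
  calc ∫ s in u..v, β s ≤ ∫ _ in u..v, B :=
        intervalIntegral.integral_mono_on huv
          ((h.continuousOn_β_Icc hu).intervalIntegrable_of_Icc huv) intervalIntegrable_const
          fun s hs => h.β_le s (hu.trans hs.1)
    _ = B * (v - u) := by rw [intervalIntegral.integral_const, smul_eq_mul, mul_comm]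
    _ ≤ B * T := by gcongr; linarith

lemma mul_exp_neg_integral_le (h : NicholsonTrajectory p a δ t₀ T b B β τ σ x) (hu : t₀ ≤ u)
    (huv : u ≤ v) (hx : ∀ s ∈ Ico (t₀ - T) v, 0 ≤ x s) :
    x u * exp (-δ * ∫ s in u..v, β s) ≤ x v := by
  refine mul_exp_integral_le_of_le_deriv huv (h.continuousOn_Icc hu) (h.continuousOn_β_Icc hu)
    (fun s hs => h.hasDerivAt s (hu.trans_lt hs.1)) fun s hs => ?_
  have hs₀ : t₀ ≤ s := hu.trans hs.1.le
  have hN : 0 ≤ delayedBirth p a τ σ x s := delayedBirth_nonneg h.p_nonneg fun j =>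
    hx _ ⟨sub_le_sub hs₀ (h.τ_mem j s hs₀).2, (sub_le_self _ (h.τ_mem j s hs₀).1).trans_lt hs.2⟩
  linarith [mul_nonneg (h.β_pos hs₀).le hN]

lemma pos (h : NicholsonTrajectory p a δ t₀ T b B β τ σ x) {t : ℝ} (ht : t₀ ≤ t) : 0 < x t := by
  by_contra! hxt
  have hclosed : IsCompact (Icc t₀ t ∩ x ⁻¹' Iic 0) :=
    isCompact_Icc.of_isClosed_subset
      ((h.continuousOn_Icc le_rfl).preimage_isClosed_of_isClosed isClosed_Icc isClosed_Iic)
      inter_subset_left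
  obtain ⟨v, ⟨hv, hxv⟩, hfirst⟩ := hclosed.exists_isLeast ⟨t, right_mem_Icc.2 ht, hxt⟩
  have hbefore : ∀ s ∈ Ico (t₀ - T) v, 0 ≤ x s := fun s hs => by
    rcases lt_or_ge s t₀ with hs₀ | hs₀
    · exact h.nonneg_history s ⟨hs.1, hs₀⟩
    · by_contra! hxs
      exact hs.2.not_ge (hfirst ⟨⟨hs₀, hs.2.le.trans hv.2⟩, hxs.le⟩)
  exact ((mul_pos h.pos_initial (exp_pos _)).trans_le
    (h.mul_exp_neg_integral_le le_rfl hv.1 hbefore)).not_ge hxv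

lemma nonneg (h : NicholsonTrajectory p a δ t₀ T b B β τ σ x) {t : ℝ} (ht : t₀ - T ≤ t) :
    0 ≤ x t := by
  rcases lt_or_ge t t₀ with ht₀ | ht₀
  · exact h.nonneg_history t ⟨ht, ht₀⟩
  · exact (h.pos ht₀).le

end Positivity

section Harnack

lemma le_exp_mul_later (h : NicholsonTrajectory p a δ t₀ T b B β τ σ x) (hu : t₀ ≤ u)
    (huv : u ≤ v) (hvu : v ≤ u + T) : x u ≤ exp (δ * (B * T)) * x v := by
  have hdecay := h.mul_exp_neg_integral_le hu huv fun s hs => h.nonneg hs.1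
  rw [neg_mul, exp_neg, ← div_eq_mul_inv, div_le_iff₀' (exp_pos _)] at hdecay
  refine hdecay.trans (mul_le_mul_of_nonneg_right (exp_le_exp.2 ?_) (h.pos (hu.trans huv)).le)
  exact mul_le_mul_of_nonneg_left (h.integral_le hu huv hvu) h.δ_pos.le

lemma le_exp_mul_earlier (h : NicholsonTrajectory p a δ t₀ T b B β τ σ x) (hu : t₀ + T ≤ u)
    (huv : u ≤ v) (hvu : v ≤ u + T) :
    x v ≤ exp (exp (δ * (B * T)) * perCapitaBirth p a 0 * (B * T)) * x u := by
  have hu₀ : t₀ ≤ u := (le_add_of_nonneg_right h.T_nonneg).trans hu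
  set k := exp (δ * (B * T)) * perCapitaBirth p a 0
  have hk : 0 ≤ k := mul_nonneg (exp_pos _).le (perCapitaBirth_nonneg h.p_nonneg 0)
  have hgrowth : x v ≤ x u * exp (k * ∫ s in u..v, β s) := by
    refine le_mul_exp_integral_of_deriv_le huv (h.continuousOn_Icc hu₀) (h.continuousOn_β_Icc hu₀)
      (fun s hs => h.hasDerivAt s (hu₀.trans_lt hs.1)) fun s hs => ?_
    have hs₀ : t₀ ≤ s := hu₀.trans hs.1.le
    have hN : delayedBirth p a τ σ x s ≤ exp (δ * (B * T)) * x s * perCapitaBirth p a 0 := by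
      refine delayedBirth_le h.p_nonneg h.a_nonneg (mul_pos (exp_pos _) (h.pos hs₀)).le
        (fun j => ?_) fun j => h.nonneg (sub_le_sub hs₀ (h.σ_mem j s hs₀).2)
      have hτ := h.τ_mem j s hs₀
      exact h.le_exp_mul_later (by linarith [hτ.2, hs.1]) (by linarith [hτ.1])
        (by linarith [hτ.2])
    calc β s * (delayedBirth p a τ σ x s - δ * x s)
        ≤ β s * (exp (δ * (B * T)) * x s * perCapitaBirth p a 0) :=
          mul_le_mul_of_nonneg_left
            ((sub_le_self _ (mul_pos h.δ_pos (h.pos hs₀)).le).trans hN) (h.β_pos hs₀).le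
      _ = k * β s * x s := by ring
  rw [mul_comm (exp _)]
  refine hgrowth.trans (mul_le_mul_of_nonneg_left (exp_le_exp.2 ?_) (h.pos hu₀).le)
  exact mul_le_mul_of_nonneg_left (h.integral_le hu₀ huv hvu) hk

lemma exists_harnack (h : NicholsonTrajectory p a δ t₀ T b B β τ σ x) :
    ∃ C > 0, ∀ u ≥ t₀ + T, ∀ v ≥ t₀ + T, |u - v| ≤ T → x u ≤ C * x v := by
  refine ⟨max (exp (δ * (B * T))) (exp (exp (δ * (B * T)) * perCapitaBirth p a 0 * (B * T))),
    lt_max_of_lt_left (exp_pos _), fun u hu v hv hdist => ?_⟩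
  have hT := h.T_nonneg
  have hxv : 0 ≤ x v := (h.pos (by linarith)).le
  obtain ⟨hlow, hup⟩ := abs_le.1 hdist
  rcases le_total u v with huv | hvu
  · exact (h.le_exp_mul_later (by linarith) huv (by linarith)).trans
      (mul_le_mul_of_nonneg_right (le_max_left _ _) hxv)
  · exact (h.le_exp_mul_earlier hv hvu (by linarith)).trans
      (mul_le_mul_of_nonneg_right (le_max_right _ _) hxv)

end Harnack

section Bounds

variable {c : ℝ}

lemma exists_le_of_perCapitaBirth_lt (h : NicholsonTrajectory p a δ t₀ T b B β τ σ x)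
    (hc : perCapitaBirth p a c < δ) : ∃ R, ∀ t ≥ t₀ + T, x t ≤ R := by
  have hT := h.T_nonneg
  obtain ⟨C, hC, hharnack⟩ := h.exists_harnack
  obtain ⟨r, -, hr⟩ := exists_forall_le_max_of_isMaxOn_Icc (f := x) (a := t₀ + T)
    (S := t₀ + T + T) (H := C * c) (le_add_of_nonneg_right hT)
    (h.continuousOn.mono (Ici_subset_Ici.2 (by linarith))) fun t ht hmax => by
      have ht₀ : t₀ < t := by linarith
      have hxt := h.pos ht₀.le
      have hd := nonneg_of_hasDerivAt_of_isMaxOn_Icc (by linarith) (h.hasDerivAt t ht₀) hmax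
      have hN : δ * x t ≤ delayedBirth p a τ σ x t :=
        sub_nonneg.1 (nonneg_of_mul_nonneg_right hd (h.β_pos ht₀.le))
      have hτ : ∀ j, x (t - τ j t) ≤ x t := fun j => by
        have := h.τ_mem j t ht₀.le
        exact hmax ⟨by linarith [this.2], sub_le_self _ this.1⟩
      obtain ⟨j, hj⟩ := exists_lt_of_mul_perCapitaBirth_lt (z := c) h.p_nonneg h.a_nonneg hxt.le hτ
        (by linarith [mul_lt_mul_of_pos_left hc hxt])
      have hσ := h.σ_mem j t ht₀.le
      exact (hharnack t (by linarith) (t - σ j t) (by linarith [hσ.2])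
        (by rw [sub_sub_cancel, abs_of_nonneg hσ.1]; exact hσ.2)).trans
        (mul_le_mul_of_nonneg_left hj.le hC.le)
  exact ⟨_, hr⟩

lemma exists_pos_le_of_lt_perCapitaBirth (h : NicholsonTrajectory p a δ t₀ T b B β τ σ x)
    (hc₀ : 0 < c) (hc : δ < perCapitaBirth p a c) : ∃ R > 0, ∀ t ≥ t₀ + T, R ≤ x t := by
  have hT := h.T_nonneg
  obtain ⟨C, hC, hharnack⟩ := h.exists_harnack
  obtain ⟨r, hr, hle⟩ := exists_forall_le_max_of_isMaxOn_Icc (f := -x) (a := t₀ + T)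
    (S := t₀ + T + T) (H := -(c / C)) (le_add_of_nonneg_right hT)
    (h.continuousOn.mono (Ici_subset_Ici.2 (by linarith))).neg fun t ht hmax => by
      have ht₀ : t₀ < t := by linarith
      have hxt := h.pos ht₀.le
      have hd := nonneg_of_hasDerivAt_of_isMaxOn_Icc (by linarith) (h.hasDerivAt t ht₀).neg hmax
      have hN : delayedBirth p a τ σ x t ≤ δ * x t := by
        rw [← mul_neg] at hd
        linarith [nonneg_of_mul_nonneg_right hd (h.β_pos ht₀.le)]
      have hτ : ∀ j, x t ≤ x (t - τ j t) := fun j => by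
        have := h.τ_mem j t ht₀.le
        exact neg_le_neg_iff.1 (hmax ⟨by linarith [this.2], sub_le_self _ this.1⟩)
      obtain ⟨j, hj⟩ := exists_gt_of_lt_mul_perCapitaBirth (z := c) h.p_nonneg h.a_nonneg hxt.le hτ
        (by linarith [mul_lt_mul_of_pos_left hc hxt])
      have hσ := h.σ_mem j t ht₀.le
      have hCt := hharnack (t - σ j t) (by linarith [hσ.2]) t (by linarith)
        (by rw [sub_sub_cancel_left, abs_neg, abs_of_nonneg hσ.1]; exact hσ.2)
      exact neg_le_neg ((div_le_iff₀' hC).2 (hj.le.trans hCt))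
  refine ⟨min (x r) (c / C), lt_min (h.pos (by linarith [hr.1])) (by positivity), fun t ht => ?_⟩
  simpa only [Pi.neg_apply, max_neg_neg, neg_le_neg_iff] using hle t ht

end Bounds

section Fluctuation

variable {K c κ ε : ℝ}

lemma isBoundedUnder_ge (h : NicholsonTrajectory p a δ t₀ T b B β τ σ x) :
    IsBoundedUnder (· ≥ ·) atTop x :=
  isBoundedUnder_of_eventually_ge ((eventually_ge_atTop t₀).mono fun _ ht => (h.pos ht).le)

lemma isBoundedUnder_le [Nonempty ι] (h : NicholsonTrajectory p a δ t₀ T b B β τ σ x)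
    (hK : perCapitaBirth p a K = δ) : IsBoundedUnder (· ≤ ·) atTop x := by
  obtain ⟨R, hR⟩ := h.exists_le_of_perCapitaBirth_lt
    (hK ▸ strictAnti_perCapitaBirth h.p_pos h.a_pos (lt_add_one K))
  exact isBoundedUnder_of_eventually_le ((eventually_ge_atTop _).mono hR)

lemma liminf_pos [Nonempty ι] (h : NicholsonTrajectory p a δ t₀ T b B β τ σ x) (hK₀ : 0 < K)
    (hK : perCapitaBirth p a K = δ) : 0 < liminf x atTop := by
  obtain ⟨R, hR₀, hR⟩ := h.exists_pos_le_of_lt_perCapitaBirth (half_pos hK₀)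
    (hK ▸ strictAnti_perCapitaBirth h.p_pos h.a_pos (half_lt_self hK₀))
  exact hR₀.trans_le (le_liminf_of_le (h.isBoundedUnder_le hK).isCoboundedUnder_ge
    ((eventually_ge_atTop _).mono hR))

lemma liminf_le_limsup [Nonempty ι] (h : NicholsonTrajectory p a δ t₀ T b B β τ σ x)
    (hK : perCapitaBirth p a K = δ) : liminf x atTop ≤ limsup x atTop :=
  Filter.liminf_le_limsup (h.isBoundedUnder_le hK) h.isBoundedUnder_ge

lemma eventually_forall_le_limsup_add [Nonempty ι]
    (h : NicholsonTrajectory p a δ t₀ T b B β τ σ x) (hK : perCapitaBirth p a K = δ) (hε : 0 < ε)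
    (R : ℝ) : ∀ᶠ t in atTop, ∀ s, t - R ≤ s → x s ≤ limsup x atTop + ε :=
  eventually_forall_sub_le ((eventually_lt_of_limsup_lt (lt_add_of_pos_right _ hε)
    (h.isBoundedUnder_le hK)).mono fun _ => le_of_lt) R

lemma eventually_forall_liminf_sub_le (h : NicholsonTrajectory p a δ t₀ T b B β τ σ x)
    (hε : 0 < ε) (R : ℝ) : ∀ᶠ t in atTop, ∀ s, t - R ≤ s → liminf x atTop - ε ≤ x s :=
  eventually_forall_sub_le ((eventually_lt_of_lt_liminf (sub_lt_self _ hε)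
    h.isBoundedUnder_ge).mono fun _ => le_of_lt) R

/-- Along a sequence of times near the limsup the derivative is almost nonnegative, so births almost
balance deaths; this is impossible if all crowding delays read values above `κ > K`. -/
lemma frequently_le_and_exists_lt [Nonempty ι] (h : NicholsonTrajectory p a δ t₀ T b B β τ σ x)
    (hK₀ : 0 < K) (hK : perCapitaBirth p a K = δ) (hc : c < limsup x atTop) (hκ : K < κ) :
    ∃ᶠ t in atTop, c ≤ x t ∧ ∃ j, x (t - σ j t) < κ := by
  set M := limsup x atTop
  have hM : 0 < M := (h.liminf_pos hK₀ hK).trans_le (h.liminf_le_limsup hK)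
  have hFκ : perCapitaBirth p a κ < δ := hK ▸ strictAnti_perCapitaBirth h.p_pos h.a_pos hκ
  have hsmall : ∀ᶠ ε in 𝓝[>] (0 : ℝ), c < M - ε ∧
      (M + ε) * perCapitaBirth p a κ < δ * (M - ε) - ε := by
    refine nhdsWithin_le_nhds (Filter.Eventually.and ?_ ?_)
    · exact (by fun_prop : ContinuousAt (fun ε => M - ε) 0).eventually_const_lt (by simpa)
    · refine ContinuousAt.eventually_lt (by fun_prop) (by fun_prop) ?_
      simpa [mul_comm] using mul_lt_mul_of_pos_right hFκ hM
  obtain ⟨ε, ⟨hεc, hεκ⟩, hε⟩ := (hsmall.and self_mem_nhdsWithin).exists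
  have hfluct := frequently_le_and_neg_lt_deriv (c := M - ε) (mul_pos hε h.b_pos)
    ((eventually_gt_atTop t₀).mono h.hasDerivAt) h.isBoundedUnder_ge
    (frequently_lt_of_lt_limsup h.isBoundedUnder_ge.isCoboundedUnder_le (sub_lt_self M hε))
  refine (hfluct.and_eventually ((eventually_ge_atTop t₀).and
    (h.eventually_forall_le_limsup_add hK hε T))).mono ?_
  rintro t ⟨⟨hxt, hslope⟩, ht, hle⟩
  refine ⟨hεc.le.trans hxt, exists_lt_of_mul_perCapitaBirth_lt h.p_nonneg h.a_nonneg
    (add_pos hM hε).le (fun j => hle _ (sub_le_sub_left (h.τ_mem j t ht).2 t)) ?_⟩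
  have hbalance : -ε < delayedBirth p a τ σ x t - δ * x t :=
    neg_lt_of_neg_mul_lt_mul hε.le (h.β_pos ht) (h.le_β t ht) hslope
  linarith [mul_le_mul_of_nonneg_left hxt h.δ_pos.le]

lemma frequently_ge_and_exists_gt [Nonempty ι] (h : NicholsonTrajectory p a δ t₀ T b B β τ σ x)
    (hK₀ : 0 < K) (hK : perCapitaBirth p a K = δ) (hc : liminf x atTop < c) (hκ : κ < K) :
    ∃ᶠ t in atTop, x t ≤ c ∧ ∃ j, κ < x (t - σ j t) := by
  set l := liminf x atTop
  have hl : 0 < l := h.liminf_pos hK₀ hK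
  have hFκ : δ < perCapitaBirth p a κ := hK ▸ strictAnti_perCapitaBirth h.p_pos h.a_pos hκ
  have hsmall : ∀ᶠ ε in 𝓝[>] (0 : ℝ), (l + ε < c ∧ 0 < l - ε) ∧
      δ * (l + ε) + ε < (l - ε) * perCapitaBirth p a κ := by
    refine nhdsWithin_le_nhds (Filter.Eventually.and (Filter.Eventually.and ?_ ?_) ?_)
    · exact (by fun_prop : ContinuousAt (fun ε => l + ε) 0).eventually_lt_const (by simpa)
    · exact (by fun_prop : ContinuousAt (fun ε => l - ε) 0).eventually_const_lt (by simpa)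
    · refine ContinuousAt.eventually_lt (by fun_prop) (by fun_prop) ?_
      simpa [mul_comm] using mul_lt_mul_of_pos_right hFκ hl
  obtain ⟨ε, ⟨⟨hεc, hεl⟩, hεκ⟩, hε⟩ := (hsmall.and self_mem_nhdsWithin).exists
  have hfluct := frequently_le_and_neg_lt_deriv (f := -x) (c := -(l + ε)) (mul_pos hε h.b_pos)
    ((eventually_gt_atTop t₀).mono fun t ht => (h.hasDerivAt t ht).neg)
    (isBoundedUnder_ge_neg.2 (h.isBoundedUnder_le hK))
    ((frequently_lt_of_liminf_lt (h.isBoundedUnder_le hK).isCoboundedUnder_ge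
      (lt_add_of_pos_right l hε)).mono fun _ => neg_lt_neg)
  refine (hfluct.and_eventually ((eventually_ge_atTop t₀).and
    (h.eventually_forall_liminf_sub_le hε T))).mono ?_
  rintro t ⟨⟨hxt, hslope⟩, ht, hle⟩
  replace hxt : x t ≤ l + ε := neg_le_neg_iff.1 hxt
  refine ⟨hxt.trans hεc.le, exists_gt_of_lt_mul_perCapitaBirth h.p_nonneg h.a_nonneg
    hεl.le (fun j => hle _ (sub_le_sub_left (h.τ_mem j t ht).2 t)) ?_⟩
  have hbalance := neg_lt_of_neg_mul_lt_mul hε.le (h.β_pos ht) (h.le_β t ht)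
    (hslope.trans_eq (mul_neg _ _).symm)
  linarith [mul_le_mul_of_nonneg_left hxt h.δ_pos.le]

lemma liminf_le_equilibrium [Nonempty ι] (h : NicholsonTrajectory p a δ t₀ T b B β τ σ x)
    (hK₀ : 0 < K) (hK : perCapitaBirth p a K = δ) : liminf x atTop ≤ K := by
  by_contra! hKl
  obtain ⟨κ, hKκ, hκl⟩ := exists_between hKl
  have hκ := h.eventually_forall_liminf_sub_le (sub_pos.2 hκl) T
  rw [sub_sub_cancel] at hκ
  obtain ⟨t, ⟨-, j, hj⟩, ht, hle⟩ := ((h.frequently_le_and_exists_lt hK₀ hK (sub_one_lt _)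
    hKκ).and_eventually ((eventually_ge_atTop t₀).and hκ)).exists
  exact hj.not_ge (hle _ (sub_le_sub_left (h.σ_mem j t ht).2 t))

lemma equilibrium_le_limsup [Nonempty ι] (h : NicholsonTrajectory p a δ t₀ T b B β τ σ x)
    (hK₀ : 0 < K) (hK : perCapitaBirth p a K = δ) : K ≤ limsup x atTop := by
  by_contra! hMK
  obtain ⟨κ, hMκ, hκK⟩ := exists_between hMK
  have hκ := h.eventually_forall_le_limsup_add hK (sub_pos.2 hMκ) T
  rw [add_sub_cancel] at hκ
  obtain ⟨t, ⟨-, j, hj⟩, ht, hle⟩ := ((h.frequently_ge_and_exists_gt hK₀ hK (lt_add_one _)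
    hκK).and_eventually ((eventually_ge_atTop t₀).and hκ)).exists
  exact hj.not_ge (hle _ (sub_le_sub_left (h.σ_mem j t ht).2 t))

end Fluctuation

section Convergence

variable {K q ζ ε : ℝ}

lemma eventually_forall_integral_le (h : NicholsonTrajectory p a δ t₀ T b B β τ σ x)
    (hζ : ∀ j, limsup (fun t => ∫ s in (t - σ j t)..t, β s) atTop ≤ ζ) (hε : 0 < ε) :
    ∀ᶠ t in atTop, ∀ j, ∫ s in (t - σ j t)..t, β s ≤ ζ + ε := by
  refine eventually_all.2 fun j => ?_
  have hbdd : IsBoundedUnder (· ≤ ·) atTop fun t => ∫ s in (t - σ j t)..t, β s := by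
    refine isBoundedUnder_of_eventually_le (a := B * T)
      ((eventually_ge_atTop (t₀ + T)).mono fun t ht => ?_)
    have hσ := h.σ_mem j t ((le_add_of_nonneg_right h.T_nonneg).trans ht)
    exact h.integral_le (by linarith [hσ.2]) (sub_le_self _ hσ.1) (by linarith [hσ.2])
  exact (eventually_lt_of_limsup_lt ((hζ j).trans_lt (lt_add_of_pos_right ζ hε)) hbdd).mono
    fun _ => le_of_lt

lemma nonneg_of_limsup_integral_le [Nonempty ι]
    (h : NicholsonTrajectory p a δ t₀ T b B β τ σ x)
    (hζ : ∀ j, limsup (fun t => ∫ s in (t - σ j t)..t, β s) atTop ≤ ζ) : 0 ≤ ζ := by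
  refine le_of_forall_pos_le_add fun ε hε => ?_
  obtain ⟨t, hle, ht⟩ := ((h.eventually_forall_integral_le hζ hε).and
    (eventually_ge_atTop (t₀ + T))).exists
  have j := Classical.arbitrary ι
  have hσ := h.σ_mem j t ((le_add_of_nonneg_right h.T_nonneg).trans ht)
  exact (h.integral_nonneg (by linarith [hσ.2]) (sub_le_self _ hσ.1)).trans (hle j)

lemma limsup_sub_le_add [Nonempty ι] (h : NicholsonTrajectory p a δ t₀ T b B β τ σ x)
    (hK₀ : 0 < K) (hK : perCapitaBirth p a K = δ)
    (hζ : ∀ j, limsup (fun t => ∫ s in (t - σ j t)..t, β s) atTop ≤ ζ) (hε : 0 < ε) :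
    limsup x atTop - ε - (K + ε) ≤
      ((limsup x atTop + ε) * perCapitaBirth p a (liminf x atTop - ε) / δ - (limsup x atTop - ε)) *
        (exp (δ * (ζ + ε)) - 1) := by
  set M := limsup x atTop
  set l := liminf x atTop
  have hM : 0 < M := hK₀.trans_le (h.equilibrium_le_limsup hK₀ hK)
  have hF : δ < perCapitaBirth p a (l - ε) := hK ▸ strictAnti_perCapitaBirth h.p_pos h.a_pos
    (by linarith [h.liminf_le_equilibrium hK₀ hK])
  obtain ⟨t, ⟨hxt, j, hj⟩, ht, hsup, hinf, hint⟩ := ((h.frequently_le_and_exists_lt hK₀ hK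
    (sub_lt_self M hε) (lt_add_of_pos_right K hε)).and_eventually
    ((eventually_gt_atTop (t₀ + T)).and ((h.eventually_forall_le_limsup_add hK hε (T + T)).and
      ((h.eventually_forall_liminf_sub_le hε (T + T)).and
        (h.eventually_forall_integral_le hζ hε))))).exists
  have hσ := h.σ_mem j t (by linarith [h.T_nonneg])
  have hu : t₀ ≤ t - σ j t := by linarith [hσ.2]
  refine sub_le_mul_of_relaxation_le (sub_le_self _ hσ.1) (h.continuousOn_Icc hu)
    (h.continuousOn_β_Icc hu) (fun s hs => (h.β_pos (hu.trans hs.1.le)).le)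
    (fun s hs => h.hasDerivAt s (hu.trans_lt hs.1)) (fun s hs => ?_) hj.le hxt ?_
    (exp_le_exp.2 (mul_le_mul_of_nonneg_left (hint j) h.δ_pos.le))
  · rw [mul_div_cancel₀ _ h.δ_pos.ne']
    have hs₀ : t₀ ≤ s := hu.trans hs.1.le
    exact delayedBirth_le h.p_nonneg h.a_nonneg (by positivity)
      (fun i => hsup _ (by linarith [(h.τ_mem i s hs₀).2, hs.1, hσ.2]))
      fun i => hinf _ (by linarith [(h.σ_mem i s hs₀).2, hs.1, hσ.2])
  · rw [le_div_iff₀ h.δ_pos]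
    exact mul_le_mul (by linarith) hF.le h.δ_pos.le (by positivity)

lemma sub_liminf_le_add [Nonempty ι] (h : NicholsonTrajectory p a δ t₀ T b B β τ σ x)
    (hK₀ : 0 < K) (hK : perCapitaBirth p a K = δ)
    (hζ : ∀ j, limsup (fun t => ∫ s in (t - σ j t)..t, β s) atTop ≤ ζ) (hε : 0 < ε)
    (hεl : ε ≤ liminf x atTop) :
    K - ε - (liminf x atTop + ε) ≤
      (liminf x atTop + ε - (liminf x atTop - ε) * perCapitaBirth p a (limsup x atTop + ε) / δ) *
        (exp (δ * (ζ + ε)) - 1) := by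
  set M := limsup x atTop
  set l := liminf x atTop
  have hF : perCapitaBirth p a (M + ε) < δ := hK ▸ strictAnti_perCapitaBirth h.p_pos h.a_pos
    (by linarith [h.equilibrium_le_limsup hK₀ hK])
  obtain ⟨t, ⟨hxt, j, hj⟩, ht, hsup, hinf, hint⟩ := ((h.frequently_ge_and_exists_gt hK₀ hK
    (lt_add_of_pos_right l hε) (sub_lt_self K hε)).and_eventually
    ((eventually_gt_atTop (t₀ + T)).and ((h.eventually_forall_le_limsup_add hK hε (T + T)).and
      ((h.eventually_forall_liminf_sub_le hε (T + T)).and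
        (h.eventually_forall_integral_le hζ hε))))).exists
  have hσ := h.σ_mem j t (by linarith [h.T_nonneg])
  have hu : t₀ ≤ t - σ j t := by linarith [hσ.2]
  refine sub_le_mul_of_le_relaxation (sub_le_self _ hσ.1) (h.continuousOn_Icc hu)
    (h.continuousOn_β_Icc hu) (fun s hs => (h.β_pos (hu.trans hs.1.le)).le)
    (fun s hs => h.hasDerivAt s (hu.trans_lt hs.1)) (fun s hs => ?_) hj.le hxt ?_
    (exp_le_exp.2 (mul_le_mul_of_nonneg_left (hint j) h.δ_pos.le))
  · rw [mul_div_cancel₀ _ h.δ_pos.ne']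
    have hs₀ : t₀ ≤ s := hu.trans hs.1.le
    exact le_delayedBirth h.p_nonneg h.a_nonneg (sub_nonneg.2 hεl)
      (fun i => hinf _ (by linarith [(h.τ_mem i s hs₀).2, hs.1, hσ.2]))
      fun i => hsup _ (by linarith [(h.σ_mem i s hs₀).2, hs.1, hσ.2])
  · rw [div_le_iff₀ h.δ_pos]
    exact mul_le_mul (by linarith) hF.le (perCapitaBirth_nonneg h.p_nonneg _) (by linarith)

lemma limsup_sub_equilibrium_le [Nonempty ι] (h : NicholsonTrajectory p a δ t₀ T b B β τ σ x)
    (hK₀ : 0 < K) (hK : perCapitaBirth p a K = δ)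
    (hζ : ∀ j, limsup (fun t => ∫ s in (t - σ j t)..t, β s) atTop ≤ ζ) :
    limsup x atTop - K ≤
      limsup x atTop * (perCapitaBirth p a (liminf x atTop) / δ - 1) * (exp (δ * ζ) - 1) := by
  set M := limsup x atTop
  set l := liminf x atTop
  have hleft : Tendsto (fun ε => M - ε - (K + ε)) (𝓝[>] 0) (𝓝 (M - K)) :=
    ((by fun_prop : Continuous fun ε => M - ε - (K + ε)).tendsto' 0 _ (by simp)).mono_left
      nhdsWithin_le_nhds
  have hright : Tendsto (fun ε => ((M + ε) * perCapitaBirth p a (l - ε) / δ - (M - ε)) *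
      (exp (δ * (ζ + ε)) - 1)) (𝓝[>] 0)
      (𝓝 (M * (perCapitaBirth p a l / δ - 1) * (exp (δ * ζ) - 1))) :=
    ((by fun_prop : Continuous fun ε => ((M + ε) * perCapitaBirth p a (l - ε) / δ - (M - ε)) *
      (exp (δ * (ζ + ε)) - 1)).tendsto' 0 _ (by
        simp only [add_zero, sub_zero]
        ring)).mono_left nhdsWithin_le_nhds
  exact le_of_tendsto_of_tendsto hleft hright (eventually_nhdsWithin_of_forall fun ε hε =>
    h.limsup_sub_le_add hK₀ hK hζ hε)

lemma equilibrium_sub_liminf_le [Nonempty ι] (h : NicholsonTrajectory p a δ t₀ T b B β τ σ x)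
    (hK₀ : 0 < K) (hK : perCapitaBirth p a K = δ)
    (hζ : ∀ j, limsup (fun t => ∫ s in (t - σ j t)..t, β s) atTop ≤ ζ) :
    K - liminf x atTop ≤
      liminf x atTop * (1 - perCapitaBirth p a (limsup x atTop) / δ) * (exp (δ * ζ) - 1) := by
  have hl := h.liminf_pos hK₀ hK
  set M := limsup x atTop
  set l := liminf x atTop
  have hleft : Tendsto (fun ε => K - ε - (l + ε)) (𝓝[>] 0) (𝓝 (K - l)) :=
    ((by fun_prop : Continuous fun ε => K - ε - (l + ε)).tendsto' 0 _ (by simp)).mono_left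
      nhdsWithin_le_nhds
  have hright : Tendsto (fun ε => (l + ε - (l - ε) * perCapitaBirth p a (M + ε) / δ) *
      (exp (δ * (ζ + ε)) - 1)) (𝓝[>] 0)
      (𝓝 (l * (1 - perCapitaBirth p a M / δ) * (exp (δ * ζ) - 1))) :=
    ((by fun_prop : Continuous fun ε => (l + ε - (l - ε) * perCapitaBirth p a (M + ε) / δ) *
      (exp (δ * (ζ + ε)) - 1)).tendsto' 0 _ (by
        simp only [add_zero, sub_zero]
        ring)).mono_left nhdsWithin_le_nhds
  refine le_of_tendsto_of_tendsto hleft hright ?_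
  filter_upwards [Ioc_mem_nhdsGT hl] with ε hε
  exact h.sub_liminf_le_add hK₀ hK hζ hε.1 hε.2

theorem tendsto_equilibrium [Nonempty ι] (h : NicholsonTrajectory p a δ t₀ T b B β τ σ x)
    (hK₀ : 0 < K) (hK : perCapitaBirth p a K = δ) (hq : ∀ j, a j ≤ q)
    (hζ : ∀ j, limsup (fun t => ∫ s in (t - σ j t)..t, β s) atTop ≤ ζ)
    (hE : q * K * (exp (δ * ζ) - 1) ≤ 1) : Tendsto x atTop (𝓝 K) := by
  have hδ := h.δ_pos
  have hl := h.liminf_pos hK₀ hK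
  have hlK := h.liminf_le_equilibrium hK₀ hK
  have hKM := h.equilibrium_le_limsup hK₀ hK
  have hM : 0 ≤ limsup x atTop := hK₀.le.trans hKM
  have hq₀ : 0 < q := (h.a_pos (Classical.arbitrary ι)).trans_le (hq _)
  have hE₀ : 0 ≤ exp (δ * ζ) - 1 :=
    sub_nonneg.2 (one_le_exp (mul_nonneg hδ.le (h.nonneg_of_limsup_integral_le hζ)))
  have hFl : perCapitaBirth p a (liminf x atTop) / δ ≤ exp (q * (K - liminf x atTop)) :=
    (div_le_iff₀ hδ).2 (hK ▸ perCapitaBirth_le_exp_mul h.p_nonneg hq hlK)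
  have hFM : exp (-(q * (limsup x atTop - K))) ≤ perCapitaBirth p a (limsup x atTop) / δ := by
    rw [exp_neg, inv_le_iff_one_le_mul₀' (exp_pos _), ← mul_div_assoc, one_le_div₀ hδ]
    exact hK ▸ perCapitaBirth_le_exp_mul h.p_nonneg hq hKM
  obtain ⟨hlim, hsup⟩ := eq_and_eq_of_exp_contraction hl hlK hKM hq₀ hE
    ((h.equilibrium_sub_liminf_le hK₀ hK hζ).trans (by gcongr))
    ((h.limsup_sub_equilibrium_le hK₀ hK hζ).trans (by gcongr))
  exact tendsto_of_liminf_eq_limsup hlim hsup (h.isBoundedUnder_le hK) h.isBoundedUnder_ge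

end Convergence

end NicholsonTrajectory

lemma NicholsonSolution.nicholsonTrajectory {m : ℕ} [Nonempty (Fin m)] {p a : Fin m → ℝ}
    {δ t₀ τbar b B : ℝ} {β : ℝ → ℝ} {τ σ : Fin m → ℝ → ℝ} {x : ℝ → ℝ}
    (hx : NicholsonSolution m p a δ t₀ τbar β τ σ x) (hp : ∀ j, 0 < p j) (ha : ∀ j, 0 < a j)
    (hδ : 0 < δ) (hb : 0 < b) (hβc : ContinuousOn β (Ici t₀)) (hbβ : ∀ t ≥ t₀, b ≤ β t)
    (hβB : ∀ t ≥ t₀, β t ≤ B) (hτ : ∀ j, ∀ t ≥ t₀, τ j t ∈ Icc 0 τbar)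
    (hσ : ∀ j, ∀ t ≥ t₀, σ j t ∈ Icc 0 τbar) :
    NicholsonTrajectory p a δ t₀ τbar b B β τ σ x where
  p_pos := hp
  a_pos := ha
  δ_pos := hδ
  b_pos := hb
  T_nonneg :=
    have hmem := hτ (Classical.arbitrary (Fin m)) t₀ le_rfl
    hmem.1.trans hmem.2
  continuousOn_β := hβc
  le_β := hbβ
  β_le := hβB
  τ_mem := hτ
  σ_mem := hσ
  continuousOn := hx.1
  hasDerivAt t ht := (hx.2.1 t ht.le).hasDerivAt (Ici_mem_nhds ht)
  nonneg_history t ht := hx.2.2.1 t ht.1 ht.2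
  pos_initial := hx.2.2.2

theorem nicholson_global_attractivity_general
    (m : ℕ) (p a : Fin m → ℝ) (hp : ∀ j, 0 < p j) (ha : ∀ j, 0 < a j) (δ : ℝ) (hδ : 0 < δ)
    (t₀ : ℝ) (β : ℝ → ℝ) (τ σ : Fin m → ℝ → ℝ) (hβc : ContinuousOn β (Ici t₀))
    (hτ0 : ∀ j, ∀ t ∈ Ici t₀, 0 ≤ τ j t) (hσ0 : ∀ j, ∀ t ∈ Ici t₀, 0 ≤ σ j t)
    (b : ℝ) (hbβ : b ∈ lowerBounds (β '' Ici t₀)) (hb : 0 < b)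
    (hβub : ∃ B, ∀ t ∈ Ici t₀, β t ≤ B) (τbar : ℝ)
    (hτbar : τbar ∈ upperBounds ((⋃ j, τ j '' Ici t₀) ∪ ⋃ j, σ j '' Ici t₀))
    (K : ℝ) (hK0 : 0 < K) (hK : ∑ j, p j * exp (-(a j) * K) = δ)
    (q : ℝ) (hq : q ∈ upperBounds (range a))
    (ζ : ℝ) (hζ : ζ ∈ upperBounds (range fun j =>
      limsup (fun t => ∫ s in (t - σ j t)..t, β s) atTop))
    (hH2 : q * K * (exp (δ * ζ) - 1) ≤ 1) :
    ∀ x : ℝ → ℝ, NicholsonSolution m p a δ t₀ τbar β τ σ x → Tendsto x atTop (𝓝 K) := by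
  intro x hx
  obtain ⟨B, hβB⟩ := hβub
  have hne : Nonempty (Fin m) := by
    by_contra hempty
    rw [not_nonempty_iff] at hempty
    exact hδ.ne (by simpa only [Finset.univ_eq_empty, Finset.sum_empty] using hK)
  have htraj : NicholsonTrajectory p a δ t₀ τbar b B β τ σ x :=
    hx.nicholsonTrajectory hp ha hδ hb hβc (fun t ht => hbβ (mem_image_of_mem β ht)) hβB
      (fun j t ht => ⟨hτ0 j t ht,
        hτbar (.inl (mem_iUnion_of_mem j (mem_image_of_mem (τ j) ht)))⟩)
      (fun j t ht => ⟨hσ0 j t ht,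
        hτbar (.inr (mem_iUnion_of_mem j (mem_image_of_mem (σ j) ht)))⟩)
  exact htraj.tendsto_equilibrium hK0 hK (fun j => hq (mem_range_self j))
    (fun j => hζ (mem_range_self j)) hH2

/- STATEMENT 10 (Theorem 3.3, main result): assume p := Σ_j p_j > δ, let K > 0 be
   the positive equilibrium, a⁺ := max_j a_j, a⁻ := min_j a_j,
   ζ_M := max_j limsup_{t→∞} ∫_{t−σ_j(t)}^t β(s) ds. If
   (H1) a⁺/a⁻ < 3/2 and (H2) a⁺K(e^{δζ_M} − 1) ≤ 1, then K is globally
   attractive: every solution with admissible initial data converges to K. -/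
theorem nicholson_global_attractivity
    (m : ℕ) (hm : 1 ≤ m) (p a : Fin m → ℝ)
    (hp : ∀ j, 0 < p j) (ha : ∀ j, 0 < a j) (δ : ℝ) (hδ : 0 < δ)
    (t₀ : ℝ) (β : ℝ → ℝ) (τ σ : Fin m → ℝ → ℝ)
    (hβc : ContinuousOn β (Set.Ici t₀))
    (hτc : ∀ j, ContinuousOn (τ j) (Set.Ici t₀))
    (hσc : ∀ j, ContinuousOn (σ j) (Set.Ici t₀))
    (hτ0 : ∀ j, ∀ t ∈ Set.Ici t₀, 0 ≤ τ j t)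
    (hσ0 : ∀ j, ∀ t ∈ Set.Ici t₀, 0 ≤ σ j t)
    (βminus : ℝ) (hβminus : IsGLB (β '' Set.Ici t₀) βminus) (hβmpos : 0 < βminus)
    (hβub : ∃ B, ∀ t ∈ Set.Ici t₀, β t ≤ B)
    (τbar : ℝ)
    (hτbar : IsLUB ((⋃ j, τ j '' Set.Ici t₀) ∪ ⋃ j, σ j '' Set.Ici t₀) τbar)
    -- p > δ and K is the positive equilibrium
    (hpδ : δ < ∑ j, p j)
    (K : ℝ) (hK0 : 0 < K) (hK : ∑ j, p j * Real.exp (-(a j) * K) = δ)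
    -- a⁺ := max_j a_j, a⁻ := min_j a_j
    (aplus aminus : ℝ)
    (haplus : IsGreatest (Set.range a) aplus)
    (haminus : IsLeast (Set.range a) aminus)
    -- ζ_M := max_j limsup_{t→∞} ∫_{t−σ_j(t)}^t β(s) ds
    (ζM : ℝ)
    (hζM : IsGreatest (Set.range fun j =>
      Filter.limsup (fun t => ∫ s in (t - σ j t)..t, β s) Filter.atTop) ζM)
    -- (H1) and (H2)
    (hH1 : aplus / aminus < 3 / 2)
    (hH2 : aplus * K * (Real.exp (δ * ζM) - 1) ≤ 1) :
    ∀ x : ℝ → ℝ, NicholsonSolution m p a δ t₀ τbar β τ σ x →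
      Filter.Tendsto x Filter.atTop (nhds K) := by
  exact nicholson_global_attractivity_general m p a hp ha δ hδ t₀ β τ σ hβc hτ0 hσ0 βminus hβminus.1
    hβmpos hβub τbar hτbar.1 K hK0 hK aplus haplus.2 ζM hζM.2 hH2
end

section
/- (Corollary 3.1.) Consider the Nicholson equation with m pairs of delays. Assume p := Σ_{j=1}^m p_j > δ, let a⁺ := max_j a_j, a⁻ := min_j a_j and ζ_M := max_{1≤j≤m} limsup_{t→∞} ∫_{t−σ_j(t)}^{t} β(s) ds. If (H1) a⁺/a⁻ < 3/2 and (H2*) (a⁺/a⁻)(e^{δζ_M} − 1)·log(p/δ) ≤ 1, then the positive equilibrium K (defined by Σ_j p_j e^{−a_j K} = δ) is globally attractive: every solution with admissible initial data converges to K as t → ∞. -/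
/-!
Write `g(k) = Σ_j p_j e^{-a_j k}`, a strictly decreasing function with `g(K) = δ`, and let `l ≤ L`
be the lower and upper limits of a solution `x`, which turns out to be bounded and bounded away from
`0`. Near a time at which `x` almost attains `L` its derivative is almost nonnegative, which forces
some delayed value `x(t - σ_j(t))` to be at most about `K`. Integrating `x' = β (F - δ x)` from
`t - σ_j(t)` to `t`, where the recruitment `F` is asymptotically at most
`L g(l) ≤ δ L e^{a⁺(K - l)}`, gives `L ≤ C + (K - C) e^{-δζ}` with `C = L e^{a⁺(K - l)}`, and
symmetrically a lower bound for `l`. If `a⁺ K (e^{δζ} - 1) ≤ 1`, which follows from (H2*) because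
`a⁻ K ≤ log(p / δ)`, these two inequalities become `1 / u - 1 / 2 < 1 / v + 1 / (a⁺ K)` and
`1 / v + 1 / 2 < 1 / u - 1 / (a⁺ K)` for `u = a⁺ (K - l)` and `v = a⁺ (L - K)`, provided both are
positive; these contradict each other, and the cases `l = K` and `L = K` are immediate.
-/

section GlobalAttractivity

open Filter Set Topology

section RealAnalysis

lemma inv_sub_half_lt_inv_exp_sub_one {u : ℝ} (hu : 0 < u) :
    u⁻¹ - 1 / 2 < (Real.exp u - 1)⁻¹ := by
  have hE : 0 < Real.exp u - 1 := by linarith [Real.add_one_lt_exp hu.ne']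
  have hlog : 2 * (Real.exp u - 1) / (Real.exp u - 1 + 2) < u := by
    simpa using Real.lt_log_one_add_of_pos hE
  have hinv : u⁻¹ < (2 * (Real.exp u - 1) / (Real.exp u - 1 + 2))⁻¹ :=
    inv_strictAnti₀ (by positivity) hlog
  have hsplit : (2 * (Real.exp u - 1) / (Real.exp u - 1 + 2))⁻¹ =
      (Real.exp u - 1)⁻¹ + 1 / 2 := by
    field_simp
    ring
  linarith

lemma eq_and_eq_of_mul_sub_le_exp {A K l L : ℝ} (hA : 0 < A) (hl : 0 < l) (hlK : l ≤ K)
    (hKL : K ≤ L) (hL : A * K * (L - K) ≤ L * Real.exp (A * (K - l)) - L)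
    (hl' : A * K * (K - l) ≤ l - l * Real.exp (A * (K - L))) : l = K ∧ L = K := by
  have hAK : 0 < A * K := mul_pos hA (hl.trans_le hlK)
  rcases hlK.eq_or_lt with rfl | hlK
  · simp only [sub_self, mul_zero, Real.exp_zero, mul_one] at hL
    exact ⟨rfl, by nlinarith⟩
  rcases hKL.eq_or_lt with rfl | hKL
  · simp only [sub_self, mul_zero, Real.exp_zero, mul_one] at hl'
    exact ⟨by nlinarith, rfl⟩
  exfalso
  have hKl : 0 < K - l := sub_pos.2 hlK
  have hLK : 0 < L - K := sub_pos.2 hKL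
  have hu : 0 < A * (K - l) := mul_pos hA hKl
  have hv : 0 < A * (L - K) := mul_pos hA hLK
  have hK : 0 < K := hl.trans hlK
  have hL₀ : 0 < L := hK.trans hKL
  have hEu : 0 < Real.exp (A * (K - l)) - 1 := by linarith [Real.add_one_lt_exp hu.ne']
  have hEv : 0 < Real.exp (A * (L - K)) - 1 := by linarith [Real.add_one_lt_exp hv.ne']
  have hupper : (Real.exp (A * (K - l)) - 1)⁻¹ ≤ (A * (L - K))⁻¹ + (A * K)⁻¹ := by
    have heq : (A * (L - K))⁻¹ + (A * K)⁻¹ = L / (A * K * (L - K)) := by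
      field_simp
      ring
    rw [heq, inv_le_comm₀ hEu (by positivity), inv_div, div_le_iff₀ (by linarith)]
    linarith
  have hlower : 1 + (Real.exp (A * (L - K)) - 1)⁻¹ ≤ (A * (K - l))⁻¹ - (A * K)⁻¹ := by
    have heq : (A * (K - l))⁻¹ - (A * K)⁻¹ = l / (A * K * (K - l)) := by
      field_simp
      ring
    have hexp : 1 + (Real.exp (A * (L - K)) - 1)⁻¹ = (1 - Real.exp (A * (K - L)))⁻¹ := by
      rw [show A * (K - L) = -(A * (L - K)) by ring, Real.exp_neg]
      field_simp
      ring
    have hpos : 0 < 1 - Real.exp (A * (K - L)) := by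
      linarith [Real.exp_lt_one_iff.2 (show A * (K - L) < 0 by linarith)]
    rw [heq, hexp, inv_le_comm₀ hpos (by positivity), inv_div,
      div_le_iff₀ hl]
    linarith
  linarith [inv_sub_half_lt_inv_exp_sub_one hu, inv_sub_half_lt_inv_exp_sub_one hv]

lemma mul_sub_le_sub_of_le_add_mul_exp_neg {θ z C K L : ℝ} (hθ : 0 ≤ θ) (hLC : L ≤ C)
    (hz : θ * (Real.exp z - 1) ≤ 1) (h : L ≤ C + (K - C) * Real.exp (-z)) :
    θ * (L - K) ≤ C - L := by
  have hX := Real.exp_pos z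
  have hLK : L - K ≤ (Real.exp z - 1) * (C - L) := by
    rw [Real.exp_neg, ← sub_le_iff_le_add', ← div_eq_mul_inv, le_div_iff₀ hX] at h
    linarith
  calc θ * (L - K) ≤ θ * ((Real.exp z - 1) * (C - L)) := mul_le_mul_of_nonneg_left hLK hθ
    _ = θ * (Real.exp z - 1) * (C - L) := by ring
    _ ≤ 1 * (C - L) := mul_le_mul_of_nonneg_right hz (sub_nonneg.2 hLC)
    _ = C - L := one_mul _

lemma deriv_nonneg_of_forall_le_left {f : ℝ → ℝ} {f' s t : ℝ} (hf : HasDerivAt f f' t)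
    (hst : s < t) (h : ∀ r ∈ Icc s t, f r ≤ f t) : 0 ≤ f' := by
  have hmax : IsLocalMaxOn f (Icc s t) t := IsMaxOn.localize h
  have hcone : s - t ∈ posTangentConeAt (Icc s t) t :=
    sub_mem_posTangentConeAt_of_segment_subset (segment_symm ℝ s t ▸ (segment_eq_Icc hst.le).subset)
  have := hmax.hasFDerivWithinAt_nonpos hf.hasFDerivAt.hasFDerivWithinAt hcone
  simp only [ContinuousLinearMap.toSpanSingleton_apply, smul_eq_mul] at this
  nlinarith

lemma exists_forall_le_max_of_running_max {f : ℝ → ℝ} {t₀ T M : ℝ} (hf : ContinuousOn f (Ici t₀))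
    (hT : t₀ ≤ T) (hM : ∀ t, T < t → (∀ r ∈ Icc t₀ t, f r ≤ f t) → f t ≤ M) :
    ∃ s ∈ Icc t₀ T, ∀ t, t₀ ≤ t → f t ≤ max (f s) M := by
  obtain ⟨s, hs, hs_max⟩ := isCompact_Icc.exists_isMaxOn (nonempty_Icc.2 hT)
    (hf.mono Icc_subset_Ici_self)
  refine ⟨s, hs, fun t ht => ?_⟩
  obtain ⟨r, hr, hr_max⟩ := isCompact_Icc.exists_isMaxOn (nonempty_Icc.2 ht)
    (hf.mono Icc_subset_Ici_self)
  refine (hr_max (right_mem_Icc.2 ht)).trans ?_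
  rcases le_or_gt r T with hrT | hrT
  · exact le_max_of_le_left (hs_max ⟨hr.1, hrT⟩)
  · exact le_max_of_le_right
      (hM r hrT fun q hq => hr_max (Icc_subset_Icc_right hr.2 hq))

lemma exists_le_of_deriv_lt_neg {x x' : ℝ → ℝ} {c η T : ℝ} (hη : 0 < η)
    (hx : ∀ t, T ≤ t → HasDerivAt x (x' t) t)
    (hdecr : ∀ t, T ≤ t → c ≤ x t → x' t < -η) : ∃ t, T ≤ t ∧ x t ≤ c := by
  by_contra! habove
  set t := T + (x T - c) / η
  have hTt : T ≤ t := le_add_of_nonneg_right (div_nonneg (sub_nonneg.2 (habove T le_rfl).le) hη.le)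
  have hdrop : x t - x T ≤ -η * (t - T) :=
    (convex_Icc T t).image_sub_le_mul_sub_of_deriv_le
      (fun r hr => (hx r hr.1).continuousAt.continuousWithinAt)
      (fun r hr => (hx r (interior_subset hr).1).differentiableAt.differentiableWithinAt)
      (fun r hr => by
        have hr : T ≤ r := (interior_subset hr).1
        rw [(hx r hr).deriv]
        exact (hdecr r hr (habove r hr).le).le)
      T (left_mem_Icc.2 hTt) t (right_mem_Icc.2 hTt) hTt
  have hlen : -η * (t - T) = c - x T := by
    simp only [t, add_sub_cancel_left]
    field_simp
    ring
  linarith [habove t hTt]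

lemma frequently_le_and_neg_le_deriv {x x' : ℝ → ℝ} {t₀ c η : ℝ} (hη : 0 < η)
    (hx : ∀ t, t₀ < t → HasDerivAt x (x' t) t) (hc : ∃ᶠ t in atTop, c < x t) :
    ∃ᶠ t in atTop, c ≤ x t ∧ -η ≤ x' t := by
  by_contra hcon
  obtain ⟨T, hT⟩ := eventually_atTop.1 ((not_frequently.1 hcon).and (eventually_gt_atTop t₀))
  have hderiv : ∀ t, T ≤ t → HasDerivAt x (x' t) t := fun t ht => hx t (hT t ht).2
  have hdecr : ∀ t, T ≤ t → c ≤ x t → x' t < -η := fun t ht hct =>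
    not_le.1 fun h => (hT t ht).1 ⟨hct, h⟩
  obtain ⟨s, hTs, hs⟩ := exists_le_of_deriv_lt_neg hη hderiv hdecr
  obtain ⟨t, hst, ht⟩ := frequently_atTop.1 hc s
  refine ht.not_ge (image_le_of_deriv_right_lt_deriv_boundary (B := fun _ => c) (B' := fun _ => 0)
    (fun r hr => (hderiv r (hTs.trans hr.1)).continuousAt.continuousWithinAt)
    (fun r hr => (hderiv r (hTs.trans hr.1)).hasDerivWithinAt) hs (fun _ => hasDerivAt_const _ _)
    (fun r hr hrc => (hdecr r (hTs.trans hr.1) hrc.ge).trans (neg_lt_zero.2 hη))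
    (right_mem_Icc.2 hst))

lemma le_add_mul_exp_neg_integral_of_deriv_le {x x' β : ℝ → ℝ} {κ C s t : ℝ} (hst : s ≤ t)
    (hβ : ContinuousOn β (Icc s t)) (hx : ContinuousOn x (Icc s t))
    (hx' : ∀ r ∈ Ioo s t, HasDerivAt x (x' r) r)
    (hle : ∀ r ∈ Ioo s t, x' r ≤ β r * (κ * (C - x r))) :
    x t ≤ C + (x s - C) * Real.exp (-(κ * ∫ r in s..t, β r)) := by
  set G : ℝ → ℝ := fun r => ∫ q in s..r, β q with hG
  have hβint : IntervalIntegrable β MeasureTheory.volume s t := hβ.intervalIntegrable_of_Icc hst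
  have hGcont : ContinuousOn G (Icc s t) := by
    simpa only [uIcc_of_le hst] using
      intervalIntegral.continuousOn_primitive_interval' hβint left_mem_uIcc
  have hGderiv : ∀ r ∈ Ioo s t, HasDerivAt G (β r) r := fun r hr =>
    intervalIntegral.integral_hasDerivAt_right
      (hβint.mono_set (by
        rw [uIcc_of_le hst, uIcc_of_le hr.1.le]
        exact Icc_subset_Icc_right hr.2.le))
      ((hβ.mono Ioo_subset_Icc_self).stronglyMeasurableAtFilter isOpen_Ioo r hr)
      (hβ.continuousAt (Icc_mem_nhds hr.1 hr.2))
  have hderiv : ∀ r ∈ Ioo s t, HasDerivAt (fun r => (x r - C) * Real.exp (κ * G r))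
      (x' r * Real.exp (κ * G r) + (x r - C) * (Real.exp (κ * G r) * (κ * β r))) r :=
    fun r hr => ((hx' r hr).sub_const C).mul ((hGderiv r hr).const_mul κ).exp
  have hanti : AntitoneOn (fun r => (x r - C) * Real.exp (κ * G r)) (Icc s t) := by
    refine antitoneOn_of_deriv_nonpos (convex_Icc s t) (by fun_prop) ?_ ?_ <;>
      rw [interior_Icc] <;> intro r hr
    · exact (hderiv r hr).differentiableAt.differentiableWithinAt
    · rw [(hderiv r hr).deriv]
      nlinarith [hle r hr, Real.exp_pos (κ * G r)]
  have hend : (x t - C) * Real.exp (κ * G t) ≤ x s - C := by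
    simpa [hG] using hanti (left_mem_Icc.2 hst) (right_mem_Icc.2 hst) hst
  rw [Real.exp_neg, ← div_eq_mul_inv, ← sub_le_iff_le_add', le_div_iff₀ (Real.exp_pos _)]
  exact hend

end RealAnalysis

/-- The linear equation `x' = β (F - δ x)` on `(t₀, ∞)` with continuous rate `β ≥ 0`. The forcing
`F` is an arbitrary function, and the class is stable under `(F, x) ↦ (-F, -x)`, so that every upper
estimate yields a lower one. -/
structure LinearRelaxation (β F x : ℝ → ℝ) (δ t₀ : ℝ) : Prop where
  continuousOn_rate : ContinuousOn β (Ici t₀)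
  rate_nonneg : ∀ t, t₀ ≤ t → 0 ≤ β t
  continuousOn : ContinuousOn x (Ici t₀)
  hasDerivAt : ∀ t, t₀ < t → HasDerivAt x (β t * (F t - δ * x t)) t

namespace LinearRelaxation

variable {β F x : ℝ → ℝ} {δ t₀ : ℝ}

lemma neg (e : LinearRelaxation β F x δ t₀) : LinearRelaxation β (-F) (-x) δ t₀ where
  continuousOn_rate := e.continuousOn_rate
  rate_nonneg := e.rate_nonneg
  continuousOn := e.continuousOn.neg
  hasDerivAt t ht := (e.hasDerivAt t ht).neg.congr_deriv (by
    simp only [Pi.neg_apply]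
    ring)

lemma le_of_forcing_le (e : LinearRelaxation β F x δ t₀) {s t C : ℝ} (hs : t₀ ≤ s) (hst : s ≤ t)
    (hF : ∀ r ∈ Ioo s t, F r ≤ δ * C) :
    x t ≤ C + (x s - C) * Real.exp (-(δ * ∫ r in s..t, β r)) :=
  have hsub : Icc s t ⊆ Ici t₀ := fun _ hr => hs.trans hr.1
  le_add_mul_exp_neg_integral_of_deriv_le hst (e.continuousOn_rate.mono hsub)
    (e.continuousOn.mono hsub) (fun r hr => e.hasDerivAt r (hs.trans_lt hr.1))
    fun r hr => mul_le_mul_of_nonneg_left (by linarith [hF r hr])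
      (e.rate_nonneg r (hs.trans hr.1.le))

lemma le_of_le_forcing (e : LinearRelaxation β F x δ t₀) {s t C : ℝ} (hs : t₀ ≤ s) (hst : s ≤ t)
    (hF : ∀ r ∈ Ioo s t, δ * C ≤ F r) :
    C + (x s - C) * Real.exp (-(δ * ∫ r in s..t, β r)) ≤ x t := by
  have := e.neg.le_of_forcing_le (C := -C) hs hst fun r hr => by
    simpa only [Pi.neg_apply, mul_neg, neg_le_neg_iff] using hF r hr
  simp only [Pi.neg_apply] at this
  linarith

lemma mul_le_forcing_of_running_max (e : LinearRelaxation β F x δ t₀) {t : ℝ} (ht : t₀ < t)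
    (hβ : 0 < β t) (hmax : ∀ r ∈ Icc t₀ t, x r ≤ x t) : δ * x t ≤ F t :=
  sub_nonneg.1 <| nonneg_of_mul_nonneg_right
    (deriv_nonneg_of_forall_le_left (e.hasDerivAt t ht) ht hmax) hβ

lemma forcing_le_mul_of_running_min (e : LinearRelaxation β F x δ t₀) {t : ℝ} (ht : t₀ < t)
    (hβ : 0 < β t) (hmin : ∀ r ∈ Icc t₀ t, x t ≤ x r) : F t ≤ δ * x t := by
  simpa using e.neg.mul_le_forcing_of_running_max ht hβ fun r hr => neg_le_neg (hmin r hr)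

lemma frequently_le_and_le_forcing (e : LinearRelaxation β F x δ t₀) {b c η : ℝ} (hδ : 0 ≤ δ)
    (hb : 0 < b) (hβ : ∀ t, t₀ ≤ t → b ≤ β t) (hη : 0 < η) (hc : ∃ᶠ t in atTop, c < x t) :
    ∃ᶠ t in atTop, c ≤ x t ∧ δ * c - η ≤ F t := by
  refine ((frequently_le_and_neg_le_deriv (mul_pos hb hη) e.hasDerivAt hc).and_eventually
    (eventually_ge_atTop t₀)).mono ?_
  rintro t ⟨⟨hct, hderiv⟩, ht⟩
  refine ⟨hct, ?_⟩
  by_contra! hF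
  have hβt := hβ t ht
  have hgap : F t - δ * x t < -η := by linarith [mul_le_mul_of_nonneg_left hct hδ]
  nlinarith

lemma frequently_le_and_forcing_le (e : LinearRelaxation β F x δ t₀) {b c η : ℝ} (hδ : 0 ≤ δ)
    (hb : 0 < b) (hβ : ∀ t, t₀ ≤ t → b ≤ β t) (hη : 0 < η) (hc : ∃ᶠ t in atTop, x t < c) :
    ∃ᶠ t in atTop, x t ≤ c ∧ F t ≤ δ * c + η := by
  refine (e.neg.frequently_le_and_le_forcing (c := -c) hδ hb hβ hη
    (hc.mono fun t ht => neg_lt_neg ht)).mono fun t ht => ?_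
  simp only [Pi.neg_apply] at ht
  exact ⟨neg_le_neg_iff.1 ht.1, by linarith [ht.2]⟩

lemma le_add_mul_exp_neg_of_frequently {ι : Type*} [Finite ι] {σ : ι → ℝ → ℝ} {ζ C K L : ℝ}
    (e : LinearRelaxation β F x δ t₀) (hδ : 0 < δ) (hKC : K ≤ C)
    (hσ₀ : ∀ j t, t₀ ≤ t → 0 ≤ σ j t) (hσ : ∀ j, Tendsto (fun t => t - σ j t) atTop atTop)
    (hζ : ∀ c > ζ, ∀ᶠ t in atTop, ∀ j, ∫ s in (t - σ j t)..t, β s < c)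
    (hF : ∀ c > δ * C, ∀ᶠ t in atTop, F t < c)
    (hL : ∀ c < L, ∀ k > K, ∃ᶠ t in atTop, c ≤ x t ∧ ∃ j, x (t - σ j t) ≤ k) :
    L ≤ C + (K - C) * Real.exp (-(δ * ζ)) := by
  have hlim : Tendsto (fun ε => C + 2 * ε + (K - C) * Real.exp (-(δ * (ζ + ε)))) (𝓝[>] 0)
      (𝓝 (C + (K - C) * Real.exp (-(δ * ζ)))) :=
    (Continuous.tendsto' (by fun_prop) 0 _ (by simp)).mono_left nhdsWithin_le_nhds
  refine ge_of_tendsto hlim (eventually_mem_nhdsWithin.mono fun ε (hε : 0 < ε) => ?_)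
  have hFε : ∀ᶠ t in atTop, ∀ r, t ≤ r → F r < δ * (C + ε) :=
    eventually_forall_ge_atTop.2 (hF _ (by nlinarith))
  obtain ⟨t, ⟨hLt, j, hxs⟩, hFs, hs, ht, hint⟩ :=
    ((hL (L - ε) (by linarith) (K + ε) (by linarith)).and_eventually
      ((eventually_all.2 fun j => (hσ j).eventually hFε).and
        ((eventually_all.2 fun j => (hσ j).eventually_ge_atTop t₀).and
          ((eventually_ge_atTop t₀).and (hζ (ζ + ε) (by linarith)))))).exists
  have hxt := e.le_of_forcing_le (hs j) (sub_le_self t (hσ₀ j t ht))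
    fun r hr => (hFs j r hr.1.le).le
  set I := ∫ s in (t - σ j t)..t, β s
  have hexp : Real.exp (-(δ * (ζ + ε))) ≤ Real.exp (-(δ * I)) :=
    Real.exp_le_exp.2 (neg_le_neg (mul_le_mul_of_nonneg_left (hint j).le hδ.le))
  have hbound : (x (t - σ j t) - (C + ε)) * Real.exp (-(δ * I)) ≤
      (K - C) * Real.exp (-(δ * (ζ + ε))) :=
    calc (x (t - σ j t) - (C + ε)) * Real.exp (-(δ * I)) ≤ (K - C) * Real.exp (-(δ * I)) :=
          mul_le_mul_of_nonneg_right (by linarith) (Real.exp_pos _).le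
      _ ≤ (K - C) * Real.exp (-(δ * (ζ + ε))) :=
          mul_le_mul_of_nonpos_left hexp (sub_nonpos.2 hKC)
  linarith

lemma add_mul_exp_neg_le_of_frequently {ι : Type*} [Finite ι] {σ : ι → ℝ → ℝ} {ζ C K l : ℝ}
    (e : LinearRelaxation β F x δ t₀) (hδ : 0 < δ) (hCK : C ≤ K)
    (hσ₀ : ∀ j t, t₀ ≤ t → 0 ≤ σ j t) (hσ : ∀ j, Tendsto (fun t => t - σ j t) atTop atTop)
    (hζ : ∀ c > ζ, ∀ᶠ t in atTop, ∀ j, ∫ s in (t - σ j t)..t, β s < c)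
    (hF : ∀ c < δ * C, ∀ᶠ t in atTop, c < F t)
    (hl : ∀ c > l, ∀ k < K, ∃ᶠ t in atTop, x t ≤ c ∧ ∃ j, k ≤ x (t - σ j t)) :
    C + (K - C) * Real.exp (-(δ * ζ)) ≤ l := by
  have := e.neg.le_add_mul_exp_neg_of_frequently (C := -C) (K := -K) (L := -l) hδ
    (neg_le_neg hCK) hσ₀ hσ hζ
    (fun c hc => (hF (-c) (by linarith)).mono fun t ht => neg_lt.1 ht)
    (fun c hc k hk => (hl (-c) (by linarith) (-k) (by linarith)).mono
      fun t ⟨ht, j, hj⟩ => ⟨le_neg.1 ht, j, neg_le.1 hj⟩)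
  linarith

end LinearRelaxation

section Production

variable {ι : Type*} [Fintype ι] {p a : ι → ℝ}

/-- The birth term `Σ_j p_j y_j e^{-a_j z_j}` of the Nicholson equation, for delayed densities `y_j`
in the linear and `z_j` in the exponential factor. -/
noncomputable def production (p a y z : ι → ℝ) : ℝ := ∑ j, p j * y j * Real.exp (-(a j) * z j)

/-- The per-capita birth rate `g(k) = Σ_j p_j e^{-a_j k}` at the constant density `k`; the positive
equilibrium is the solution `K` of `g(K) = δ`. -/
noncomputable def perCapitaBirthRate (p a : ι → ℝ) (k : ℝ) : ℝ := ∑ j, p j * Real.exp (-(a j) * k)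

lemma production_const (M k : ℝ) :
    production p a (fun _ => M) (fun _ => k) = M * perCapitaBirthRate p a k := by
  simp only [production, perCapitaBirthRate, Finset.mul_sum]
  exact Finset.sum_congr rfl fun j _ => by ring

lemma production_nonneg (hp : ∀ j, 0 ≤ p j) {y : ι → ℝ} (hy : ∀ j, 0 ≤ y j) (z : ι → ℝ) :
    0 ≤ production p a y z :=
  Finset.sum_nonneg fun j _ => mul_nonneg (mul_nonneg (hp j) (hy j)) (Real.exp_pos _).le

lemma production_le_production (hp : ∀ j, 0 ≤ p j) (ha : ∀ j, 0 ≤ a j) {y y' z z' : ι → ℝ}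
    (hy' : ∀ j, 0 ≤ y' j) (hy : ∀ j, y j ≤ y' j) (hz : ∀ j, z' j ≤ z j) :
    production p a y z ≤ production p a y' z' := by
  refine Finset.sum_le_sum fun j _ => ?_
  have hexp : Real.exp (-(a j) * z j) ≤ Real.exp (-(a j) * z' j) :=
    Real.exp_le_exp.2 (mul_le_mul_of_nonpos_left (hz j) (neg_nonpos.2 (ha j)))
  exact mul_le_mul (mul_le_mul_of_nonneg_left (hy j) (hp j)) hexp (Real.exp_pos _).le
    (mul_nonneg (hp j) (hy' j))

lemma production_lt_production [Nonempty ι] (hp : ∀ j, 0 < p j) (ha : ∀ j, 0 < a j)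
    {y y' z z' : ι → ℝ} (hy' : ∀ j, 0 < y' j) (hy : ∀ j, y j ≤ y' j) (hz : ∀ j, z' j < z j) :
    production p a y z < production p a y' z' := by
  refine Finset.sum_lt_sum_of_nonempty Finset.univ_nonempty fun j _ => ?_
  have hexp : Real.exp (-(a j) * z j) < Real.exp (-(a j) * z' j) :=
    Real.exp_lt_exp.2 (mul_lt_mul_of_neg_left (hz j) (neg_lt_zero.2 (ha j)))
  exact mul_lt_mul' (mul_le_mul_of_nonneg_left (hy j) (hp j).le) hexp (Real.exp_pos _).le
    (mul_pos (hp j) (hy' j))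

lemma perCapitaBirthRate_strictAnti [Nonempty ι] (hp : ∀ j, 0 < p j) (ha : ∀ j, 0 < a j) :
    StrictAnti (perCapitaBirthRate p a) := fun k k' hk => by
  have := production_lt_production hp ha (y := fun _ => 1) (fun _ => one_pos) (fun _ => le_rfl)
    (z := fun _ => k') (fun _ => hk)
  simpa only [production_const, one_mul] using this

lemma continuous_perCapitaBirthRate : Continuous (perCapitaBirthRate p a) := by
  unfold perCapitaBirthRate
  fun_prop

lemma perCapitaBirthRate_pos [Nonempty ι] (hp : ∀ j, 0 < p j) (k : ℝ) :
    0 < perCapitaBirthRate p a k :=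
  Finset.sum_pos (fun j _ => mul_pos (hp j) (Real.exp_pos _)) Finset.univ_nonempty

lemma perCapitaBirthRate_le_mul_exp (hp : ∀ j, 0 ≤ p j) {A k k' : ℝ} (hA : ∀ j, a j ≤ A)
    (hk : k ≤ k') :
    perCapitaBirthRate p a k ≤ perCapitaBirthRate p a k' * Real.exp (A * (k' - k)) := by
  simp only [perCapitaBirthRate, Finset.sum_mul, mul_assoc, ← Real.exp_add]
  refine Finset.sum_le_sum fun j _ => mul_le_mul_of_nonneg_left (Real.exp_le_exp.2 ?_) (hp j)
  nlinarith [hA j]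

lemma mul_le_log_sum_div_perCapitaBirthRate [Nonempty ι] (hp : ∀ j, 0 < p j) {α k : ℝ}
    (hα : ∀ j, α ≤ a j) (hk : 0 ≤ k) :
    α * k ≤ Real.log ((∑ j, p j) / perCapitaBirthRate p a k) := by
  have hg : 0 < perCapitaBirthRate p a k := perCapitaBirthRate_pos hp k
  have hsum : 0 < ∑ j, p j := Finset.sum_pos (fun j _ => hp j) Finset.univ_nonempty
  rw [Real.le_log_iff_exp_le (div_pos hsum hg), le_div_iff₀ hg, perCapitaBirthRate,
    Finset.mul_sum]
  refine Finset.sum_le_sum fun j _ => ?_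
  calc Real.exp (α * k) * (p j * Real.exp (-(a j) * k)) = p j * Real.exp ((α - a j) * k) := by
        rw [mul_left_comm, ← Real.exp_add]
        ring_nf
    _ ≤ p j * 1 := mul_le_mul_of_nonneg_left
        (Real.exp_le_one_iff.2 (mul_nonpos_of_nonpos_of_nonneg (sub_nonpos.2 (hα j)) hk)) (hp j).le
    _ = p j := mul_one _

lemma mul_exp_sub_one_le_one_of_mul_log_le_one [Nonempty ι] (hp : ∀ j, 0 < p j)
    {A α δ K z : ℝ} (hA : 0 ≤ A) (hα₀ : 0 < α) (hα : ∀ j, α ≤ a j) (hK₀ : 0 ≤ K)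
    (hK : perCapitaBirthRate p a K = δ)
    (hlog : A / α * (Real.exp z - 1) * Real.log ((∑ j, p j) / δ) ≤ 1) :
    A * K * (Real.exp z - 1) ≤ 1 := by
  rcases le_or_gt (Real.exp z) 1 with hz | hz
  · linarith [mul_nonpos_of_nonneg_of_nonpos (mul_nonneg hA hK₀) (sub_nonpos.2 hz)]
  · have hαK : α * K ≤ Real.log ((∑ j, p j) / δ) :=
      hK ▸ mul_le_log_sum_div_perCapitaBirthRate hp hα hK₀
    calc A * K * (Real.exp z - 1) = A / α * (Real.exp z - 1) * (α * K) := by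
          field_simp
      _ ≤ A / α * (Real.exp z - 1) * Real.log ((∑ j, p j) / δ) :=
          mul_le_mul_of_nonneg_left hαK
            (mul_nonneg (div_nonneg hA hα₀.le) (sub_nonneg.2 hz.le))
      _ ≤ 1 := hlog

end Production

/-- Standing assumptions on the coefficients of the Nicholson equation: positive parameters, a
continuous rate with `0 < b ≤ β ≤ B`, delays in `[0, h]`, and a positive equilibrium `K`. -/
structure NicholsonSetting {ι : Type*} [Fintype ι] (p a : ι → ℝ) (δ t₀ h b B K : ℝ) (β : ℝ → ℝ)
    (τ σ : ι → ℝ → ℝ) : Prop where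
  p_pos : ∀ j, 0 < p j
  a_pos : ∀ j, 0 < a j
  δ_pos : 0 < δ
  continuousOn_β : ContinuousOn β (Ici t₀)
  b_pos : 0 < b
  b_le_β : ∀ t, t₀ ≤ t → b ≤ β t
  β_le_B : ∀ t, t₀ ≤ t → β t ≤ B
  τ_mem : ∀ j t, t₀ ≤ t → τ j t ∈ Icc 0 h
  σ_mem : ∀ j t, t₀ ≤ t → σ j t ∈ Icc 0 h
  K_pos : 0 < K
  equilibrium : perCapitaBirthRate p a K = δ

/-- The recruitment `Σ_j p_j x(t - τ_j(t)) e^{-a_j x(t - σ_j(t))}` along `x`. -/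
noncomputable def recruitment {ι : Type*} [Fintype ι] (p a : ι → ℝ) (τ σ : ι → ℝ → ℝ)
    (x : ℝ → ℝ) (t : ℝ) : ℝ :=
  production p a (fun j => x (t - τ j t)) (fun j => x (t - σ j t))

namespace NicholsonSetting

variable {ι : Type*} [Fintype ι] {p a : ι → ℝ} {δ t₀ h b B K : ℝ} {β : ℝ → ℝ} {τ σ : ι → ℝ → ℝ}

lemma nonempty (d : NicholsonSetting p a δ t₀ h b B K β τ σ) : Nonempty ι := by
  by_contra hι
  rw [not_nonempty_iff] at hι
  have := d.equilibrium
  simp only [perCapitaBirthRate, Finset.univ_eq_empty, Finset.sum_empty] at this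
  exact d.δ_pos.ne this

lemma delayBound_nonneg (d : NicholsonSetting p a δ t₀ h b B K β τ σ) : 0 ≤ h :=
  have ⟨j⟩ := d.nonempty
  (d.τ_mem j t₀ le_rfl).1.trans (d.τ_mem j t₀ le_rfl).2

lemma β_pos (d : NicholsonSetting p a δ t₀ h b B K β τ σ) {t : ℝ} (ht : t₀ ≤ t) : 0 < β t :=
  d.b_pos.trans_le (d.b_le_β t ht)

lemma perCapitaBirthRate_lt (d : NicholsonSetting p a δ t₀ h b B K β τ σ) {k : ℝ} (hk : K < k) :
    perCapitaBirthRate p a k < δ :=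
  have := d.nonempty
  d.equilibrium ▸ perCapitaBirthRate_strictAnti d.p_pos d.a_pos hk

lemma lt_perCapitaBirthRate (d : NicholsonSetting p a δ t₀ h b B K β τ σ) {k : ℝ} (hk : k < K) :
    δ < perCapitaBirthRate p a k :=
  have := d.nonempty
  d.equilibrium ▸ perCapitaBirthRate_strictAnti d.p_pos d.a_pos hk

lemma tendsto_sub_τ (d : NicholsonSetting p a δ t₀ h b B K β τ σ) (j : ι) :
    Tendsto (fun t => t - τ j t) atTop atTop :=
  tendsto_atTop_mono' atTop
    ((eventually_ge_atTop t₀).mono fun t ht => sub_le_sub_left (d.τ_mem j t ht).2 t)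
    (tendsto_atTop_add_const_right atTop (-h) tendsto_id)

lemma tendsto_sub_σ (d : NicholsonSetting p a δ t₀ h b B K β τ σ) (j : ι) :
    Tendsto (fun t => t - σ j t) atTop atTop :=
  tendsto_atTop_mono' atTop
    ((eventually_ge_atTop t₀).mono fun t ht => sub_le_sub_left (d.σ_mem j t ht).2 t)
    (tendsto_atTop_add_const_right atTop (-h) tendsto_id)

lemma integral_β_le (d : NicholsonSetting p a δ t₀ h b B K β τ σ) {s t : ℝ} (hs : t₀ ≤ s)
    (hst : s ≤ t) (hth : t - s ≤ h) : ∫ r in s..t, β r ≤ B * h := by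
  have hB : 0 ≤ B := (d.β_pos hs).le.trans (d.β_le_B s hs)
  calc ∫ r in s..t, β r ≤ ∫ _ in s..t, B :=
        intervalIntegral.integral_mono_on hst
          ((d.continuousOn_β.mono fun r hr => hs.trans hr.1).intervalIntegrable_of_Icc hst)
          intervalIntegrable_const fun r hr => d.β_le_B r (hs.trans hr.1)
    _ = B * (t - s) := by rw [intervalIntegral.integral_const, smul_eq_mul, mul_comm]
    _ ≤ B * h := mul_le_mul_of_nonneg_left hth hB

lemma eventually_integral_β_lt (d : NicholsonSetting p a δ t₀ h b B K β τ σ) {c : ℝ}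
    (hc : ∀ j, limsup (fun t => ∫ s in (t - σ j t)..t, β s) atTop < c) :
    ∀ᶠ t in atTop, ∀ j, ∫ s in (t - σ j t)..t, β s < c := by
  refine eventually_all.2 fun j => eventually_lt_of_limsup_lt (hc j)
    (isBoundedUnder_of_eventually_le (a := B * h) ?_)
  filter_upwards [eventually_ge_atTop t₀, (d.tendsto_sub_σ j).eventually_ge_atTop t₀] with t ht hs
  have hσ := d.σ_mem j t ht
  exact d.integral_β_le hs (sub_le_self t hσ.1) (by linarith [hσ.2])

end NicholsonSetting

namespace NicholsonSolution

variable {m : ℕ} {p a : Fin m → ℝ} {δ t₀ h b B K : ℝ} {β : ℝ → ℝ} {τ σ : Fin m → ℝ → ℝ}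
  {x : ℝ → ℝ}

lemma relaxation (hx : NicholsonSolution m p a δ t₀ h β τ σ x)
    (d : NicholsonSetting p a δ t₀ h b B K β τ σ) :
    LinearRelaxation β (recruitment p a τ σ x) x δ t₀ where
  continuousOn_rate := d.continuousOn_β
  rate_nonneg _ ht := (d.β_pos ht).le
  continuousOn := hx.1.mono (Ici_subset_Ici.2 (sub_le_self t₀ d.delayBound_nonneg))
  hasDerivAt t ht := (hx.2.1 t ht.le).hasDerivAt (Ici_mem_nhds ht)

section Positivity

lemma mul_exp_neg_integral_le_of_nonneg (hx : NicholsonSolution m p a δ t₀ h β τ σ x)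
    (d : NicholsonSetting p a δ t₀ h b B K β τ σ) {s t : ℝ} (hs : t₀ ≤ s) (hst : s ≤ t)
    (hnonneg : ∀ r, t₀ - h ≤ r → r < t → 0 ≤ x r) :
    x s * Real.exp (-(δ * ∫ r in s..t, β r)) ≤ x t := by
  have hF : ∀ r ∈ Ioo s t, δ * 0 ≤ recruitment p a τ σ x r := fun r hr => by
    rw [mul_zero]
    refine production_nonneg (fun j => (d.p_pos j).le) (fun j => ?_) _
    have hτ := d.τ_mem j r (hs.trans hr.1.le)
    exact hnonneg _ (by linarith [hτ.2, hr.1]) (by linarith [hτ.1, hr.2])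
  simpa only [sub_zero, zero_add] using (hx.relaxation d).le_of_le_forcing hs hst hF

lemma pos (hx : NicholsonSolution m p a δ t₀ h β τ σ x)
    (d : NicholsonSetting p a δ t₀ h b B K β τ σ) {t : ℝ} (ht : t₀ ≤ t) : 0 < x t := by
  by_contra! hxt
  have hcompact : IsCompact {r ∈ Icc t₀ t | x r ≤ 0} :=
    isCompact_Icc.of_isClosed_subset
      (((hx.relaxation d).continuousOn.mono Icc_subset_Ici_self).preimage_isClosed_of_isClosed
        isClosed_Icc isClosed_Iic)
      fun r hr => hr.1
  obtain ⟨r, ⟨hr, hxr⟩, hfirst⟩ := hcompact.exists_isLeast ⟨t, right_mem_Icc.2 ht, hxt⟩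
  have hnonneg : ∀ q, t₀ - h ≤ q → q < r → 0 ≤ x q := fun q hq hqr => by
    rcases lt_or_ge q t₀ with hqt | hqt
    · exact hx.2.2.1 q hq hqt
    · by_contra! hxq
      exact hqr.not_ge (hfirst ⟨⟨hqt, hqr.le.trans hr.2⟩, hxq.le⟩)
  exact hxr.not_gt <| (mul_pos hx.2.2.2 (Real.exp_pos _)).trans_le <|
    hx.mul_exp_neg_integral_le_of_nonneg d le_rfl hr.1 hnonneg

lemma nonneg (hx : NicholsonSolution m p a δ t₀ h β τ σ x)
    (d : NicholsonSetting p a δ t₀ h b B K β τ σ) {t : ℝ} (ht : t₀ - h ≤ t) : 0 ≤ x t :=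
  (lt_or_ge t t₀).elim (hx.2.2.1 t ht) fun ht₀ => (hx.pos d ht₀).le

lemma mul_exp_neg_le (hx : NicholsonSolution m p a δ t₀ h β τ σ x)
    (d : NicholsonSetting p a δ t₀ h b B K β τ σ) {s t : ℝ} (hs : t₀ ≤ s) (hst : s ≤ t)
    (hth : t - s ≤ h) : x s * Real.exp (-(δ * (B * h))) ≤ x t := by
  have hexp : Real.exp (-(δ * (B * h))) ≤ Real.exp (-(δ * ∫ r in s..t, β r)) :=
    Real.exp_le_exp.2 <| neg_le_neg <|
      mul_le_mul_of_nonneg_left (d.integral_β_le hs hst hth) d.δ_pos.le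
  exact (mul_le_mul_of_nonneg_left hexp (hx.pos d hs).le).trans <|
    hx.mul_exp_neg_integral_le_of_nonneg d hs hst fun r hr _ => hx.nonneg d hr

end Positivity

section Boundedness

lemma recruitment_le_mul (hx : NicholsonSolution m p a δ t₀ h β τ σ x)
    (d : NicholsonSetting p a δ t₀ h b B K β τ σ) {t : ℝ} (ht : t₀ + h ≤ t) :
    recruitment p a τ σ x t ≤ perCapitaBirthRate p a 0 * Real.exp (δ * (B * h)) * x t := by
  have ht₀ : t₀ ≤ t := by linarith [d.delayBound_nonneg]
  have hdelayed : ∀ j, x (t - τ j t) ≤ x t * Real.exp (δ * (B * h)) := fun j => by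
    have hτ := d.τ_mem j t ht₀
    have := hx.mul_exp_neg_le d (s := t - τ j t) (t := t) (by linarith [hτ.2]) (by linarith [hτ.1])
      (by linarith [hτ.2])
    rwa [Real.exp_neg, ← div_eq_mul_inv, div_le_iff₀ (Real.exp_pos _)] at this
  have hxt := hx.pos d ht₀
  calc recruitment p a τ σ x t
      ≤ production p a (fun _ => x t * Real.exp (δ * (B * h))) (fun _ => 0) :=
        production_le_production (fun j => (d.p_pos j).le) (fun j => (d.a_pos j).le)
          (fun _ => by positivity) hdelayed
          fun j => hx.nonneg d (by linarith [(d.σ_mem j t ht₀).2])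
    _ = perCapitaBirthRate p a 0 * Real.exp (δ * (B * h)) * x t := by
        rw [production_const]
        ring

lemma le_mul_exp (hx : NicholsonSolution m p a δ t₀ h β τ σ x)
    (d : NicholsonSetting p a δ t₀ h b B K β τ σ) {s t : ℝ} (hs : t₀ + h ≤ s) (hst : s ≤ t)
    (hth : t - s ≤ h) :
    x t ≤ x s * Real.exp (perCapitaBirthRate p a 0 * Real.exp (δ * (B * h)) * (B * h)) := by
  have hs₀ : t₀ ≤ s := by linarith [d.delayBound_nonneg]
  have e := hx.relaxation d
  have hsub : Icc s t ⊆ Ici t₀ := fun _ hr => hs₀.trans hr.1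
  set growth := perCapitaBirthRate p a 0 * Real.exp (δ * (B * h))
  have hgrowth : 0 ≤ growth := mul_nonneg
    (d.δ_pos.le.trans (d.lt_perCapitaBirthRate d.K_pos).le) (Real.exp_pos _).le
  have hbound := le_add_mul_exp_neg_integral_of_deriv_le (κ := -growth) (C := 0) hst
    (d.continuousOn_β.mono hsub) (e.continuousOn.mono hsub)
    (fun r hr => e.hasDerivAt r (hs₀.trans_lt hr.1))
    fun r hr => mul_le_mul_of_nonneg_left (by
      have hxr := hx.pos d (hs₀.trans hr.1.le)
      linarith [hx.recruitment_le_mul d (hs.trans hr.1.le), mul_pos d.δ_pos hxr])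
      (d.β_pos (hs₀.trans hr.1.le)).le
  simp only [zero_add, sub_zero, neg_mul, neg_neg] at hbound
  exact hbound.trans <| mul_le_mul_of_nonneg_left
    (Real.exp_le_exp.2 (mul_le_mul_of_nonneg_left (d.integral_β_le hs₀ hst hth) hgrowth))
    (hx.pos d hs₀).le

lemma exists_delayed_le_of_running_max (hx : NicholsonSolution m p a δ t₀ h β τ σ x)
    (d : NicholsonSetting p a δ t₀ h b B K β τ σ) {t : ℝ} (ht₀ : t₀ < t) (ht : t₀ + h ≤ t)
    (hmax : ∀ r ∈ Icc t₀ t, x r ≤ x t) : ∃ j, x (t - σ j t) ≤ K := by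
  by_contra! hK
  have := d.nonempty
  have hF : recruitment p a τ σ x t < δ * x t :=
    calc recruitment p a τ σ x t < production p a (fun _ => x t) (fun _ => K) :=
          production_lt_production d.p_pos d.a_pos (fun _ => hx.pos d ht₀.le)
            (fun j => hmax _ ⟨by linarith [(d.τ_mem j t ht₀.le).2],
              sub_le_self t (d.τ_mem j t ht₀.le).1⟩) hK
      _ = δ * x t := by rw [production_const, d.equilibrium, mul_comm]
  exact hF.not_ge ((hx.relaxation d).mul_le_forcing_of_running_max ht₀ (d.β_pos ht₀.le) hmax)

lemma exists_le_delayed_of_running_min (hx : NicholsonSolution m p a δ t₀ h β τ σ x)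
    (d : NicholsonSetting p a δ t₀ h b B K β τ σ) {t : ℝ} (ht₀ : t₀ < t) (ht : t₀ + h ≤ t)
    (hmin : ∀ r ∈ Icc t₀ t, x t ≤ x r) : ∃ j, K ≤ x (t - σ j t) := by
  by_contra! hK
  have := d.nonempty
  have hF : δ * x t < recruitment p a τ σ x t :=
    calc δ * x t = production p a (fun _ => x t) (fun _ => K) := by
          rw [production_const, d.equilibrium, mul_comm]
      _ < recruitment p a τ σ x t :=
          have hτ : ∀ j, t₀ ≤ t - τ j t := fun j => by linarith [(d.τ_mem j t ht₀.le).2]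
          production_lt_production d.p_pos d.a_pos (fun j => hx.pos d (hτ j))
            (fun j => hmin _ ⟨hτ j, sub_le_self t (d.τ_mem j t ht₀.le).1⟩) hK
  exact hF.not_ge ((hx.relaxation d).forcing_le_mul_of_running_min ht₀ (d.β_pos ht₀.le) hmin)

lemma exists_forall_le (hx : NicholsonSolution m p a δ t₀ h β τ σ x)
    (d : NicholsonSetting p a δ t₀ h b B K β τ σ) : ∃ M, ∀ t, t₀ ≤ t → x t ≤ M := by
  have hh := d.delayBound_nonneg
  obtain ⟨s, -, hs⟩ := exists_forall_le_max_of_running_max (T := t₀ + 2 * h)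
    (M := K * Real.exp (perCapitaBirthRate p a 0 * Real.exp (δ * (B * h)) * (B * h)))
    (hx.relaxation d).continuousOn (by linarith) fun t ht hmax => by
      obtain ⟨j, hj⟩ := hx.exists_delayed_le_of_running_max d (by linarith) (by linarith) hmax
      have hσ := d.σ_mem j t (by linarith)
      exact (hx.le_mul_exp d (s := t - σ j t) (by linarith [hσ.2]) (by linarith [hσ.1])
        (by linarith [hσ.2])).trans (mul_le_mul_of_nonneg_right hj (Real.exp_pos _).le)
  exact ⟨_, hs⟩

lemma exists_pos_forall_le (hx : NicholsonSolution m p a δ t₀ h β τ σ x)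
    (d : NicholsonSetting p a δ t₀ h b B K β τ σ) : ∃ k, 0 < k ∧ ∀ t, t₀ ≤ t → k ≤ x t := by
  have hh := d.delayBound_nonneg
  obtain ⟨s, hs, hle⟩ := exists_forall_le_max_of_running_max (f := -x) (T := t₀ + h)
    (M := -(K * Real.exp (-(δ * (B * h))))) (hx.relaxation d).continuousOn.neg (by linarith)
    fun t ht hmin => by
      obtain ⟨j, hj⟩ := hx.exists_le_delayed_of_running_min d (by linarith) ht.le
        fun r hr => neg_le_neg_iff.1 (hmin r hr)
      have hσ := d.σ_mem j t (by linarith)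
      exact neg_le_neg <| (mul_le_mul_of_nonneg_right hj (Real.exp_pos _).le).trans <|
        hx.mul_exp_neg_le d (by linarith [hσ.2]) (by linarith [hσ.1]) (by linarith [hσ.2])
  refine ⟨min (x s) (K * Real.exp (-(δ * (B * h)))),
    lt_min (hx.pos d hs.1) (mul_pos d.K_pos (Real.exp_pos _)), fun t ht => ?_⟩
  have := hle t ht
  rwa [Pi.neg_apply, Pi.neg_apply, max_neg_neg, neg_le_neg_iff] at this

lemma isBoundedUnder_le (hx : NicholsonSolution m p a δ t₀ h β τ σ x)
    (d : NicholsonSetting p a δ t₀ h b B K β τ σ) : IsBoundedUnder (· ≤ ·) atTop x :=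
  have ⟨_, hM⟩ := hx.exists_forall_le d
  isBoundedUnder_of_eventually_le ((eventually_ge_atTop t₀).mono hM)

lemma isBoundedUnder_ge (hx : NicholsonSolution m p a δ t₀ h β τ σ x)
    (d : NicholsonSetting p a δ t₀ h b B K β τ σ) : IsBoundedUnder (· ≥ ·) atTop x :=
  have ⟨_, _, hk⟩ := hx.exists_pos_forall_le d
  isBoundedUnder_of_eventually_ge ((eventually_ge_atTop t₀).mono hk)

lemma liminf_pos (hx : NicholsonSolution m p a δ t₀ h β τ σ x)
    (d : NicholsonSetting p a δ t₀ h b B K β τ σ) : 0 < liminf x atTop :=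
  have ⟨_, hk₀, hk⟩ := hx.exists_pos_forall_le d
  hk₀.trans_le <| le_liminf_of_le (hx.isBoundedUnder_le d).isCoboundedUnder_ge
    ((eventually_ge_atTop t₀).mono hk)

lemma liminf_le_limsup (hx : NicholsonSolution m p a δ t₀ h β τ σ x)
    (d : NicholsonSetting p a δ t₀ h b B K β τ σ) : liminf x atTop ≤ limsup x atTop :=
  Filter.liminf_le_limsup (hx.isBoundedUnder_le d) (hx.isBoundedUnder_ge d)

end Boundedness

section Limits

lemma eventually_lt_delayed (hx : NicholsonSolution m p a δ t₀ h β τ σ x)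
    (d : NicholsonSetting p a δ t₀ h b B K β τ σ) {k : ℝ} (hk : k < liminf x atTop) :
    ∀ᶠ t in atTop, ∀ j, k < x (t - σ j t) :=
  eventually_all.2 fun j => (d.tendsto_sub_σ j).eventually
    (eventually_lt_of_lt_liminf hk (hx.isBoundedUnder_ge d))

lemma eventually_delayed_lt (hx : NicholsonSolution m p a δ t₀ h β τ σ x)
    (d : NicholsonSetting p a δ t₀ h b B K β τ σ) {k : ℝ} (hk : limsup x atTop < k) :
    ∀ᶠ t in atTop, ∀ j, x (t - σ j t) < k :=
  eventually_all.2 fun j => (d.tendsto_sub_σ j).eventually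
    (eventually_lt_of_limsup_lt hk (hx.isBoundedUnder_le d))

lemma eventually_recruitment_lt_of_le (hx : NicholsonSolution m p a δ t₀ h β τ σ x)
    (d : NicholsonSetting p a δ t₀ h b B K β τ σ) {k c : ℝ}
    (hc : limsup x atTop * perCapitaBirthRate p a k < c) :
    ∀ᶠ t in atTop, (∀ j, k ≤ x (t - σ j t)) → recruitment p a τ σ x t < c := by
  have := d.nonempty
  obtain ⟨M, hLM, hMc⟩ := exists_between ((lt_div_iff₀ (perCapitaBirthRate_pos d.p_pos k)).2 hc)
  have hM : 0 ≤ M := ((hx.liminf_pos d).le.trans (hx.liminf_le_limsup d)).trans hLM.le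
  filter_upwards [eventually_all.2 fun j => (d.tendsto_sub_τ j).eventually
    (eventually_lt_of_limsup_lt hLM (hx.isBoundedUnder_le d))] with t hτ hσ
  calc recruitment p a τ σ x t ≤ production p a (fun _ => M) (fun _ => k) :=
        production_le_production (fun j => (d.p_pos j).le) (fun j => (d.a_pos j).le)
          (fun _ => hM) (fun j => (hτ j).le) hσ
    _ < c := by
        rw [production_const]
        exact (lt_div_iff₀ (perCapitaBirthRate_pos d.p_pos k)).1 hMc

lemma eventually_lt_recruitment_of_le (hx : NicholsonSolution m p a δ t₀ h β τ σ x)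
    (d : NicholsonSetting p a δ t₀ h b B K β τ σ) {k c : ℝ}
    (hc : c < liminf x atTop * perCapitaBirthRate p a k) :
    ∀ᶠ t in atTop, (∀ j, x (t - σ j t) ≤ k) → c < recruitment p a τ σ x t := by
  have := d.nonempty
  obtain ⟨M, hM, hMl⟩ := exists_between
    (max_lt (hx.liminf_pos d) ((div_lt_iff₀ (perCapitaBirthRate_pos d.p_pos k)).2 hc))
  have ⟨hM₀, hcM⟩ := max_lt_iff.1 hM
  filter_upwards [eventually_all.2 fun j => (d.tendsto_sub_τ j).eventually
    (eventually_lt_of_lt_liminf hMl (hx.isBoundedUnder_ge d))] with t hτ hσ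
  calc c < production p a (fun _ => M) (fun _ => k) := by
        rw [production_const]
        exact (div_lt_iff₀ (perCapitaBirthRate_pos d.p_pos k)).1 hcM
    _ ≤ recruitment p a τ σ x t :=
        production_le_production (fun j => (d.p_pos j).le) (fun j => (d.a_pos j).le)
          (fun j => (hM₀.trans (hτ j)).le) (fun j => (hτ j).le) hσ

lemma eventually_recruitment_lt (hx : NicholsonSolution m p a δ t₀ h β τ σ x)
    (d : NicholsonSetting p a δ t₀ h b B K β τ σ) {c : ℝ}
    (hc : limsup x atTop * perCapitaBirthRate p a (liminf x atTop) < c) :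
    ∀ᶠ t in atTop, recruitment p a τ σ x t < c := by
  obtain ⟨k, hkc, hk⟩ := ((((continuous_perCapitaBirthRate.const_mul _).continuousAt.tendsto
    |>.eventually_lt_const hc).filter_mono nhdsWithin_le_nhds).and
      (eventually_mem_nhdsWithin (s := Iio (liminf x atTop)))).exists
  filter_upwards [hx.eventually_recruitment_lt_of_le d hkc, hx.eventually_lt_delayed d hk]
    with t hF hσ
  exact hF fun j => (hσ j).le

lemma eventually_lt_recruitment (hx : NicholsonSolution m p a δ t₀ h β τ σ x)
    (d : NicholsonSetting p a δ t₀ h b B K β τ σ) {c : ℝ}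
    (hc : c < liminf x atTop * perCapitaBirthRate p a (limsup x atTop)) :
    ∀ᶠ t in atTop, c < recruitment p a τ σ x t := by
  obtain ⟨k, hkc, hk⟩ := ((((continuous_perCapitaBirthRate.const_mul _).continuousAt.tendsto
    |>.eventually_const_lt hc).filter_mono nhdsWithin_le_nhds).and
      (eventually_mem_nhdsWithin (s := Ioi (limsup x atTop)))).exists
  filter_upwards [hx.eventually_lt_recruitment_of_le d hkc, hx.eventually_delayed_lt d hk]
    with t hF hσ
  exact hF fun j => (hσ j).le

lemma frequently_le_and_exists_delayed_le (hx : NicholsonSolution m p a δ t₀ h β τ σ x)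
    (d : NicholsonSetting p a δ t₀ h b B K β τ σ) {c k : ℝ} (hc : c < limsup x atTop)
    (hk : K < k) : ∃ᶠ t in atTop, c ≤ x t ∧ ∃ j, x (t - σ j t) ≤ k := by
  have hL : 0 < limsup x atTop := (hx.liminf_pos d).trans_le (hx.liminf_le_limsup d)
  have hbirth : limsup x atTop * perCapitaBirthRate p a k / δ < limsup x atTop :=
    (div_lt_iff₀ d.δ_pos).2 (mul_lt_mul_of_pos_left (d.perCapitaBirthRate_lt hk) hL)
  obtain ⟨c', hc', hc'L⟩ := exists_between (max_lt hc hbirth)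
  have ⟨hcc', hbirth'⟩ := max_lt_iff.1 hc'
  obtain ⟨v, hv, hvc'⟩ := exists_between ((div_lt_iff₀ d.δ_pos).1 hbirth')
  refine (((hx.relaxation d).frequently_le_and_le_forcing d.δ_pos.le d.b_pos d.b_le_β
    (sub_pos.2 hvc') (frequently_lt_of_lt_limsup (hx.isBoundedUnder_ge d).isCoboundedUnder_le
      hc'L)).and_eventually (hx.eventually_recruitment_lt_of_le d hv)).mono ?_
  rintro t ⟨⟨hxt, hF⟩, hsmall⟩
  refine ⟨hcc'.le.trans hxt, ?_⟩
  by_contra! hdelayed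
  linarith [hsmall fun j => (hdelayed j).le]

lemma frequently_le_and_exists_le_delayed (hx : NicholsonSolution m p a δ t₀ h β τ σ x)
    (d : NicholsonSetting p a δ t₀ h b B K β τ σ) {c k : ℝ} (hc : liminf x atTop < c)
    (hk : k < K) : ∃ᶠ t in atTop, x t ≤ c ∧ ∃ j, k ≤ x (t - σ j t) := by
  have hbirth : liminf x atTop < liminf x atTop * perCapitaBirthRate p a k / δ :=
    (lt_div_iff₀ d.δ_pos).2 (mul_lt_mul_of_pos_left (d.lt_perCapitaBirthRate hk) (hx.liminf_pos d))
  obtain ⟨c', hlc', hc'⟩ := exists_between (lt_min hc hbirth)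
  have ⟨hc'c, hbirth'⟩ := lt_min_iff.1 hc'
  obtain ⟨v, hc'v, hv⟩ := exists_between ((lt_div_iff₀' d.δ_pos).1 hbirth')
  refine (((hx.relaxation d).frequently_le_and_forcing_le d.δ_pos.le d.b_pos d.b_le_β
    (sub_pos.2 hc'v) (frequently_lt_of_liminf_lt (hx.isBoundedUnder_le d).isCoboundedUnder_ge
      hlc')).and_eventually (hx.eventually_lt_recruitment_of_le d hv)).mono ?_
  rintro t ⟨⟨hxt, hF⟩, hlarge⟩
  refine ⟨hxt.trans hc'c.le, ?_⟩
  by_contra! hdelayed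
  linarith [hlarge fun j => (hdelayed j).le]

lemma liminf_le_equilibrium (hx : NicholsonSolution m p a δ t₀ h β τ σ x)
    (d : NicholsonSetting p a δ t₀ h b B K β τ σ) : liminf x atTop ≤ K := by
  by_contra! hK
  obtain ⟨k, hKk, hk⟩ := exists_between hK
  obtain ⟨t, ⟨-, j, hj⟩, hlarge⟩ := ((hx.frequently_le_and_exists_delayed_le d
    (sub_one_lt (limsup x atTop)) hKk).and_eventually (hx.eventually_lt_delayed d hk)).exists
  exact hj.not_gt (hlarge j)

lemma equilibrium_le_limsup (hx : NicholsonSolution m p a δ t₀ h β τ σ x)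
    (d : NicholsonSetting p a δ t₀ h b B K β τ σ) : K ≤ limsup x atTop := by
  by_contra! hK
  obtain ⟨k, hk, hkK⟩ := exists_between hK
  obtain ⟨t, ⟨-, j, hj⟩, hsmall⟩ := ((hx.frequently_le_and_exists_le_delayed d
    (lt_add_one (liminf x atTop)) hkK).and_eventually (hx.eventually_delayed_lt d hk)).exists
  exact hj.not_gt (hsmall j)

end Limits

section Convergence

variable {A ζ : ℝ}

lemma limsup_le_add_mul_exp_neg (hx : NicholsonSolution m p a δ t₀ h β τ σ x)
    (d : NicholsonSetting p a δ t₀ h b B K β τ σ) (hA : ∀ j, a j ≤ A)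
    (hζ : ∀ j, limsup (fun t => ∫ s in (t - σ j t)..t, β s) atTop ≤ ζ)
    (hKC : K ≤ limsup x atTop * Real.exp (A * (K - liminf x atTop))) :
    limsup x atTop ≤ limsup x atTop * Real.exp (A * (K - liminf x atTop)) +
      (K - limsup x atTop * Real.exp (A * (K - liminf x atTop))) * Real.exp (-(δ * ζ)) := by
  have hL : 0 ≤ limsup x atTop := (hx.liminf_pos d).le.trans (hx.liminf_le_limsup d)
  have hbirth : limsup x atTop * perCapitaBirthRate p a (liminf x atTop) ≤
      δ * (limsup x atTop * Real.exp (A * (K - liminf x atTop))) := by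
    have := mul_le_mul_of_nonneg_left (perCapitaBirthRate_le_mul_exp (fun j => (d.p_pos j).le) hA
      (hx.liminf_le_equilibrium d)) hL
    rw [d.equilibrium] at this
    linarith
  exact (hx.relaxation d).le_add_mul_exp_neg_of_frequently d.δ_pos hKC
    (fun j t ht => (d.σ_mem j t ht).1) d.tendsto_sub_σ
    (fun c hc => d.eventually_integral_β_lt fun j => (hζ j).trans_lt hc)
    (fun c hc => hx.eventually_recruitment_lt d (hbirth.trans_lt hc))
    fun c hc k hk => hx.frequently_le_and_exists_delayed_le d hc hk

lemma add_mul_exp_neg_le_liminf (hx : NicholsonSolution m p a δ t₀ h β τ σ x)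
    (d : NicholsonSetting p a δ t₀ h b B K β τ σ) (hA : ∀ j, a j ≤ A)
    (hζ : ∀ j, limsup (fun t => ∫ s in (t - σ j t)..t, β s) atTop ≤ ζ)
    (hCK : liminf x atTop * Real.exp (A * (K - limsup x atTop)) ≤ K) :
    liminf x atTop * Real.exp (A * (K - limsup x atTop)) +
      (K - liminf x atTop * Real.exp (A * (K - limsup x atTop))) * Real.exp (-(δ * ζ)) ≤
      liminf x atTop := by
  have hbirth : δ * (liminf x atTop * Real.exp (A * (K - limsup x atTop))) ≤
      liminf x atTop * perCapitaBirthRate p a (limsup x atTop) := by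
    have := perCapitaBirthRate_le_mul_exp (fun j => (d.p_pos j).le) hA
      (hx.equilibrium_le_limsup d)
    rw [d.equilibrium, ← div_le_iff₀ (Real.exp_pos _), div_eq_mul_inv, ← Real.exp_neg,
      ← mul_neg, neg_sub] at this
    linarith [mul_le_mul_of_nonneg_left this (hx.liminf_pos d).le]
  exact (hx.relaxation d).add_mul_exp_neg_le_of_frequently d.δ_pos hCK
    (fun j t ht => (d.σ_mem j t ht).1) d.tendsto_sub_σ
    (fun c hc => d.eventually_integral_β_lt fun j => (hζ j).trans_lt hc)
    (fun c hc => hx.eventually_lt_recruitment d (hc.trans_le hbirth))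
    fun c hc k hk => hx.frequently_le_and_exists_le_delayed d hc hk

lemma tendsto_equilibrium (hx : NicholsonSolution m p a δ t₀ h β τ σ x)
    (d : NicholsonSetting p a δ t₀ h b B K β τ σ) (hA : ∀ j, a j ≤ A)
    (hζ : ∀ j, limsup (fun t => ∫ s in (t - σ j t)..t, β s) atTop ≤ ζ)
    (hcond : A * K * (Real.exp (δ * ζ) - 1) ≤ 1) : Tendsto x atTop (𝓝 K) := by
  have ⟨j⟩ := d.nonempty
  have hA₀ : 0 < A := (d.a_pos j).trans_le (hA j)
  have hAK : 0 ≤ A * K := (mul_pos hA₀ d.K_pos).le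
  have hl := hx.liminf_pos d
  have hlK := hx.liminf_le_equilibrium d
  have hKL := hx.equilibrium_le_limsup d
  have hLC : limsup x atTop ≤ limsup x atTop * Real.exp (A * (K - liminf x atTop)) :=
    le_mul_of_one_le_right (hl.le.trans (hlK.trans hKL))
      (Real.one_le_exp (mul_nonneg hA₀.le (sub_nonneg.2 hlK)))
  have hCl : liminf x atTop * Real.exp (A * (K - limsup x atTop)) ≤ liminf x atTop :=
    mul_le_of_le_one_right hl.le
      (Real.exp_le_one_iff.2 (mul_nonpos_of_nonneg_of_nonpos hA₀.le (sub_nonpos.2 hKL)))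
  have hupper := mul_sub_le_sub_of_le_add_mul_exp_neg hAK hLC hcond
    (hx.limsup_le_add_mul_exp_neg d hA hζ (hKL.trans hLC))
  have hlower := mul_sub_le_sub_of_le_add_mul_exp_neg hAK (neg_le_neg hCl) hcond (K := -K)
    (by linarith [hx.add_mul_exp_neg_le_liminf d hA hζ (hCl.trans hlK)])
  obtain ⟨hliminf, hlimsup⟩ := eq_and_eq_of_mul_sub_le_exp hA₀ hl hlK hKL hupper (by linarith)
  exact tendsto_of_liminf_eq_limsup hliminf hlimsup (hx.isBoundedUnder_le d)
    (hx.isBoundedUnder_ge d)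

end Convergence

end NicholsonSolution

end GlobalAttractivity

theorem nicholson_global_attractivity_cor_general
    (m : ℕ) (p a : Fin m → ℝ)
    (hp : ∀ j, 0 < p j) (ha : ∀ j, 0 < a j) (δ : ℝ) (hδ : 0 < δ)
    (t₀ : ℝ) (β : ℝ → ℝ) (τ σ : Fin m → ℝ → ℝ)
    (hβc : ContinuousOn β (Set.Ici t₀))
    (hτ0 : ∀ j, ∀ t ∈ Set.Ici t₀, 0 ≤ τ j t)
    (hσ0 : ∀ j, ∀ t ∈ Set.Ici t₀, 0 ≤ σ j t)
    (βminus : ℝ) (hβminus : IsGLB (β '' Set.Ici t₀) βminus) (hβmpos : 0 < βminus)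
    (hβub : ∃ B, ∀ t ∈ Set.Ici t₀, β t ≤ B)
    (τbar : ℝ)
    (hτbar : IsLUB ((⋃ j, τ j '' Set.Ici t₀) ∪ ⋃ j, σ j '' Set.Ici t₀) τbar)
    (K : ℝ) (hK0 : 0 < K) (hK : ∑ j, p j * Real.exp (-(a j) * K) = δ)
    (aplus : ℝ) (haplus : IsGreatest (Set.range a) aplus)
    (ζM : ℝ)
    (hζM : IsGreatest (Set.range fun j =>
      Filter.limsup (fun t => ∫ s in (t - σ j t)..t, β s) Filter.atTop) ζM)
    (hcond : aplus * K * (Real.exp (δ * ζM) - 1) ≤ 1) :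
    ∀ x : ℝ → ℝ, NicholsonSolution m p a δ t₀ τbar β τ σ x →
      Filter.Tendsto x Filter.atTop (nhds K) := by
  obtain ⟨B, hB⟩ := hβub
  have hτ_le : ∀ j, ∀ t ∈ Set.Ici t₀, τ j t ≤ τbar := fun j t ht =>
    hτbar.1 (Or.inl (Set.mem_iUnion_of_mem j (Set.mem_image_of_mem _ ht)))
  have hσ_le : ∀ j, ∀ t ∈ Set.Ici t₀, σ j t ≤ τbar := fun j t ht =>
    hτbar.1 (Or.inr (Set.mem_iUnion_of_mem j (Set.mem_image_of_mem _ ht)))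
  have setting : NicholsonSetting p a δ t₀ τbar βminus B K β τ σ :=
    { p_pos := hp
      a_pos := ha
      δ_pos := hδ
      continuousOn_β := hβc
      b_pos := hβmpos
      b_le_β := fun t ht => hβminus.1 (Set.mem_image_of_mem β ht)
      β_le_B := hB
      τ_mem := fun j t ht => ⟨hτ0 j t ht, hτ_le j t ht⟩
      σ_mem := fun j t ht => ⟨hσ0 j t ht, hσ_le j t ht⟩
      K_pos := hK0
      equilibrium := hK }
  exact fun x hx => hx.tendsto_equilibrium setting (fun j => haplus.2 (Set.mem_range_self j))
    (fun j => hζM.2 (Set.mem_range_self j)) hcond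

/- STATEMENT 11 (Corollary 3.1): assume p := Σ_j p_j > δ, let K > 0 be
   the positive equilibrium, a⁺ := max_j a_j, a⁻ := min_j a_j,
   ζ_M := max_j limsup_{t→∞} ∫_{t−σ_j(t)}^t β(s) ds. If
   (H1) a⁺/a⁻ < 3/2 and (H2*) (a⁺/a⁻)(e^{δζ_M} − 1) log(p/δ) ≤ 1, then K is
   globally attractive: every solution with admissible data converges to K. -/
theorem nicholson_global_attractivity_cor
    (m : ℕ) (hm : 1 ≤ m) (p a : Fin m → ℝ)
    (hp : ∀ j, 0 < p j) (ha : ∀ j, 0 < a j) (δ : ℝ) (hδ : 0 < δ)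
    (t₀ : ℝ) (β : ℝ → ℝ) (τ σ : Fin m → ℝ → ℝ)
    (hβc : ContinuousOn β (Set.Ici t₀))
    (hτc : ∀ j, ContinuousOn (τ j) (Set.Ici t₀))
    (hσc : ∀ j, ContinuousOn (σ j) (Set.Ici t₀))
    (hτ0 : ∀ j, ∀ t ∈ Set.Ici t₀, 0 ≤ τ j t)
    (hσ0 : ∀ j, ∀ t ∈ Set.Ici t₀, 0 ≤ σ j t)
    (βminus : ℝ) (hβminus : IsGLB (β '' Set.Ici t₀) βminus) (hβmpos : 0 < βminus)
    (hβub : ∃ B, ∀ t ∈ Set.Ici t₀, β t ≤ B)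
    (τbar : ℝ)
    (hτbar : IsLUB ((⋃ j, τ j '' Set.Ici t₀) ∪ ⋃ j, σ j '' Set.Ici t₀) τbar)
    -- p > δ and K is the positive equilibrium
    (hpδ : δ < ∑ j, p j)
    (K : ℝ) (hK0 : 0 < K) (hK : ∑ j, p j * Real.exp (-(a j) * K) = δ)
    -- a⁺ := max_j a_j, a⁻ := min_j a_j
    (aplus aminus : ℝ)
    (haplus : IsGreatest (Set.range a) aplus)
    (haminus : IsLeast (Set.range a) aminus)
    -- ζ_M := max_j limsup_{t→∞} ∫_{t−σ_j(t)}^t β(s) ds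
    (ζM : ℝ)
    (hζM : IsGreatest (Set.range fun j =>
      Filter.limsup (fun t => ∫ s in (t - σ j t)..t, β s) Filter.atTop) ζM)
    -- (H1) and (H2*)
    (hH1 : aplus / aminus < 3 / 2)
    (hH2star : (aplus / aminus) * (Real.exp (δ * ζM) - 1) *
      Real.log ((∑ j, p j) / δ) ≤ 1) :
    ∀ x : ℝ → ℝ, NicholsonSolution m p a δ t₀ τbar β τ σ x →
      Filter.Tendsto x Filter.atTop (nhds K) := by
  have : Nonempty (Fin m) := ⟨⟨0, hm⟩⟩
  have hpos : ∀ r ∈ Set.range a, 0 < r := Set.forall_mem_range.2 ha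
  exact nicholson_global_attractivity_cor_general m p a hp ha δ hδ t₀ β τ σ hβc hτ0 hσ0 βminus
    hβminus hβmpos hβub τbar hτbar K hK0 hK aplus haplus ζM hζM
    (mul_exp_sub_one_le_one_of_mul_log_le_one hp (hpos _ haplus.1).le (hpos _ haminus.1)
      (Set.forall_mem_range.1 haminus.2) hK0.le hK hH2star)
end
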